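/- Let X ⊆ P^r_K be a variety of almost minimal degree, let c = codim X and q = codepth A_X. Then the dimension of the degree-2 homogeneous component of the defining ideal is dim_K (I_X)_2 = binom(c+1, 2) − q − 1. -/

import Mathlib

noncomputable section

open MvPolynomial

/-- The polynomial ring `S = K[x_0, …, x_r]`, the homogeneous coordinate ring of `ℙ^r_K`. -/
abbrev PS (K : Type) [Field K] (r : ℕ) : Type := MvPolynomial (Fin (r + 1)) K

namespace AMD

variable (K : Type) [Field K] (r : ℕ)

/-- `I` is a homogeneous ideal of `S = K[x_0, …, x_r]`. -/
def IsHomIdeal (I : Ideal (PS K r)) : Prop :=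
  ∀ p ∈ I, ∀ n : ℕ, homogeneousComponent n p ∈ I

/-- `X = V_+(I)` is non-degenerate: `I` contains no nonzero linear form. -/
def Nondeg (I : Ideal (PS K r)) : Prop :=
  ∀ p ∈ I, p.IsHomogeneous 1 → p = 0

/-- The irrelevant maximal ideal of the homogeneous coordinate ring `A_X = S/I`. -/
def maxIdl (I : Ideal (PS K r)) : Ideal (PS K r ⧸ I) :=
  (Ideal.span (Set.range (X : Fin (r + 1) → PS K r))).map (Ideal.Quotient.mk I)

/-- `dim X = d`, i.e. the Krull dimension of `A_X = S/I` equals `d + 1`. -/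
def DimEq (I : Ideal (PS K r)) (d : ℕ) : Prop :=
  ringKrullDim (PS K r ⧸ I) = (((d : ℕ∞) + 1 : ℕ∞) : WithBot ℕ∞)

/-- The degree-`n` homogeneous component of `A_X = S/I`, as a `K`-subspace. -/
def quotComponent (I : Ideal (PS K r)) (n : ℕ) : Submodule K (PS K r ⧸ I) :=
  (homogeneousSubmodule (Fin (r + 1)) K n).map (Ideal.Quotient.mkₐ K I).toLinearMap

/-- The Hilbert series of the graded algebra `A_X = S/I`. -/
def hilbSeries (I : Ideal (PS K r)) : PowerSeries ℤ :=
  PowerSeries.mk fun n => (Module.finrank K (quotComponent K r I n) : ℤ)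

/-- `deg X = e`, where `d = dim X`:  the numerator polynomial of the Hilbert series of
`A_X` with respect to the denominator `(1 - λ)^(d+1)` takes the value `e` at `λ = 1`. -/
def DegreeEq (I : Ideal (PS K r)) (d e : ℕ) : Prop :=
  ∃ h : Polynomial ℤ,
    hilbSeries K r I * (1 - PowerSeries.X) ^ (d + 1) = PowerSeries.mk (fun n => h.coeff n) ∧
    h.eval 1 = (e : ℤ)

/-- A graded automorphism of `S`, i.e. a linear change of coordinates of `ℙ^r_K`. -/
def IsGrAut (φ : PS K r ≃ₐ[K] PS K r) : Prop :=
  ∀ i, (φ (X i)).IsHomogeneous 1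

/-- `X = V_+(I) ⊆ ℙ^r_K` is a cone (over a variety lying in some hyperplane): after a
linear change of coordinates, `I` is generated by polynomials not involving the last
variable. -/
def IsConeIdeal (I : Ideal (PS K r)) : Prop :=
  ∃ φ : PS K r ≃ₐ[K] PS K r, IsGrAut K r φ ∧
    ∃ J : Ideal (MvPolynomial (Fin r) K),
      Ideal.map φ I = Ideal.map (rename (Fin.castSucc : Fin r → Fin (r + 1))) J

/-- A (weakly) regular sequence on the ring `A`. -/
def IsRegSeq {A : Type} [CommRing A] (rs : List A) : Prop :=
  ∀ (i : Fin rs.length) (y : A),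
    rs.get i * y ∈ Ideal.span {x | x ∈ rs.take i.1} → y ∈ Ideal.span {x | x ∈ rs.take i.1}

/-- `depth A_X = t`: the maximal length of a regular sequence on `A_X = S/I` consisting
of elements of the irrelevant maximal ideal is `t`. -/
def DepthEq (I : Ideal (PS K r)) (t : ℕ) : Prop :=
  (∃ rs : List (PS K r ⧸ I), rs.length = t ∧ (∀ x ∈ rs, x ∈ maxIdl K r I) ∧ IsRegSeq rs) ∧
  ∀ rs : List (PS K r ⧸ I), (∀ x ∈ rs, x ∈ maxIdl K r I) → IsRegSeq rs → rs.length ≤ t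

/-- `X` is arithmetically Cohen-Macaulay: `depth A_X = dim A_X`. -/
def IsACM (I : Ideal (PS K r)) : Prop :=
  ∃ t : ℕ, ringKrullDim (PS K r ⧸ I) = ((t : ℕ∞) : WithBot ℕ∞) ∧ DepthEq K r I t

/-- The socle `{y | m·y = 0}` of `B`, as a `K`-subspace of `B`. -/
def socle (B : Type) [CommRing B] [Algebra K B] (m : Ideal B) : Submodule K B where
  carrier := {y | ∀ z ∈ m, z * y = 0}
  add_mem' := by
    intro a b ha hb z hz
    rw [mul_add, ha z hz, hb z hz, add_zero]
  zero_mem' := by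
    intro z hz
    rw [mul_zero]
  smul_mem' := by
    intro c y hy z hz
    rw [mul_smul_comm, hy z hz, smul_zero]

/-- `X` is arithmetically Gorenstein: `A_X = S/I` is Cohen-Macaulay and its Artinian
reduction by a maximal regular sequence has a one-dimensional socle. -/
def IsArithGorenstein (I : Ideal (PS K r)) : Prop :=
  ∃ (t : ℕ) (rs : List (PS K r ⧸ I)),
    ringKrullDim (PS K r ⧸ I) = ((t : ℕ∞) : WithBot ℕ∞) ∧ rs.length = t ∧
    (∀ x ∈ rs, x ∈ maxIdl K r I) ∧ IsRegSeq rs ∧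
    Module.finrank K
      (socle K ((PS K r ⧸ I) ⧸ Ideal.span {x | x ∈ rs})
        (Ideal.map (Ideal.Quotient.mk (Ideal.span {x | x ∈ rs})) (maxIdl K r I))) = 1

/-- The graded free `S`-module with `β j` generators in "row `j`" for each `j : ℕ`. -/
abbrev FreeGr (β : ℕ → ℕ) : Type := ((j : ℕ) × Fin (β j)) →₀ PS K r

/-- `φ` is a minimal graded homomorphism of graded free modules, where the generator
`(j, t)` of the source has degree `m₁ + j` and the generator `(j', t')` of the target
has degree `m₂ + j'`: every matrix entry of `φ` is either zero or homogeneous of the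
appropriate positive degree. -/
def IsMinGrMap (b₁ b₂ : ℕ → ℕ) (m₁ m₂ : ℕ)
    (φ : FreeGr K r b₁ →ₗ[PS K r] FreeGr K r b₂) : Prop :=
  ∀ (j : ℕ) (t : Fin (b₁ j)) (j' : ℕ) (t' : Fin (b₂ j')),
    (φ (Finsupp.single ⟨j, t⟩ 1)) ⟨j', t'⟩ = 0 ∨
      ∃ dd : ℕ, 1 ≤ dd ∧ dd + (m₂ + j') = m₁ + j ∧
        ((φ (Finsupp.single ⟨j, t⟩ 1)) ⟨j', t'⟩).IsHomogeneous dd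

/-- `b` is the Betti diagram of the ideal `I ⊆ S`, i.e.
`b i j = dim_K Tor_i^S(K, S/I)_{i+j}` for all `i ≥ 1`.  This is expressed by the
existence of a minimal graded free resolution `⋯ → F₂ → F₁ → S → S/I → 0` of `S/I`
in which, for `i ≥ 1`, the free module `F_i` has exactly `b i j` generators of degree
`i + j`. -/
def HasBettiDiagram (I : Ideal (PS K r)) (b : ℕ → ℕ → ℕ) : Prop :=
  ∃ (φ : (i : ℕ) → (FreeGr K r (b (i + 2)) →ₗ[PS K r] FreeGr K r (b (i + 1))))
    (ε : FreeGr K r (b 1) →ₗ[PS K r] PS K r),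
    (∀ (j : ℕ) (t : Fin (b 1 j)), (ε (Finsupp.single ⟨j, t⟩ 1)).IsHomogeneous (1 + j)) ∧
    (∀ i, IsMinGrMap K r (b (i + 2)) (b (i + 1)) (i + 2) (i + 1) (φ i)) ∧
    LinearMap.range ε = I ∧
    LinearMap.ker ε = LinearMap.range (φ 0) ∧
    ∀ i, LinearMap.ker (φ i) = LinearMap.range (φ (i + 1))

/-- The Pfaffian of a (skew-symmetric) `4 × 4` matrix. -/
def pfaff4 {R : Type} [CommRing R] (N : Matrix (Fin 4) (Fin 4) R) : R :=
  N 0 1 * N 2 3 - N 0 2 * N 1 3 + N 0 3 * N 1 2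

/-- The five submaximal (`4 × 4`) Pfaffians of a skew-symmetric `5 × 5` matrix. -/
def subPfaffian {R : Type} [CommRing R] (M : Matrix (Fin 5) (Fin 5) R) (i : Fin 5) : R :=
  pfaff4 (M.submatrix i.succAbove i.succAbove)

/-- `X = V_+(I)` is the Pfaffian variety defined by the five `4 × 4` Pfaffians of a
skew-symmetric `5 × 5` matrix of linear forms. -/
def IsPfaffianVariety (I : Ideal (PS K r)) : Prop :=
  ∃ M : Matrix (Fin 5) (Fin 5) (PS K r),
    M.transpose = -M ∧ (∀ i j, (M i j).IsHomogeneous 1) ∧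
    I = Ideal.span (Set.range (subPfaffian M))

/-- The vanishing ideal of the coordinate point `(0 : ⋯ : 0 : 1) ∈ ℙ^{r+1}_K`. -/
def pointIdl : Ideal (PS K (r + 1)) :=
  Ideal.span ((X : Fin (r + 2) → PS K (r + 1)) '' {i : Fin (r + 2) | i ≠ Fin.last (r + 1)})

/-- `X = V_+(I) ⊆ ℙ^r_K` is the image of `Z = V_+(J) ⊆ ℙ^{r+1}_K` under the projection
from a point `P ∈ ℙ^{r+1}_K ∖ Z`: after a linear change of coordinates moving `P` to
`(0 : ⋯ : 0 : 1)`, the ideal `I` is the contraction of `J` to `K[x_0, …, x_r]`. -/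
def IsProjectionOf (I : Ideal (PS K r)) (J : Ideal (PS K (r + 1))) : Prop :=
  ∃ ψ : PS K (r + 1) ≃ₐ[K] PS K (r + 1), IsGrAut K (r + 1) ψ ∧
    ¬ Ideal.map ψ J ≤ pointIdl K r ∧
    I = Ideal.comap (rename (Fin.castSucc : Fin (r + 1) → Fin (r + 2))) (Ideal.map ψ J)

/-- The ideal of the Veronese surface `F ⊆ ℙ^5_K`, generated by the `2 × 2` minors of
the generic symmetric `3 × 3` matrix with rows `(x₀,x₁,x₂), (x₁,x₃,x₄), (x₂,x₄,x₅)`. -/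
def veroneseIdeal : Ideal (PS K 5) :=
  Ideal.span {X 0 * X 3 - X 1 * X 1, X 0 * X 4 - X 1 * X 2, X 1 * X 4 - X 2 * X 3,
    X 0 * X 5 - X 2 * X 2, X 1 * X 5 - X 2 * X 4, X 3 * X 5 - X 4 * X 4}

/-- The determinant of the generic symmetric `3 × 3` matrix defining the Veronese
surface; it cuts out the secant variety of `F ⊆ ℙ^5_K`. -/
def veroneseDet : PS K 5 :=
  X 0 * X 3 * X 5 - X 0 * X 4 * X 4 - X 1 * X 1 * X 5 + 2 * (X 1 * X 2 * X 4) -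
    X 2 * X 2 * X 3

/-- `X = V_+(I) ⊆ ℙ^4_K` is a generic projection of the Veronese surface `F ⊆ ℙ^5_K`,
i.e. the projection of `F` from a point `P ∈ ℙ^5_K ∖ F` at which the generic symmetric
`3 × 3` matrix `M` has rank `3` (equivalently, `P` does not lie on the secant variety
`{det M = 0}` of `F`). -/
def IsGenProjVeronese4 (I : Ideal (PS K 4)) : Prop :=
  ∃ ψ : PS K 5 ≃ₐ[K] PS K 5, IsGrAut K 5 ψ ∧
    ¬ Ideal.map ψ (Ideal.span {veroneseDet K}) ≤ pointIdl K 4 ∧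
    I = Ideal.comap (rename (Fin.castSucc : Fin 5 → Fin 6)) (Ideal.map ψ (veroneseIdeal K))

/-- `X = V_+(I) ⊆ ℙ^r_K` is a generic projection of the Veronese surface (which forces
`r = 4`). -/
def IsGenProjVeronese (I : Ideal (PS K r)) : Prop :=
  ∃ h : r + 1 = 5, IsGenProjVeronese4 K (Ideal.map (rename (Fin.cast h)) I)

/-- `X = V_+(I) ⊆ ℙ^r_K` is a generic projection of (a cone over) the Veronese surface
`F ⊆ ℙ^5_K`:  `X` is the projection of a cone `Z ⊆ ℙ^{r+1}_K` over `F` from a point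
not lying on the (cone over the) secant variety of `F`. -/
def IsGenProjVeroneseCone (I : Ideal (PS K r)) : Prop :=
  ∃ (h : 6 ≤ r + 2) (ψ : PS K (r + 1) ≃ₐ[K] PS K (r + 1)), IsGrAut K (r + 1) ψ ∧
    ¬ Ideal.map ψ (Ideal.map (rename (Fin.castLE h))
        (Ideal.span {veroneseDet K})) ≤ pointIdl K r ∧
    I = Ideal.comap (rename (Fin.castSucc : Fin (r + 1) → Fin (r + 2)))
      (Ideal.map ψ (Ideal.map (rename (Fin.castLE h)) (veroneseIdeal K)))

/-- The ideal of the rational normal scroll `S(a_1, …, a_k)`, generated by the `2 × 2`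
minors of the standard `2 × (Σ a_i)` matrix of indeterminates. -/
def scrollIdeal (k : ℕ) (a : Fin k → ℕ) :
    Ideal (MvPolynomial ((i : Fin k) × Fin (a i + 1)) K) :=
  Ideal.span {p | ∃ (i : Fin k) (j : Fin (a i)) (i' : Fin k) (j' : Fin (a i')),
    p = X ⟨i, j.castSucc⟩ * X ⟨i', j'.succ⟩ - X ⟨i, j.succ⟩ * X ⟨i', j'.castSucc⟩}

/-- The affine cone in `K^{r+2}` of the projective scheme `V_+(J) ⊆ ℙ^{r+1}_K`. -/
def zeroSet (J : Ideal (PS K (r + 1))) : Set (Fin (r + 2) → K) :=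
  {v | ∀ f ∈ J, MvPolynomial.eval v f = 0}

/-- Restriction of polynomials to the plane spanned by the vectors `p` and `q`
(i.e. to the line through the corresponding projective points). -/
def lineRestrict (p q : Fin (r + 2) → K) : PS K (r + 1) →ₐ[K] MvPolynomial (Fin 2) K :=
  aeval fun i => MvPolynomial.C (p i) * X 0 + MvPolynomial.C (q i) * X 1

/-- The line through the (independent) points `p`, `q` is a secant line of
`Z = V_+(J)`: the scheme `Z ∩ L ⊆ L ≅ ℙ^1` has length at least `2`, i.e. the
restriction of `J` to the line is contained in a principal ideal generated by a
form of degree `≥ 2` (or is zero, in which case `L ⊆ Z`). -/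
def IsSecantLine (J : Ideal (PS K (r + 1))) (p q : Fin (r + 2) → K) : Prop :=
  ∃ h : MvPolynomial (Fin 2) K,
    (∀ f ∈ J, lineRestrict K r p q f ∈ Ideal.span {h}) ∧
    (h = 0 ∨ ∃ dd : ℕ, 2 ≤ dd ∧ h.IsHomogeneous dd)

/-- The (affine cone over the) secant cone `Sec_P(Z)` of `Z = V_+(J)` with respect to
the point `P = [p]`: the union of `{P}` and of all secant lines of `Z` through `P`. -/
def secantCone (J : Ideal (PS K (r + 1))) (p : Fin (r + 2) → K) : Set (Fin (r + 2) → K) :=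
  {v | ∃ a : K, v = a • p} ∪
    {v | ∃ q : Fin (r + 2) → K, LinearIndependent K ![p, q] ∧ IsSecantLine K r J p q ∧
      ∃ a b : K, v = a • p + b • q}

/-- The (homogeneous) vanishing ideal of a subset of the affine cone `K^{r+2}`. -/
def vanishingIdl (T : Set (Fin (r + 2) → K)) : Ideal (PS K (r + 1)) where
  carrier := {f | ∀ v ∈ T, MvPolynomial.eval v f = 0}
  add_mem' := by
    intro a b ha hb v hv
    rw [map_add, ha v hv, hb v hv, add_zero]
  zero_mem' := by
    intro v hv
    rw [map_zero]
  smul_mem' := by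
    intro c f hf v hv
    rw [smul_eq_mul, map_mul, hf v hv, mul_zero]

/-- `X = V_+(I) ⊆ ℙ^r_K` is the image of `Z = V_+(J) ⊆ ℙ^{r+1}_K` under the linear
projection `π : ℙ^{r+1}_K ∖ {P} → ℙ^r_K` from the point `P = [p]`:  `I` is the
contraction of `J` along the substitution homomorphism induced by a surjective linear
map `K^{r+2} → K^{r+1}` with kernel `K·p`. -/
def IsProjectionFromPoint (I : Ideal (PS K r)) (J : Ideal (PS K (r + 1)))
    (p : Fin (r + 2) → K) : Prop :=
  ∃ π : (Fin (r + 2) → K) →ₗ[K] (Fin (r + 1) → K),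
    Function.Surjective π ∧ LinearMap.ker π = Submodule.span K {p} ∧
    I = Ideal.comap
      (aeval (fun j : Fin (r + 1) =>
        ∑ i : Fin (r + 2), MvPolynomial.C (π (Pi.single i 1) j) * X i) :
          PS K r →ₐ[K] PS K (r + 1)) J

end AMD

namespace QP
open scoped Polynomial

section Frame
variable {K L : Type} [Field K] [Field L] [Algebra K L]

/-- The working framework: a finite-dimensional generating subspace of a field extension. -/
structure Fr (V : Submodule K L) : Prop where
  inf : Infinite K
  closed : ∀ b : L, IsIntegral K b → ∃ a : K, algebraMap K L a = b
  one : (1 : L) ∈ V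
  fin : V.FG
  gen : IntermediateField.adjoin K (V : Set L) = ⊤

lemma pow_mono_of_one {V : Submodule K L} (h1 : (1 : L) ∈ V) {m n : ℕ} (h : m ≤ n) :
    V ^ m ≤ V ^ n :=
  pow_le_pow_right₀ (Submodule.one_le.2 h1) h

lemma one_mem_pow {V : Submodule K L} (h1 : (1 : L) ∈ V) (n : ℕ) : (1 : L) ∈ V ^ n := by
  have := pow_mono_of_one h1 (Nat.zero_le n)
  rw [pow_zero] at this
  exact this Submodule.one_le_one_mem
where
  Submodule.one_le_one_mem : (1 : L) ∈ (1 : Submodule K L) := Submodule.one_le.1 le_rfl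

/-- The submodules `D_n`. -/
def DD (V : Submodule K L) (n : ℕ) : Submodule K L where
  carrier := {b | ∃ k, ∀ x ∈ V ^ k, x * b ∈ V ^ (n + k)}
  zero_mem' := ⟨0, fun x _ => by simp⟩
  add_mem' := by
    rintro a b ⟨k, hk⟩ ⟨l, hl⟩
    refine ⟨k + l, fun x hx => ?_⟩
    rw [mul_add]
    rw [pow_add] at hx
    refine add_mem ?_ ?_
    · refine Submodule.mul_induction_on hx ?_ ?_
      · intro m hm m' hm'
        have := Submodule.mul_mem_mul (hk m hm) hm'
        rw [← pow_add] at this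
        rw [← add_assoc]
        convert this using 1; ring
      · intro x y hx hy
        rw [add_mul]; exact add_mem hx hy
    · refine Submodule.mul_induction_on hx ?_ ?_
      · intro m hm m' hm'
        have := Submodule.mul_mem_mul (hl m' hm') hm
        rw [← pow_add] at this
        rw [add_comm k l, ← add_assoc]
        convert this using 1; ring
      · intro x y hx hy
        rw [add_mul]; exact add_mem hx hy
  smul_mem' := by
    rintro c b ⟨k, hk⟩
    refine ⟨k, fun x hx => ?_⟩
    rw [mul_smul_comm]
    exact Submodule.smul_mem _ _ (hk x hx)

lemma mem_DD {V : Submodule K L} {n : ℕ} {b : L} :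
    b ∈ DD V n ↔ ∃ k, ∀ x ∈ V ^ k, x * b ∈ V ^ (n + k) := Iff.rfl

/-- `k` may be enlarged. -/
lemma mul_ge_of {V : Submodule K L} {n k l : ℕ} {b : L}
    (hk : ∀ x ∈ V ^ k, x * b ∈ V ^ (n + k)) (h : k ≤ l) :
    ∀ x ∈ V ^ l, x * b ∈ V ^ (n + l) := by
  obtain ⟨j, rfl⟩ := Nat.exists_eq_add_of_le h
  intro x hx
  rw [pow_add] at hx
  refine Submodule.mul_induction_on hx ?_ ?_
  · intro m hm m' hm'
    have := Submodule.mul_mem_mul (hk m hm) hm'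
    rw [← pow_add] at this
    rw [← add_assoc]
    convert this using 1; ring
  · intro x y hx hy
    rw [add_mul]; exact add_mem hx hy

lemma pow_le_DD {V : Submodule K L} (n : ℕ) : V ^ n ≤ DD V n := by
  intro b hb
  refine ⟨0, fun x hx => ?_⟩
  have := Submodule.mul_mem_mul hx hb
  rwa [← pow_add, add_comm] at this

lemma DD_mono {V : Submodule K L} (h1 : (1 : L) ∈ V) {m n : ℕ} (h : m ≤ n) :
    DD V m ≤ DD V n := by
  rintro b ⟨k, hk⟩
  exact ⟨k, fun x hx => pow_mono_of_one h1 (by omega) (hk x hx)⟩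

lemma DD_mul {V : Submodule K L} {m n : ℕ} {a b : L}
    (ha : a ∈ DD V m) (hb : b ∈ DD V n) : a * b ∈ DD V (m + n) := by
  obtain ⟨k, hk⟩ := ha
  obtain ⟨l, hl⟩ := hb
  refine ⟨max k l, fun x hx => ?_⟩
  have h2 := mul_ge_of hk (le_max_left k l) x hx
  have h3 := mul_ge_of hl (l := m + max k l) (by have := le_max_right k l; omega) _ h2
  rw [← mul_assoc]
  convert h3 using 2; ring

lemma DD_mul_le {V : Submodule K L} (m n : ℕ) :
    DD V m * DD V n ≤ DD V (m + n) :=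
  Submodule.mul_le.2 fun _ ha _ hb => DD_mul ha hb

lemma DD_zero {V : Submodule K L} (hV : Fr V) : DD V 0 = 1 := by
  refine le_antisymm ?_ ?_
  · rintro b ⟨k, hk⟩
    have hfg : (V ^ k).FG := hV.fin.pow k
    have : IsIntegral K b := by
      refine isIntegral_of_smul_mem_submodule (M := L) (V ^ k) ?_ hfg b ?_
      · intro h
        have := one_mem_pow hV.one k
        rw [h] at this
        simp at this
      · intro x hx
        have := hk x hx
        rw [zero_add] at this
        rw [smul_eq_mul, mul_comm]; exact this
    obtain ⟨a, ha⟩ := hV.closed b this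
    exact Submodule.mem_one.2 ⟨a, ha⟩
  · have := pow_le_DD (V := V) 0
    rwa [pow_zero] at this

/-- The large-degree genericity property. -/
def Gi (V : Submodule K L) (t : L) : Prop :=
  ∃ n₁, ∀ n, n₁ ≤ n → ∀ b ∈ V ^ (n + 1), t * b ∈ V ^ (n + 1) → b ∈ V ^ n

lemma DD_eq_pow_of_Gi {V : Submodule K L} (h1 : (1 : L) ∈ V) {t : L} (ht : t ∈ V) {n₁ : ℕ}
    (hG : ∀ n, n₁ ≤ n → ∀ b ∈ V ^ (n + 1), t * b ∈ V ^ (n + 1) → b ∈ V ^ n)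
    {N : ℕ} (hN : n₁ ≤ N) : DD V N = V ^ N := by
  refine le_antisymm ?_ (pow_le_DD N)
  rintro b ⟨k, hk⟩
  have key : ∀ i, i ≤ k → ∀ j, j + i ≤ k → t ^ j * b ∈ V ^ (N + (k - i)) := by
    intro i
    induction i with
    | zero =>
      intro _ j hj
      exact hk _ (pow_mono_of_one h1 (by omega) (Submodule.pow_mem_pow V ht j))
    | succ i ih =>
      intro hi j hj
      have e : N + (k - i) = N + (k - (i + 1)) + 1 := by omega
      refine hG _ (by omega) _ ?_ ?_
      · rw [← e]; exact ih (by omega) j (by omega)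
      · rw [← e, ← mul_assoc, ← pow_succ']; exact ih (by omega) (j + 1) (by omega)
  have := key k le_rfl 0 (by omega)
  simpa using this

lemma DD_large {V : Submodule K L} (h1 : (1 : L) ∈ V) {t : L} (ht : t ∈ V) (hG : Gi V t) :
    ∃ n₁, ∀ N, n₁ ≤ N → DD V N = V ^ N := by
  obtain ⟨n₁, hG⟩ := hG
  exact ⟨n₁, fun N hN => DD_eq_pow_of_Gi h1 ht hG hN⟩

lemma DD_fg {V : Submodule K L} (hV : Fr V) {t : L} (ht : t ∈ V) (hG : Gi V t) (n : ℕ) :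
    (DD V n).FG := by
  obtain ⟨n₁, h⟩ := DD_large hV.one ht hG
  have h2 : (DD V (max n n₁)).FG := by
    rw [h _ (le_max_right _ _)]; exact hV.fin.pow _
  have : IsNoetherian K (DD V (max n n₁)) :=
    isNoetherian_of_fg_of_noetherian _ h2
  exact h2.of_le (DD_mono hV.one (le_max_left n n₁))

lemma DD_G {V : Submodule K L} {t : L} (hG : Gi V t) {n : ℕ} {b : L}
    (hb : b ∈ DD V (n + 1)) (htb : t * b ∈ DD V (n + 1)) : b ∈ DD V n := by
  obtain ⟨n₁, hG⟩ := hG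
  obtain ⟨k, hk⟩ := hb
  obtain ⟨l, hl⟩ := htb
  refine ⟨max n₁ (max k l), fun x hx => ?_⟩
  refine hG _ (by have := le_max_left n₁ (max k l); omega) _ ?_ ?_
  · have := mul_ge_of hk (l := max n₁ (max k l)) (by simp) x hx
    convert this using 2; ring
  · have := mul_ge_of hl (l := max n₁ (max k l)) (by simp) x hx
    rw [mul_left_comm]
    convert this using 2; ring

/-- The shifted filtration `F 0 = 0`, `F (n+1) = D_n`. -/
def FF (V : Submodule K L) : ℕ → Submodule K L
  | 0 => ⊥
  | n + 1 => DD V n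

/-- Abstract properties of the filtration with respect to `t`. -/
structure Fil (t : L) (F : ℕ → Submodule K L) : Prop where
  mono : ∀ n, F n ≤ F (n + 1)
  mul : ∀ n, ∀ b ∈ F n, t * b ∈ F (n + 1)
  G : ∀ n, ∀ b ∈ F (n + 1), t * b ∈ F (n + 1) → b ∈ F n
  fg : ∀ n, (F n).FG

lemma FF_fil {V : Submodule K L} (hV : Fr V) {t : L} (ht : t ∈ V) (hG : Gi V t)
    (htK : t ∉ (1 : Submodule K L)) : Fil t (FF V) where
  mono := by
    rintro (_ | n)
    · exact bot_le
    · exact DD_mono hV.one (by omega)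
  mul := by
    rintro (_ | n) b hb
    · rw [(Submodule.mem_bot K).1 hb]; simp
    · rw [show FF V (n + 1 + 1) = DD V (n + 1) from rfl, add_comm n 1]
      exact DD_mul (pow_le_DD 1 (by simpa using ht)) hb
  G := by
    rintro (_ | n) b hb htb
    · change b ∈ DD V 0 at hb
      change t * b ∈ DD V 0 at htb
      rw [DD_zero hV] at hb htb
      obtain ⟨x, hx⟩ := Submodule.mem_one.1 hb
      obtain ⟨y, hy⟩ := Submodule.mem_one.1 htb
      by_contra hne
      have hb0 : b ≠ 0 := fun h => hne ((Submodule.mem_bot K).2 h)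
      apply htK
      refine Submodule.mem_one.2 ⟨y / x, ?_⟩
      rw [map_div₀, hx, hy]; field_simp
    · exact DD_G hG hb htb
  fg := by
    rintro (_ | n)
    · exact Submodule.fg_bot
    · exact DD_fg hV ht hG n

end Frame
end QP

namespace QP
open scoped Polynomial

section Key
variable {K L : Type} [Field K] [Field L] [Algebra K L]

lemma Fil.mono_le {t : L} {F : ℕ → Submodule K L} (hF : Fil t F) {m n : ℕ} (h : m ≤ n) :
    F m ≤ F n := monotone_nat_of_le_succ hF.mono h

lemma Fil.descend {t : L} {F : ℕ → Submodule K L} (hF : Fil t F) {n m : ℕ} {b : L}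
    (hb : b ∈ F (n + 1 + m)) (htb : t * b ∈ F (n + 1)) : b ∈ F n := by
  induction m with
  | zero => exact hF.G n b hb htb
  | succ m ih =>
    refine ih (hF.G (n + 1 + m) b hb (hF.mono_le (by omega) htb))

lemma Fil.key {t : L} {F : ℕ → Submodule K L} (hF : Fil t F) {n : ℕ} (P : L[X])
    (hP : ∀ i, P.coeff i ∈ F (n + 1)) (h0 : P.eval t = 0) :
    ∃ Q : L[X], (∀ i, Q.coeff i ∈ F n) ∧ P = (Polynomial.X - Polynomial.C t) * Q := by
  obtain ⟨Q, hQ⟩ := Polynomial.dvd_iff_isRoot.2 h0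
  refine ⟨Q, ?_, hQ⟩
  have e0 : P.coeff 0 = - (t * Q.coeff 0) := by
    rw [hQ]; simp [sub_mul]
  have e1 : ∀ i, P.coeff (i + 1) = Q.coeff i - t * Q.coeff (i + 1) := by
    intro i; rw [hQ]; simp [sub_mul]
  have up : ∀ j i, Q.natDegree + 1 ≤ i + j → Q.coeff i ∈ F (n + 1 + j) := by
    intro j
    induction j with
    | zero =>
      intro i hi
      rw [Polynomial.coeff_eq_zero_of_natDegree_lt (by omega)]; exact zero_mem _
    | succ j ih =>
      intro i hi
      have : Q.coeff i = P.coeff (i + 1) + t * Q.coeff (i + 1) := by rw [e1]; ring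
      rw [this]
      refine add_mem (hF.mono_le (by omega) (hP _)) ?_
      exact hF.mul _ _ (ih (i + 1) (by omega))
  intro i
  induction i with
  | zero =>
    refine hF.descend (up (Q.natDegree + 1) 0 (by omega)) ?_
    have : t * Q.coeff 0 = - P.coeff 0 := by rw [e0]; ring
    rw [this]; exact neg_mem (hP 0)
  | succ i ih =>
    refine hF.descend (up (Q.natDegree + 1) (i + 1) (by omega)) ?_
    have : t * Q.coeff (i + 1) = Q.coeff i - P.coeff (i + 1) := by rw [e1]; ring
    rw [this]; exact sub_mem (hF.mono _ ih) (hP _)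

/-- Polynomials with coefficients in `U`. -/
lemma coeff_mem_add {U : Submodule K L} {P Q : L[X]} (hP : ∀ i, P.coeff i ∈ U)
    (hQ : ∀ i, Q.coeff i ∈ U) : ∀ i, (P + Q).coeff i ∈ U := by
  intro i; rw [Polynomial.coeff_add]; exact add_mem (hP i) (hQ i)

lemma coeff_mem_sub {U : Submodule K L} {P Q : L[X]} (hP : ∀ i, P.coeff i ∈ U)
    (hQ : ∀ i, Q.coeff i ∈ U) : ∀ i, (P - Q).coeff i ∈ U := by
  intro i; rw [Polynomial.coeff_sub]; exact sub_mem (hP i) (hQ i)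

lemma coeff_mem_map_mul {U : Submodule K L} (p : K[X]) {Q : L[X]}
    (hQ : ∀ i, Q.coeff i ∈ U) : ∀ i, (p.map (algebraMap K L) * Q).coeff i ∈ U := by
  intro i
  rw [Polynomial.coeff_mul]
  refine sum_mem fun x _ => ?_
  rw [Polynomial.coeff_map, ← Algebra.smul_def]
  exact Submodule.smul_mem _ _ (hQ _)

lemma eval_algebraMap_mem {U : Submodule K L} {Q : L[X]}
    (hQ : ∀ i, Q.coeff i ∈ U) (τ : K) : Q.eval (algebraMap K L τ) ∈ U := by
  rw [Polynomial.eval_eq_sum, Polynomial.sum]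
  refine sum_mem fun i _ => ?_
  rw [← map_pow, mul_comm, ← Algebra.smul_def]
  exact Submodule.smul_mem _ _ (hQ _)

lemma coeff_mem_C {U : Submodule K L} {b : L} (hb : b ∈ U) :
    ∀ i, (Polynomial.C b).coeff i ∈ U := by
  intro i
  rw [Polynomial.coeff_C]
  split_ifs
  · exact hb
  · exact zero_mem _

lemma eval_mem_spanE {U : Submodule K L} {t : L} {Q : L[X]}
    (hQ : ∀ i, Q.coeff i ∈ U) :
    Q.eval t ∈ Submodule.span (IntermediateField.adjoin K {t}) (U : Set L) := by
  rw [Polynomial.eval_eq_sum, Polynomial.sum]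
  refine sum_mem fun i _ => ?_
  have : Q.coeff i * t ^ i = (⟨t, IntermediateField.mem_adjoin_simple_self K t⟩ :
      IntermediateField.adjoin K {t}) ^ i • Q.coeff i := by
    rw [IntermediateField.smul_def]; simp [mul_comm]
  rw [this]
  exact Submodule.smul_mem _ _ (Submodule.subset_span (hQ i))

lemma mem_spanE {U : Submodule K L} {t : L} (htr : Transcendental K t) {x : L}
    (hx : x ∈ Submodule.span (IntermediateField.adjoin K {t}) (U : Set L)) :
    ∃ q : K[X], q ≠ 0 ∧ ∃ P : L[X], (∀ i, P.coeff i ∈ U) ∧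
      Polynomial.aeval t q * x = P.eval t := by
  induction hx using Submodule.span_induction with
  | mem x hx => exact ⟨1, one_ne_zero, Polynomial.C x, coeff_mem_C hx, by simp⟩
  | zero => exact ⟨1, one_ne_zero, 0, by simp, by simp⟩
  | add x y _ _ hx hy =>
    obtain ⟨q, hq, P, hP, e⟩ := hx
    obtain ⟨q', hq', P', hP', e'⟩ := hy
    refine ⟨q * q', mul_ne_zero hq hq', q'.map (algebraMap K L) * P + q.map (algebraMap K L) * P',
      coeff_mem_add (coeff_mem_map_mul _ hP) (coeff_mem_map_mul _ hP'), ?_⟩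
    rw [Polynomial.eval_add, Polynomial.eval_mul, Polynomial.eval_mul, ← e, ← e', map_mul,
      Polynomial.eval_map_algebraMap, Polynomial.eval_map_algebraMap]
    ring
  | smul a x _ hx =>
    obtain ⟨q, hq, P, hP, e⟩ := hx
    obtain ⟨r, s, hrs⟩ := (IntermediateField.mem_adjoin_simple_iff K _).1 a.2
    rw [IntermediateField.smul_def, hrs, smul_eq_mul]
    by_cases hs : s = 0
    · refine ⟨1, one_ne_zero, 0, by simp, by simp [hs]⟩
    · have hs' : Polynomial.aeval t s ≠ 0 := by
        intro h; exact hs ((transcendental_iff.1 htr) s h)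
      refine ⟨q * s, mul_ne_zero hq hs, r.map (algebraMap K L) * P, coeff_mem_map_mul _ hP, ?_⟩
      rw [Polynomial.eval_mul, ← e, map_mul, Polynomial.eval_map_algebraMap]
      field_simp

/-- Specialization, for one element. -/
lemma Fil.spec1 {t : L} {F : ℕ → Submodule K L} (hF : Fil t F) (htr : Transcendental K t)
    {n : ℕ} {U : Submodule K L} (hU : U ≤ F (n + 1)) {b : L} (hb : b ∈ F (n + 1))
    (hbE : b ∈ Submodule.span (IntermediateField.adjoin K {t}) (U : Set L)) :
    ∃ S : Finset K, ∀ τ ∉ S, ∃ u ∈ U, ∃ w ∈ F n, b = u + (t - algebraMap K L τ) * w := by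
  classical
  obtain ⟨q, hq, P, hP, e⟩ := mem_spanE htr hbE
  obtain ⟨Q, hQ, eQ⟩ := hF.key (n := n) (q.map (algebraMap K L) * Polynomial.C b - P)
    (coeff_mem_sub (coeff_mem_map_mul q (coeff_mem_C hb)) (fun i => hU (hP i)))
    (by rw [Polynomial.eval_sub, ← e]; simp)
  refine ⟨q.roots.toFinset, fun τ hτ => ?_⟩
  have hq0 : q.eval τ ≠ 0 := by
    intro h
    exact hτ (Multiset.mem_toFinset.2 ((Polynomial.mem_roots hq).2 h))
  have hq1 : algebraMap K L (q.eval τ) ≠ 0 := by simpa using hq0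
  have e2 := congrArg (Polynomial.eval (algebraMap K L τ)) eQ
  simp only [Polynomial.eval_sub, Polynomial.eval_mul, Polynomial.eval_C, Polynomial.eval_X,
    Polynomial.eval_map_algebraMap, Polynomial.aeval_algebraMap_apply] at e2
  have e3 : Polynomial.aeval τ q = q.eval τ := by simp
  rw [e3] at e2
  refine ⟨(q.eval τ)⁻¹ • P.eval (algebraMap K L τ),
    Submodule.smul_mem _ _ (eval_algebraMap_mem hP τ),
    (-(q.eval τ)⁻¹) • Q.eval (algebraMap K L τ),
    Submodule.smul_mem _ _ (eval_algebraMap_mem hQ τ), ?_⟩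
  rw [Algebra.smul_def, Algebra.smul_def, map_neg, map_inv₀]
  field_simp
  linear_combination e2

/-- Specialization. -/
lemma Fil.spec {t : L} {F : ℕ → Submodule K L} (hF : Fil t F) (htr : Transcendental K t)
    {n : ℕ} {U W : Submodule K L} (hU : U ≤ F (n + 1)) (hW : W ≤ F (n + 1))
    (hWE : (W : Set L) ⊆ Submodule.span (IntermediateField.adjoin K {t}) (U : Set L)) :
    ∃ S : Finset K, ∀ τ ∉ S, ∀ b ∈ W, ∃ u ∈ U, ∃ w ∈ F n,
      b = u + (t - algebraMap K L τ) * w := by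
  classical
  obtain ⟨B, hB⟩ : W.FG := (hF.fg (n + 1)).of_le hW
  have hBW : ∀ b ∈ B, b ∈ W := fun b hb => hB ▸ Submodule.subset_span hb
  have := fun b : B => hF.spec1 htr hU (hW (hBW b.1 b.2)) (hWE (hBW b.1 b.2))
  choose S hS using this
  refine ⟨Finset.univ.biUnion S, fun τ hτ b hb => ?_⟩
  have hτ' : ∀ b, τ ∉ S b := by
    intro b hb; exact hτ (Finset.mem_biUnion.2 ⟨b, Finset.mem_univ _, hb⟩)
  rw [← hB] at hb
  induction hb using Submodule.span_induction with
  | mem x hx => exact hS ⟨x, hx⟩ τ (hτ' _)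
  | zero => exact ⟨0, zero_mem _, 0, zero_mem _, by simp⟩
  | add x y _ _ hx hy =>
    obtain ⟨u, hu, w, hw, e⟩ := hx
    obtain ⟨u', hu', w', hw', e'⟩ := hy
    exact ⟨u + u', add_mem hu hu', w + w', add_mem hw hw', by rw [e, e']; ring⟩
  | smul a x _ hx =>
    obtain ⟨u, hu, w, hw, e⟩ := hx
    refine ⟨a • u, Submodule.smul_mem _ _ hu, a • w, Submodule.smul_mem _ _ hw, ?_⟩
    rw [e, smul_add, mul_smul_comm]

end Key
end QP

namespace QP
open scoped Polynomial IntermediateField.algebraAdjoinAdjoin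

section DimE
variable {K L : Type} [Field K] [Field L] [Algebra K L]

lemma Fil.poly_indep {t : L} {F : ℕ → Submodule K L} (hF : Fil t F) (htr : Transcendental K t)
    {n : ℕ} {C : Submodule K L} (hC : C ≤ F (n + 1))
    (hd : ∀ f ∈ F n, t * f ∈ C → f = 0) (P : L[X]) (hP : ∀ i, P.coeff i ∈ C)
    (h0 : P.eval t = 0) : P = 0 := by
  have ht0 : t ≠ 0 := by
    rintro rfl; exact htr (isAlgebraic_zero)
  suffices H : ∀ N, ∀ P : L[X], P.natDegree < N → (∀ i, P.coeff i ∈ C) → P.eval t = 0 → P = 0 from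
    H _ P (Nat.lt_succ_self _) hP h0
  intro N
  induction N with
  | zero => intro P h; omega
  | succ N ih =>
    intro P hdeg hP h0
    obtain ⟨Q, hQ, e⟩ := hF.key P (fun i => hC (hP i)) h0
    have e0 : P.coeff 0 = t * (- Q.coeff 0) := by rw [e]; simp [sub_mul]
    have hz : P.coeff 0 = 0 := by
      have := hd (- Q.coeff 0) (neg_mem (hQ 0)) (by rw [← e0]; exact hP 0)
      rw [e0, this, mul_zero]
    have e1 := Polynomial.X_mul_divX_add P
    rw [hz, map_zero, add_zero] at e1
    by_cases hd0 : P.natDegree = 0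
    · rw [Polynomial.eq_C_of_natDegree_eq_zero hd0, hz, map_zero]
    · have : P.divX = 0 := by
        refine ih _ ?_ ?_ ?_
        · rw [Polynomial.natDegree_divX_eq_natDegree_tsub_one]; omega
        · intro i; rw [Polynomial.coeff_divX]; exact hP _
        · have := h0
          rw [← e1, Polynomial.eval_mul, Polynomial.eval_X] at this
          exact (mul_eq_zero.1 this).resolve_left ht0
      rw [← e1, this, mul_zero]

lemma Fil.linIndepE {t : L} {F : ℕ → Submodule K L} (hF : Fil t F) (htr : Transcendental K t)
    {n : ℕ} {C : Submodule K L} (hC : C ≤ F (n + 1))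
    (hd : ∀ f ∈ F n, t * f ∈ C → f = 0) {ι : Type} [Fintype ι] (c : ι → L) (hc : ∀ i, c i ∈ C)
    (hli : LinearIndependent K c) :
    LinearIndependent (IntermediateField.adjoin K {t}) c := by
  have : IsScalarTower (Algebra.adjoin K {t}) (IntermediateField.adjoin K {t}) L :=
    IsScalarTower.of_algebraMap_eq (fun _ => rfl)
  rw [← LinearIndependent.iff_fractionRing (Algebra.adjoin K {t})]
  rw [Fintype.linearIndependent_iff]
  intro g hg
  have : ∀ i, ∃ p : K[X], Polynomial.aeval t p = (g i : L) := by
    intro i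
    obtain ⟨p, hp⟩ := (Algebra.adjoin_singleton_eq_range_aeval K t).le (g i).2
    exact ⟨p, hp⟩
  choose p hp using this
  have hz := hF.poly_indep htr hC hd (∑ i, (p i).map (algebraMap K L) * Polynomial.C (c i)) ?_ ?_
  · have hp0 : ∀ i, p i = 0 := by
      intro i
      ext j
      have h1 := congrArg (fun q => Polynomial.coeff q j) hz
      simp only [Polynomial.finsetSum_coeff, Polynomial.coeff_mul_C, Polynomial.coeff_map,
        Polynomial.coeff_zero] at h1
      have := (Fintype.linearIndependent_iff.1 hli) (fun i => (p i).coeff j)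
        (by simpa [Algebra.smul_def] using h1) i
      simpa using this
    intro i
    apply Subtype.ext
    rw [← hp i, hp0 i]; simp
  · intro j
    rw [Polynomial.finsetSum_coeff]
    exact sum_mem fun i _ => coeff_mem_map_mul _ (coeff_mem_C (hc i)) j
  · rw [Polynomial.eval_finsetSum, ← hg]
    refine Finset.sum_congr rfl fun i _ => ?_
    rw [Polynomial.eval_mul, Polynomial.eval_map_algebraMap, hp, Polynomial.eval_C]
    rfl

lemma nak {t : L} (htr : Transcendental K t) {A C : Submodule K L} (hA : A.FG)
    (h : ∀ f ∈ A, ∃ c ∈ C, ∃ f' ∈ A, f = c + t * f') :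
    (A : Set L) ⊆ Submodule.span (IntermediateField.adjoin K {t}) (C : Set L) := by
  have : IsScalarTower (Algebra.adjoin K {t}) (IntermediateField.adjoin K {t}) L :=
    IsScalarTower.of_algebraMap_eq (fun _ => rfl)
  let W : Submodule (Algebra.adjoin K {t}) L :=
    (Submodule.span (IntermediateField.adjoin K {t}) (C : Set L)).restrictScalars (Algebra.adjoin K {t})
  let tR : (Algebra.adjoin K {t}) := ⟨t, Algebra.subset_adjoin rfl⟩
  let N : Submodule (Algebra.adjoin K {t}) (L ⧸ W) := (Submodule.span (Algebra.adjoin K {t}) (A : Set L)).map W.mkQ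
  have hN : N.FG := by
    refine Submodule.FG.map _ ?_
    obtain ⟨B, hB⟩ := hA
    refine ⟨B, ?_⟩
    apply le_antisymm
    · refine Submodule.span_mono ?_
      rw [← hB]; exact Submodule.subset_span
    · rw [Submodule.span_le, ← hB]
      intro x hx
      exact Submodule.span_subset_span K (Algebra.adjoin K {t}) _ hx
  have hle : N ≤ Ideal.span {tR} • N := by
    rw [Submodule.map_le_iff_le_comap, Submodule.span_le]
    intro f hf
    obtain ⟨c, hc, f', hf', e⟩ := h f hf
    have : W.mkQ f = tR • W.mkQ f' := by
      rw [← map_smul, ← sub_eq_zero, ← map_sub, ← LinearMap.mem_ker, Submodule.ker_mkQ]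
      have : f - tR • f' = c := by
        rw [e]; change c + t * f' - t * f' = c; ring
      rw [this]
      exact Submodule.subset_span hc
    change W.mkQ f ∈ Ideal.span {tR} • N
    rw [this]
    exact Submodule.smul_mem_smul (Ideal.mem_span_singleton_self _)
      (Submodule.mem_map_of_mem (Submodule.subset_span hf'))
  obtain ⟨r, hr, hrN⟩ := Submodule.exists_sub_one_mem_and_smul_eq_zero_of_fg_of_le_smul _ _ hN hle
  have hr0 : (r : L) ≠ 0 := by
    intro h0
    obtain ⟨s, hs⟩ := Ideal.mem_span_singleton.1 hr
    obtain ⟨p, hp⟩ := (Algebra.adjoin_singleton_eq_range_aeval K t).le s.2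
    have hp : Polynomial.aeval t p = (s : L) := hp
    have h1 : (r : L) - 1 = t * s := congrArg Subtype.val hs
    rw [h0, ← hp] at h1
    have := (transcendental_iff.1 htr) (Polynomial.X * p + 1) (by
      rw [map_add, map_mul, Polynomial.aeval_X, map_one]
      linear_combination -h1)
    have := congrArg (Polynomial.eval 0) this
    simp at this
  intro f hf
  have h1 := hrN (W.mkQ f) (Submodule.mem_map_of_mem (Submodule.subset_span hf))
  rw [← map_smul, ← LinearMap.mem_ker, Submodule.ker_mkQ] at h1
  have h2 : (r : L) * f ∈ Submodule.span (IntermediateField.adjoin K {t}) (C : Set L) := h1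
  have hrE : (r : L) ∈ IntermediateField.adjoin K {t} :=
    IntermediateField.algebra_adjoin_le_adjoin K {t} r.2
  have h3 := Submodule.smul_mem _ (⟨r, hrE⟩ : IntermediateField.adjoin K {t})⁻¹ h2
  rw [IntermediateField.smul_def] at h3
  simp only [IntermediateField.coe_inv, smul_eq_mul] at h3
  rwa [inv_mul_cancel_left₀ hr0] at h3

lemma Fil.dimE {t : L} {F : ℕ → Submodule K L} (hF : Fil t F) (htr : Transcendental K t)
    {n : ℕ} {U : Submodule K L} (h1 : F n ≤ U) (h2 : ∀ f ∈ F n, t * f ∈ U) (h3 : U ≤ F (n + 1)) :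
    Module.finrank (IntermediateField.adjoin K {t})
      (Submodule.span (IntermediateField.adjoin K {t}) (U : Set L)) + Module.finrank K (F n)
      = Module.finrank K U := by
  have ht0 : t ≠ 0 := by
    rintro rfl; exact htr (isAlgebraic_zero)
  have hUfg : U.FG := (hF.fg _).of_le h3
  let tF : Submodule K L := (F n).map (LinearMap.mulLeft K t)
  have htF : tF ≤ U := by
    rintro _ ⟨f, hf, rfl⟩; exact h2 f hf
  obtain ⟨C0, hC0⟩ := Submodule.exists_isCompl tF
  let C := U ⊓ C0
  have hsup : tF ⊔ C = U := by
    have := sup_inf_assoc_of_le C0 htF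
    rw [hC0.sup_eq_top, top_inf_eq] at this
    rw [this, inf_comm]
  have hdis : tF ⊓ C = ⊥ := by
    rw [eq_bot_iff, ← hC0.inf_eq_bot]; exact inf_le_inf_left _ inf_le_right
  have : FiniteDimensional K U := Module.Finite.iff_fg.2 hUfg
  have : FiniteDimensional K (F n) := Module.Finite.iff_fg.2 (hF.fg n)
  have : FiniteDimensional K tF := Submodule.finiteDimensional_of_le htF
  have : FiniteDimensional K C := Submodule.finiteDimensional_of_le inf_le_left
  have hdim : Module.finrank K C + Module.finrank K (F n) = Module.finrank K U := by
    have e1 := Submodule.finrank_sup_add_finrank_inf_eq tF C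
    rw [hsup, hdis, finrank_bot] at e1
    have e2 : Module.finrank K tF = Module.finrank K (F n) :=
      (Submodule.equivMapOfInjective (LinearMap.mulLeft K t) (mul_right_injective₀ ht0) (F n)).finrank_eq.symm
    omega
  have hspan : Submodule.span (IntermediateField.adjoin K {t}) (U : Set L) =
      Submodule.span (IntermediateField.adjoin K {t}) (C : Set L) := by
    apply le_antisymm
    · rw [Submodule.span_le]
      refine nak htr hUfg ?_
      intro f hf
      rw [← hsup] at hf
      obtain ⟨_, ⟨f', hf', rfl⟩, c, hc, rfl⟩ := Submodule.mem_sup.1 hf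
      exact ⟨c, hc, f', h1 hf', by rw [add_comm]; rfl⟩
    · exact Submodule.span_mono inf_le_left
  rw [hspan]
  let b := Module.finBasis K C
  have hli : LinearIndependent K (fun i => (b i : L)) :=
    b.linearIndependent.map' C.subtype (Submodule.ker_subtype C)
  have hliE := hF.linIndepE htr (C := C) (n := n) (inf_le_left.trans h3) ?_ _
    (fun i => (b i).2) hli
  · have : Submodule.span (IntermediateField.adjoin K {t}) (C : Set L) =
        Submodule.span (IntermediateField.adjoin K {t}) (Set.range fun i => (b i : L)) := by
      apply le_antisymm
      · rw [Submodule.span_le]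
        intro x hx
        have h5 : x ∈ Submodule.span K (Set.range fun i => (b i : L)) := by
          have := b.mem_span ⟨x, hx⟩
          have h6 := Submodule.mem_map_of_mem (f := C.subtype) this
          rw [Submodule.map_span, ← Set.range_comp] at h6
          exact h6
        exact Submodule.span_subset_span K _ _ h5
      · refine Submodule.span_mono ?_
        rintro _ ⟨i, rfl⟩; exact (b i).2
    rw [this, finrank_span_eq_card hliE, Fintype.card_fin]
    exact hdim
  · intro f hf hfC
    have : t * f ∈ tF ⊓ C := ⟨⟨f, hf, rfl⟩, hfC⟩
    rw [hdis, Submodule.mem_bot] at this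
    exact (mul_eq_zero.1 this).resolve_left ht0

end DimE
end QP

namespace QP
open scoped Polynomial

section Graded
variable {K L : Type} [Field K] [Field L] [Algebra K L]

/-- The graded algebra `⊕ V^n z^n`. -/
def AA (V : Submodule K L) : Subalgebra K L[X] where
  carrier := {p | ∀ n, p.coeff n ∈ V ^ n}
  add_mem' := by
    intro p q hp hq n
    rw [Polynomial.coeff_add]; exact add_mem (hp n) (hq n)
  mul_mem' := by
    intro p q hp hq n
    rw [Polynomial.coeff_mul]
    refine sum_mem fun x hx => ?_
    rw [← Finset.HasAntidiagonal.mem_antidiagonal.1 hx, pow_add]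
    exact Submodule.mul_mem_mul (hp _) (hq _)
  algebraMap_mem' := by
    intro a n
    rw [Polynomial.algebraMap_apply, Polynomial.coeff_C]
    split_ifs with h
    · rw [h, pow_zero]; exact Submodule.algebraMap_mem a
    · exact zero_mem _

lemma mem_AA {V : Submodule K L} {p : L[X]} : p ∈ AA V ↔ ∀ n, p.coeff n ∈ V ^ n := Iff.rfl

lemma mono_mem_AA {V : Submodule K L} {n : ℕ} {v : L} (hv : v ∈ V ^ n) :
    Polynomial.monomial n v ∈ AA V := by
  intro m
  rw [Polynomial.coeff_monomial]
  split_ifs with h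
  · rw [← h]; exact hv
  · exact zero_mem _

/-- The homogeneous element `v z^n`. -/
def mo {V : Submodule K L} (n : ℕ) (v : L) (hv : v ∈ V ^ n) : AA V :=
  ⟨Polynomial.monomial n v, mono_mem_AA hv⟩

/-- The irrelevant ideal. -/
def mm (V : Submodule K L) : Ideal (AA V) where
  carrier := {p | (p : L[X]).coeff 0 = 0}
  zero_mem' := by simp
  add_mem' := by
    intro p q hp hq
    simp only [Set.mem_ofPred_eq] at *
    simp [hp, hq]
  smul_mem' := by
    intro c p hp
    simp only [Set.mem_ofPred_eq, smul_eq_mul] at *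
    simp [Polynomial.mul_coeff_zero, hp]

lemma mem_mm {V : Submodule K L} {p : AA V} : p ∈ mm V ↔ (p : L[X]).coeff 0 = 0 := Iff.rfl

lemma mo_mem_mm {V : Submodule K L} {n : ℕ} (hn : n ≠ 0) {v : L} (hv : v ∈ V ^ n) :
    mo n v hv ∈ mm V := by
  rw [mem_mm, mo]; simp [Polynomial.coeff_monomial, hn]

/-- An ideal containing all products of degree one and degree `n` elements contains degree `n+1`. -/
lemma mo_succ_mem {V : Submodule K L} {J : Ideal (AA V)} {n : ℕ}
    (h : ∀ v, ∀ hv : v ∈ V ^ 1, ∀ w, ∀ hw : w ∈ V ^ n, mo 1 v hv * mo n w hw ∈ J)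
    {x : L} (hx : x ∈ V ^ (n + 1)) : mo (n + 1) x hx ∈ J := by
  have hx' := hx
  rw [pow_succ'] at hx'
  suffices H : ∃ y : AA V, y ∈ J ∧ (y : L[X]) = Polynomial.monomial (n + 1) x by
    obtain ⟨y, hy, e⟩ := H
    have : y = mo (n + 1) x hx := Subtype.ext e
    rwa [← this]
  refine Submodule.mul_induction_on hx' ?_ ?_
  · intro v hv w hw
    refine ⟨_, h v (by simpa using hv) w hw, ?_⟩
    simp [mo, Polynomial.monomial_mul_monomial, add_comm]
  · rintro x y ⟨p, hp, ep⟩ ⟨q, hq, eq⟩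
    exact ⟨p + q, add_mem hp hq, by simp [ep, eq]⟩

lemma mo_mem_pow {V : Submodule K L} (k : ℕ) : ∀ n, k ≤ n → ∀ v (hv : v ∈ V ^ n),
    mo n v hv ∈ mm V ^ k := by
  induction k with
  | zero => intro n _ v hv; simp
  | succ k ih =>
    rintro (_ | n) hn v hv
    · omega
    · refine mo_succ_mem ?_ hv
      intro v hv w hw
      rw [pow_succ']
      exact Ideal.mul_mem_mul (mo_mem_mm one_ne_zero hv) (ih n (by omega) w hw)

lemma AA_sum {V : Submodule K L} (p : AA V) :
    p = ∑ i ∈ Finset.range ((p : L[X]).natDegree + 1), mo i ((p : L[X]).coeff i) (p.2 i) := by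
  apply Subtype.ext
  rw [AddSubmonoidClass.coe_finsetSum]
  exact Polynomial.as_sum_range _

lemma mem_mm_pow_of {V : Submodule K L} {k : ℕ} (p : AA V)
    (h : ∀ i < k, (p : L[X]).coeff i = 0) : p ∈ mm V ^ k := by
  rw [AA_sum p]
  refine sum_mem fun i _ => ?_
  by_cases hi : k ≤ i
  · exact mo_mem_pow k i hi _ _
  · have : mo i ((p : L[X]).coeff i) (p.2 i) = 0 := by
      apply Subtype.ext; simp [mo, h i (by omega)]
    rw [this]; exact zero_mem _

lemma mm_le_of {V : Submodule K L} {J : Ideal (AA V)}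
    (h : ∀ v (hv : v ∈ V ^ 1), mo 1 v hv ∈ J) : mm V ≤ J := by
  intro p hp
  rw [AA_sum p]
  refine sum_mem fun i _ => ?_
  rcases i with _ | i
  · have : mo 0 ((p : L[X]).coeff 0) (p.2 0) = 0 := by
      apply Subtype.ext; simp [mo, mem_mm.1 hp]
    rw [this]; exact zero_mem _
  · exact mo_succ_mem (fun v hv w hw => J.mul_mem_right _ (h v hv)) _

lemma AA_fg {V : Submodule K L} (hV : V.FG) : (AA V).FG := by
  obtain ⟨B, hB⟩ := hV
  classical
  refine ⟨B.image (Polynomial.monomial 1), ?_⟩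
  apply le_antisymm
  · rw [Algebra.adjoin_le_iff]
    intro x hx
    rw [Finset.coe_image] at hx
    obtain ⟨b, hb, rfl⟩ := hx
    refine mono_mem_AA ?_
    rw [pow_one, ← hB]; exact Submodule.subset_span hb
  · intro p hp
    have h1 : ∀ v ∈ V, Polynomial.monomial 1 v ∈
        Algebra.adjoin K ((B.image (Polynomial.monomial 1) : Finset L[X]) : Set L[X]) := by
      intro v hv
      rw [← hB] at hv
      induction hv using Submodule.span_induction with
      | mem x hx =>
        refine Algebra.subset_adjoin ?_
        rw [Finset.coe_image]; exact ⟨x, hx, rfl⟩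
      | zero => rw [map_zero]; exact zero_mem _
      | add x y _ _ hx hy => rw [map_add]; exact add_mem hx hy
      | smul a x _ hx =>
        rw [← Polynomial.smul_monomial]; exact Subalgebra.smul_mem _ hx a
    have h2 : ∀ n, ∀ v ∈ V ^ n, Polynomial.monomial n v ∈
        Algebra.adjoin K ((B.image (Polynomial.monomial 1) : Finset L[X]) : Set L[X]) := by
      intro n
      induction n with
      | zero =>
        intro v hv
        rw [pow_zero] at hv
        obtain ⟨a, rfl⟩ := Submodule.mem_one.1 hv
        exact Subalgebra.algebraMap_mem _ a
      | succ n ih =>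
        intro v hv
        rw [pow_succ'] at hv
        refine Submodule.mul_induction_on hv ?_ ?_
        · intro x hx y hy
          have := mul_mem (h1 x hx) (ih y hy)
          rwa [Polynomial.monomial_mul_monomial, add_comm] at this
        · intro x y hx hy
          rw [map_add]; exact add_mem hx hy
    rw [Polynomial.as_sum_range p]
    exact sum_mem fun i _ => h2 i _ (hp i)

lemma AA_noeth {V : Submodule K L} (hV : V.FG) : IsNoetherianRing (AA V) := by
  have : Algebra.FiniteType K (AA V) := (Subalgebra.fg_iff_finiteType _).1 (AA_fg hV)
  exact Algebra.FiniteType.isNoetherianRing K _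

end Graded
end QP

namespace QP
open scoped Polynomial

section Ginf
variable {K L : Type} [Field K] [Field L] [Algebra K L]

/-- The general statement on annihilated submodules. -/
lemma ass_kill {R : Type} [CommRing R] [IsNoetherianRing R] {M : Type} [AddCommGroup M]
    [Module R M] [Module.Finite R M] (J : Ideal R) (τ : R)
    (h : ∀ p ∈ associatedPrimes R M, τ ∈ p → J ≤ p) :
    ∃ k, ∀ a ∈ J ^ k, ∀ x : M, τ • x = 0 → a • x = 0 := by
  let T : Submodule R M := LinearMap.ker (LinearMap.lsmul R M τ)
  have hT : J ≤ (Module.annihilator R T).radical := by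
    rw [Ideal.radical_eq_sInf]
    refine le_sInf ?_
    rintro p ⟨hp, hpp⟩
    obtain ⟨q, hq, hqp⟩ := Ideal.exists_minimalPrimes_le hp
    refine le_trans ?_ hqp
    have hqT := Module.associatedPrimes.minimalPrimes_annihilator_subset_associatedPrimes R T hq
    have hqM := associatedPrimes.subset_of_injective (f := T.subtype) (Submodule.subtype_injective T) hqT
    refine h q hqM ?_
    refine hq.1.2 ?_
    rw [Module.mem_annihilator]
    rintro ⟨x, hx⟩
    apply Subtype.ext
    exact hx
  obtain ⟨k, hk⟩ := Ideal.exists_pow_le_of_le_radical_of_fg hT (IsNoetherian.noetherian J)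
  refine ⟨k, fun a ha x hx => ?_⟩
  have := (Module.mem_annihilator.1 (hk ha)) ⟨x, hx⟩
  exact congrArg Subtype.val this

lemma ass_kill' {R : Type} [CommRing R] [IsNoetherianRing R] (I J : Ideal R) :
    ∃ P : Set (Ideal R), P.Finite ∧ ∀ τ : R, (∀ p ∈ P, τ ∈ p → J ≤ p) →
    ∃ k, ∀ a ∈ J ^ k, ∀ y, τ * y ∈ I → a * y ∈ I := by
  refine ⟨associatedPrimes R (R ⧸ I), associatedPrimes.finite _ _, fun τ hτ => ?_⟩
  obtain ⟨k, hk⟩ := ass_kill (M := R ⧸ I) J τ hτ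
  refine ⟨k, fun a ha y hy => ?_⟩
  have := hk a ha (Ideal.Quotient.mk _ y) (Ideal.Quotient.eq_zero_iff_mem.2 hy)
  exact Ideal.Quotient.eq_zero_iff_mem.1 this

lemma AA_split {V : Submodule K L} (k : ℕ) (a : AA V) :
    ∃ lo hi : AA V, a = lo + hi ∧ hi ∈ mm V ^ k ∧ ∀ i, k ≤ i → (lo : L[X]).coeff i = 0 := by
  let lo : AA V := ∑ i ∈ Finset.range k, mo i ((a : L[X]).coeff i) (a.2 i)
  have hlo : ∀ i, (lo : L[X]).coeff i = if i < k then (a : L[X]).coeff i else 0 := by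
    intro i
    simp only [lo, AddSubmonoidClass.coe_finsetSum, mo, Polynomial.finsetSum_coeff,
      Polynomial.coeff_monomial]
    simp
  refine ⟨lo, a - lo, by ring, ?_, ?_⟩
  · refine mem_mm_pow_of _ ?_
    intro i hi
    have : ((a - lo : AA V) : L[X]).coeff i = (a : L[X]).coeff i - (lo : L[X]).coeff i := by
      rw [← Polynomial.coeff_sub]; rfl
    rw [this, hlo, if_pos hi, sub_self]
  · intro i hi
    rw [hlo, if_neg (by omega)]

lemma Ginf {V : Submodule K L} (hV : Fr V) :
    ∃ B : Set (Submodule K L), B.Finite ∧ (∀ W ∈ B, ¬ V ≤ W) ∧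
      ∀ t ∈ V, (∀ W ∈ B, t ∉ W) → Gi V t := by
  have hnoeth : IsNoetherianRing (AA V) := AA_noeth hV.fin
  have h11 : (1 : L) ∈ V ^ 1 := by simpa using hV.one
  let z : AA V := mo 1 1 h11
  obtain ⟨PP, hPP, hkill⟩ := ass_kill' (Ideal.span {z}) (mm V)
  let Wq : Ideal (AA V) → Submodule K L := fun q =>
    { carrier := {v | v ∈ V ∧ ∃ p ∈ q, (p : L[X]) = Polynomial.monomial 1 v}
      zero_mem' := ⟨zero_mem _, 0, zero_mem _, by simp⟩
      add_mem' := by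
        rintro a b ⟨ha, p, hp, ep⟩ ⟨hb, p', hp', ep'⟩
        exact ⟨add_mem ha hb, p + p', add_mem hp hp', by simp [ep, ep']⟩
      smul_mem' := by
        rintro c a ⟨ha, p, hp, ep⟩
        refine ⟨Submodule.smul_mem _ _ ha, c • p, ?_, ?_⟩
        · rw [Algebra.smul_def]; exact q.mul_mem_left _ hp
        · rw [← Polynomial.smul_monomial, ← ep]; rfl }
  refine ⟨Wq '' {q | q ∈ PP ∧ ¬ mm V ≤ q}, ?_, ?_, ?_⟩
  · exact (hPP.subset (fun q hq => hq.1)).image _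
  · rintro _ ⟨q, ⟨_, hq⟩, rfl⟩ hle
    apply hq
    refine mm_le_of ?_
    intro v hv
    obtain ⟨_, p, hp, e⟩ := hle (by simpa using hv : v ∈ V)
    have : p = mo 1 v hv := Subtype.ext e
    rwa [← this]
  · intro t ht hav
    have ht1 : t ∈ V ^ 1 := by simpa using ht
    obtain ⟨k, hk⟩ := hkill (mo 1 t ht1) (by
      intro p hp htp
      by_contra hcon
      exact hav _ ⟨p, ⟨hp, hcon⟩, rfl⟩ ⟨ht, _, htp, rfl⟩)
    let T : Ideal (AA V) := (Ideal.span {z}).colon {mo 1 t ht1}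
    have hTmem : ∀ y : AA V, y ∈ T ↔ mo 1 t ht1 * y ∈ Ideal.span {z} := by
      intro y
      simp only [T, Submodule.mem_colon_singleton, smul_eq_mul, mul_comm]
    have hk' : ∀ a ∈ mm V ^ k, ∀ y ∈ T, a * y ∈ Ideal.span {z} := by
      intro a ha y hy
      exact hk a ha y ((hTmem y).1 hy)
    obtain ⟨G, hG⟩ := IsNoetherian.noetherian T
    let N := G.sup (fun g => (g : L[X]).natDegree)
    refine ⟨N + k, ?_⟩
    intro n hn b hb htb
    have hy : mo (n + 1) b hb ∈ T := by
      rw [hTmem]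
      refine Ideal.mem_span_singleton.2 ⟨mo (n + 1) (t * b) htb, ?_⟩
      apply Subtype.ext
      simp [mo, z, Polynomial.monomial_mul_monomial]
    have key : ∀ y ∈ T, ∃ w ∈ Ideal.span {z}, (w : L[X]).coeff (n + 1) = (y : L[X]).coeff (n + 1) := by
      intro y hy
      have hGT : ∀ g ∈ G, g ∈ T := fun g hg => hG ▸ Submodule.subset_span hg
      rw [← hG, Submodule.mem_span_finset] at hy
      obtain ⟨f, -, rfl⟩ := hy
      choose lo hi e1 e2 e3 using fun a : AA V => AA_split k a
      refine ⟨∑ g ∈ G, hi (f g) * g, sum_mem fun g hg => hk' _ (e2 _) g (hGT g hg), ?_⟩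
      simp only [AddSubmonoidClass.coe_finsetSum, Polynomial.finsetSum_coeff]
      refine Finset.sum_congr rfl fun g hg => ?_
      have hgN : (g : L[X]).natDegree ≤ N :=
        Finset.le_sup (f := fun g : AA V => (g : L[X]).natDegree) hg
      have e4 : ((f g • g : AA V) : L[X]) =
          ((lo (f g) : AA V) : L[X]) * (g : L[X]) + ((hi (f g) * g : AA V) : L[X]) := by
        conv_lhs => rw [smul_eq_mul, e1 (f g), add_mul]
        rfl
      rw [e4, Polynomial.coeff_add, Polynomial.coeff_mul, Finset.sum_eq_zero, zero_add]
      rintro ⟨i, j⟩ hij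
      have hij : i + j = n + 1 := Finset.HasAntidiagonal.mem_antidiagonal.1 hij
      by_cases hik : k ≤ i
      · rw [e3 _ i hik, zero_mul]
      · rw [Polynomial.coeff_eq_zero_of_natDegree_lt (p := (g : L[X])) (by dsimp only; omega), mul_zero]
    obtain ⟨w, hw, e⟩ := key _ hy
    obtain ⟨w', rfl⟩ := Ideal.mem_span_singleton.1 hw
    have : (z * w' : AA V).1.coeff (n + 1) = (w' : L[X]).coeff n := by
      change ((Polynomial.monomial 1 1 : L[X]) * (w' : L[X])).coeff (n + 1) = _
      rw [Polynomial.monomial_one_one_eq_X, Polynomial.coeff_X_mul]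
    rw [this] at e
    have e2 : ((mo (n + 1) b hb : AA V) : L[X]).coeff (n + 1) = b := by simp [mo]
    rw [← e2, ← e]
    exact w'.2 n

end Ginf
end QP

namespace QP
open scoped Polynomial
section AlgClosed

lemma int1 {F L ι : Type} [Field F] [Field L] [Algebra F L] {T : ι → L}
    (hT : AlgebraicIndependent F T) {w : L}
    (hw : w ∈ IntermediateField.adjoin F (Set.range T))
    (hi : (aeval T : MvPolynomial ι F →ₐ[F] L).toRingHom.IsIntegralElem w) :
    ∃ p : MvPolynomial ι F, aeval T p = w := by
  obtain ⟨p, q, e⟩ := (IntermediateField.mem_adjoin_range_iff F T w).1 hw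
  by_cases hq : aeval T q = 0
  · rw [hq, div_zero] at e
    exact ⟨0, by simp [e]⟩
  have hinj : Function.Injective (aeval T : MvPolynomial ι F →ₐ[F] L).toRingHom := hT
  let φ : FractionRing (MvPolynomial ι F) →+* L := IsFractionRing.lift hinj
  have hφ : ∀ x, φ (algebraMap _ _ x) = aeval T x := fun x => IsFractionRing.lift_algebraMap hinj x
  let y : FractionRing (MvPolynomial ι F) := algebraMap _ _ p / algebraMap _ _ q
  have hy : φ y = w := by simp only [y, map_div₀, hφ, e]
  have hIntg : IsIntegral (MvPolynomial ι F) y := by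
    obtain ⟨f, hf, hf0⟩ := hi
    refine ⟨f, hf, φ.injective ?_⟩
    rw [Polynomial.hom_eval₂, map_zero, hy, ← hf0]
    congr 1
    ext x <;> simp [hφ]
  obtain ⟨x, hx⟩ := IsIntegrallyClosed.isIntegral_iff.1 hIntg
  exact ⟨x, by rw [← hφ, hx, hy]⟩

lemma closedB {F L ι : Type} [Field F] [Field L] [Algebra F L] {T : ι → L}
    (hT : AlgebraicIndependent F T) {w : L}
    (hw : w ∈ IntermediateField.adjoin F (Set.range T)) (hi : IsIntegral F w) :
    ∃ a : F, algebraMap F L a = w := by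
  obtain ⟨p, hp⟩ := int1 hT hw (by
    obtain ⟨f, hf, h0⟩ := hi
    refine ⟨f.map MvPolynomial.C, hf.map _, ?_⟩
    rw [Polynomial.eval₂_map, ← h0]
    congr 1
    ext x; simp)
  by_cases h0 : p = 0
  · exact ⟨0, by rw [← hp, h0]; simp⟩
  have hpi : IsIntegral F p := by
    rw [← isIntegral_algHom_iff (aeval T : MvPolynomial ι F →ₐ[F] L) hT, hp]; exact hi
  have := hpi.isUnit h0
  rw [MvPolynomial.isUnit_iff_eq_C_of_isReduced] at this
  obtain ⟨r, _, e⟩ := this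
  exact ⟨r, by rw [← hp, e]; simp⟩

attribute [local instance] MvPolynomial.algebraMvPolynomial in
lemma closedA {k F L ι : Type} [Field k] [Field F] [Field L] [Algebra k F] [Algebra F L]
    [Algebra k L] [IsScalarTower k F L] {T : ι → L}
    (hcl : ∀ b : F, IsIntegral k b → ∃ a : k, algebraMap k F a = b)
    (hT : AlgebraicIndependent F T) {w : L}
    (hw : w ∈ IntermediateField.adjoin F (Set.range T))
    (hi : IsAlgebraic (Algebra.adjoin k (Set.range T)) w) :
    w ∈ IntermediateField.adjoin k (Set.range T) := by
  obtain ⟨y, hy, hyw⟩ := hi.exists_integral_multiple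
  have hsub : ∀ z ∈ Algebra.adjoin k (Set.range T), z ∈ IntermediateField.adjoin k (Set.range T) :=
    fun z hz => IntermediateField.algebra_adjoin_le_adjoin _ _ hz
  have hyw' : (aeval T : MvPolynomial ι k →ₐ[k] L).toRingHom.IsIntegralElem (y.1 * w) := by
    obtain ⟨f, hf, h0⟩ := hyw
    have hr : Algebra.adjoin k (Set.range T) = (aeval T : MvPolynomial ι k →ₐ[k] L).range :=
      Algebra.adjoin_range_eq_range_aeval k T
    have hsur : ∀ z : Algebra.adjoin k (Set.range T), ∃ p : MvPolynomial ι k, aeval T p = z.1 := by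
      rintro ⟨z, hz⟩
      rw [hr] at hz
      exact hz
    let g : MvPolynomial ι k →ₐ[k] Algebra.adjoin k (Set.range T) :=
      (aeval T).codRestrict _ (fun p => by rw [hr]; exact ⟨p, rfl⟩)
    have hg : Function.Surjective g.toRingHom := by
      intro z
      obtain ⟨p, hp⟩ := hsur z
      exact ⟨p, Subtype.ext hp⟩
    obtain ⟨f', e1, _, e3⟩ := Polynomial.lifts_and_natDegree_eq_and_monic
      (f := g.toRingHom) (p := f) (by
        rw [Polynomial.lifts_iff_coeff_lifts]; intro n; exact hg _) hf
    refine ⟨f', e3, ?_⟩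
    have h0' : Polynomial.eval₂ (algebraMap (Algebra.adjoin k (Set.range T)) L) (y.1 * w) f = 0 := h0
    rw [← e1, Polynomial.eval₂_map] at h0'
    rw [← h0']
    congr 1
  have hcomp : ∀ p : MvPolynomial ι k, aeval T (MvPolynomial.map (algebraMap k F) p) = aeval T p := by
    intro p
    rw [MvPolynomial.aeval_map_algebraMap]
  have hywF : (y.1 * w) ∈ IntermediateField.adjoin F (Set.range T) := by
    refine mul_mem ?_ hw
    have h1 : y.1 ∈ IntermediateField.adjoin k (Set.range T) := hsub _ y.2
    have : IntermediateField.adjoin k (Set.range T) ≤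
        (IntermediateField.adjoin F (Set.range T)).restrictScalars k := by
      rw [IntermediateField.adjoin_le_iff]
      exact IntermediateField.subset_adjoin F _
    exact this h1
  obtain ⟨f, hf, h0⟩ := hyw'
  obtain ⟨p, hp⟩ := int1 hT hywF ⟨f.map (MvPolynomial.map (algebraMap k F)), hf.map _, by
    rw [Polynomial.eval₂_map, ← h0]
    congr 1
    ext x <;> simp [← IsScalarTower.algebraMap_apply]⟩
  have hpint : IsIntegral (MvPolynomial ι k) p := by
    refine ⟨f, hf, hT ?_⟩
    have : (aeval T : MvPolynomial ι F →ₐ[F] L) (Polynomial.eval₂ (algebraMap _ _) p f) =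
      Polynomial.eval₂ (aeval T : MvPolynomial ι k →ₐ[k] L).toRingHom (y.1 * w) f := by
      rw [← hp]
      have := Polynomial.hom_eval₂ f (algebraMap (MvPolynomial ι k) (MvPolynomial ι F))
        (aeval T : MvPolynomial ι F →ₐ[F] L).toRingHom p
      refine this.trans ?_
      congr 1
      exact RingHom.ext fun x => hcomp x
    rw [this, h0, map_zero]
  rw [MvPolynomial.isIntegral_iff_isIntegral_coeff] at hpint
  have hlift : p ∈ Set.range (MvPolynomial.map (algebraMap k F) : MvPolynomial ι k →+* _) := by
    rw [MvPolynomial.mem_range_map_iff_coeffs_subset]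
    intro c hc
    rw [Finset.mem_coe, MvPolynomial.mem_coeffs_iff] at hc
    obtain ⟨n, _, rfl⟩ := hc
    obtain ⟨a, ha⟩ := hcl _ (hpint n)
    exact ⟨a, ha⟩
  obtain ⟨p', rfl⟩ := hlift
  rw [hcomp] at hp
  have hy0 : y.1 ≠ 0 := fun h => hy (Subtype.ext h)
  have : w = aeval T p' / y.1 := by rw [hp]; field_simp
  rw [this]
  refine div_mem (hsub _ ?_) (hsub _ y.2)
  rw [Algebra.adjoin_range_eq_range_aeval]
  exact ⟨p', rfl⟩

end AlgClosed
end QP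

namespace QP
open scoped Polynomial IntermediateField
section Zar
variable {K L : Type} [Field K] [Field L] [Algebra K L]

lemma closedAB {F : Type} [Field F] [Algebra K F] [Algebra F L] [IsScalarTower K F L]
    {ι : Type} {u : L} {z : ι → L}
    (hcl : ∀ b : F, IsIntegral K b → ∃ a : K, algebraMap K F a = b)
    (h2 : AlgebraicIndependent F (Sum.elim z (fun _ : Unit => u)))
    {w : L} (hw : IsAlgebraic K⟮u⟯ w)
    (hw1 : w ∈ IntermediateField.adjoin F ({u} ∪ Set.range z)) : w ∈ K⟮u⟯ := by
  have hru : Set.range (fun _ : Unit => u) = {u} := Set.range_const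
  obtain ⟨h3, h4⟩ := AlgebraicIndependent.sumElim_iff.1 h2
  rw [← IntermediateField.algebraicIndependent_adjoin_iff, hru] at h4
  rw [← IntermediateField.adjoin_adjoin_left, IntermediateField.mem_restrictScalars] at hw1
  have hw2 : w ∈ IntermediateField.adjoin F {u} := by
    have hIntg : IsIntegral (IntermediateField.adjoin F {u}) w := by
      obtain ⟨f, hf, hf0⟩ := hw.isIntegral
      have hle : ∀ x : K⟮u⟯, x.1 ∈ IntermediateField.adjoin F {u} := by
        have : K⟮u⟯ ≤ (IntermediateField.adjoin F {u}).restrictScalars K := by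
          rw [IntermediateField.adjoin_le_iff]
          exact IntermediateField.subset_adjoin _ _
        exact fun x => this x.2
      let g : K⟮u⟯ →+* IntermediateField.adjoin F {u} :=
        (algebraMap K⟮u⟯ L).codRestrict _ hle
      refine ⟨f.map g, hf.map g, ?_⟩
      rw [Polynomial.eval₂_map, ← hf0]
      rfl
    obtain ⟨a, ha⟩ := closedB h4 hw1 hIntg
    rw [← ha]; exact a.2
  have := closedA (k := K) (F := F) (T := fun _ : Unit => u) (w := w) hcl
    h3 (by rw [hru]; exact hw2) (by
      rw [← IntermediateField.isAlgebraic_adjoin_iff, hru]; exact hw)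
  rwa [hru] at this

lemma mem_big {F : Type} [Field F] [Algebra K F] [Algebra F L] [IsScalarTower K F L]
    {ι : Type} {s u : L} {z : ι → L} (hs : ∃ s0 : F, algebraMap F L s0 = s)
    {G : IntermediateField K L} (hG : G = IntermediateField.adjoin K (Set.range z ∪ {s, u}))
    {w : L} (hwG : w ∈ IntermediateField.adjoin G (Set.range (algebraMap F L))) :
    w ∈ IntermediateField.adjoin F ({u} ∪ Set.range z) := by
  have hGle : G ≤ (IntermediateField.adjoin F ({u} ∪ Set.range z)).restrictScalars K := by
    rw [hG, IntermediateField.adjoin_le_iff]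
    intro x hx
    rw [SetLike.mem_coe, IntermediateField.mem_restrictScalars]
    rcases hx with hx | hx | hx
    · exact IntermediateField.subset_adjoin F ({u} ∪ Set.range z) (Or.inr hx)
    · obtain ⟨s0, rfl⟩ := hs
      rw [hx]
      exact IntermediateField.algebraMap_mem _ s0
    · exact IntermediateField.subset_adjoin F ({u} ∪ Set.range z) (Or.inl hx)
  refine IntermediateField.adjoin_induction (F := G) (s := Set.range (algebraMap F L))
    (p := fun x _ => x ∈ IntermediateField.adjoin F ({u} ∪ Set.range z))
    ?_ ?_ ?_ ?_ ?_ hwG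
  · rintro x ⟨y, rfl⟩; exact IntermediateField.algebraMap_mem _ y
  · intro x; exact hGle x.2
  · intro x y _ _ hx hy; exact add_mem hx hy
  · intro x _ hx; exact inv_mem hx
  · intro x y _ _ hx hy; exact mul_mem hx hy

lemma zar_pair {m : ℕ} {s u : L} {z : Fin m → L}
    (hcl : ∀ b : L, IsIntegral K b → ∃ a : K, algebraMap K L a = b)
    (hind : AlgebraicIndependent K
      (Sum.elim (Sum.elim z (fun _ : Unit => u)) (fun _ : Unit => s)))
    {G : IntermediateField K L} (hG : G = IntermediateField.adjoin K (Set.range z ∪ {s, u}))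
    {w : L} (hw : IsAlgebraic K⟮u⟯ w)
    (hwG : w ∈ IntermediateField.adjoin G (algebraicClosure K⟮s⟯ L : Set L)) :
    w ∈ K⟮u⟯ := by
  have h1 := (AlgebraicIndependent.sumElim_iff.1 hind).2
  rw [← IntermediateField.algebraicIndependent_adjoin_iff] at h1
  have hr : Set.range (fun _ : Unit => s) = {s} := Set.range_const
  rw [hr] at h1
  have h2 := h1.algebraicClosure
  have htower : IsScalarTower K (algebraicClosure K⟮s⟯ L) L :=
    IsScalarTower.of_algebraMap_eq (fun _ => rfl)
  have hsF : s ∈ algebraicClosure K⟮s⟯ L :=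
    (algebraicClosure K⟮s⟯ L).algebraMap_mem ⟨s, IntermediateField.mem_adjoin_simple_self K s⟩
  refine closedAB (F := algebraicClosure K⟮s⟯ L) ?_ h2 hw ?_
  · intro b hb
    obtain ⟨a, ha⟩ := hcl b.1 (hb.map (IsScalarTower.toAlgHom K (algebraicClosure K⟮s⟯ L) L))
    exact ⟨a, Subtype.ext ha⟩
  refine mem_big (s := s) ⟨⟨s, hsF⟩, rfl⟩ hG ?_
  have : Set.range (algebraMap (algebraicClosure K⟮s⟯ L) L) = (algebraicClosure K⟮s⟯ L : Set L) :=
    Subtype.range_coe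
  rw [this]
  exact hwG

/-- The values `a` for which `K(l₁ + a l₂)` is not algebraically closed in `L`. -/
lemma zar_finite {m : ℕ} {l₁ l₂ : L} {z : Fin m → L}
    (hcl : ∀ b : L, IsIntegral K b → ∃ a : K, algebraMap K L a = b)
    {G : IntermediateField K L} (hG : G = IntermediateField.adjoin K (Set.range z ∪ {l₁, l₂}))
    [FiniteDimensional G L] [Algebra.IsSeparable G L]
    (htr : ((m + 2 : ℕ) : Cardinal) ≤ Algebra.trdeg K L) :
    {a : K | ∃ w : L, IsAlgebraic K⟮l₁ + algebraMap K L a * l₂⟯ w ∧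
      w ∉ K⟮l₁ + algebraMap K L a * l₂⟯}.Finite := by
  have hfin : Finite (IntermediateField G L) :=
    Field.finite_intermediateField_of_exists_primitive_element G L
      (Field.exists_primitive_element G L)
  have hGab : ∀ a b : K, a ≠ b → G = IntermediateField.adjoin K
      (Set.range z ∪ {l₁ + algebraMap K L a * l₂, l₁ + algebraMap K L b * l₂}) := by
    intro a b hab
    rw [hG]
    have hab' : algebraMap K L a - algebraMap K L b ≠ 0 := by
      rw [← map_sub]; simpa [sub_eq_zero] using hab
    apply le_antisymm
    · rw [IntermediateField.adjoin_le_iff]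
      have hs := IntermediateField.subset_adjoin K
        (Set.range z ∪ {l₁ + algebraMap K L a * l₂, l₁ + algebraMap K L b * l₂})
      have m1 := hs (Or.inr (Or.inl rfl))
      have m2 := hs (Or.inr (Or.inr rfl))
      have ma := IntermediateField.algebraMap_mem (IntermediateField.adjoin K
        (Set.range z ∪ {l₁ + algebraMap K L a * l₂, l₁ + algebraMap K L b * l₂})) a
      have mb := IntermediateField.algebraMap_mem (IntermediateField.adjoin K
        (Set.range z ∪ {l₁ + algebraMap K L a * l₂, l₁ + algebraMap K L b * l₂})) b
      have e2 : l₂ = ((l₁ + algebraMap K L a * l₂) - (l₁ + algebraMap K L b * l₂)) /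
        (algebraMap K L a - algebraMap K L b) := by field_simp; ring
      have ml2 : l₂ ∈ IntermediateField.adjoin K
        (Set.range z ∪ {l₁ + algebraMap K L a * l₂, l₁ + algebraMap K L b * l₂}) := by
        have := div_mem (sub_mem m1 m2) (sub_mem ma mb)
        rwa [← e2] at this
      rintro x (hx | rfl | rfl)
      · exact hs (Or.inl hx)
      · have := sub_mem m1 (mul_mem ma ml2)
        simpa using this
      · exact ml2
    · rw [IntermediateField.adjoin_le_iff]
      have hs := IntermediateField.subset_adjoin K (Set.range z ∪ {l₁, l₂})
      have m1 := hs (Or.inr (Or.inl rfl))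
      have m2 := hs (Or.inr (Or.inr rfl))
      have mm := fun c => add_mem m1 (mul_mem (IntermediateField.algebraMap_mem
        (IntermediateField.adjoin K (Set.range z ∪ {l₁, l₂})) c) m2)
      rintro x (hx | rfl | rfl)
      · exact hs (Or.inl hx)
      · exact mm a
      · exact mm b
  have hind : ∀ a b : K, a ≠ b → AlgebraicIndependent K
      (Sum.elim (Sum.elim z (fun _ : Unit => l₁ + algebraMap K L b * l₂))
        (fun _ : Unit => l₁ + algebraMap K L a * l₂)) := by
    intro a b hab
    have hrange : Set.range (Sum.elim (Sum.elim z (fun _ : Unit => l₁ + algebraMap K L b * l₂))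
        (fun _ : Unit => l₁ + algebraMap K L a * l₂)) = Set.range z ∪
        {l₁ + algebraMap K L a * l₂, l₁ + algebraMap K L b * l₂} := by
      rw [Set.Sum.elim_range, Set.Sum.elim_range, Set.range_const, Set.range_const, Set.union_assoc]
      congr 1
      ext x; simp
    have halg : Algebra.IsAlgebraic (Algebra.adjoin K (Set.range (Sum.elim (Sum.elim z
        (fun _ : Unit => l₁ + algebraMap K L b * l₂))
        (fun _ : Unit => l₁ + algebraMap K L a * l₂)))) L := by
      rw [← IntermediateField.isAlgebraic_adjoin_iff_top, hrange, ← hGab a b hab]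
      infer_instance
    refine (Algebra.IsAlgebraic.isTranscendenceBasis_of_le_trdeg_of_finite K _ ?_).1
    refine le_trans (le_of_eq ?_) htr
    simp
    norm_num [add_assoc]
  refine Set.Finite.of_injOn (f := fun a : K => IntermediateField.adjoin G
    (algebraicClosure K⟮l₁ + algebraMap K L a * l₂⟯ L : Set L)) (t := Set.univ)
    (fun _ _ => Set.mem_univ _) ?_ Set.finite_univ
  rintro a ⟨w, hw, hw2⟩ b _ he
  by_contra hab
  refine hw2 (zar_pair hcl (hind b a (Ne.symm hab)) (hGab b a (Ne.symm hab)) hw ?_)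
  simp only at he
  rw [← he]
  exact IntermediateField.subset_adjoin _ _ (mem_algebraicClosure_iff.2 hw)

end Zar
end QP

namespace QP
open scoped Polynomial IntermediateField
section Diff
variable {K L : Type} [Field K] [Field L] [Algebra K L]

lemma avoid [Infinite K] (V : Submodule K L) (B : Set (Submodule K L)) (hB : B.Finite)
    (h : ∀ W ∈ B, ¬ V ≤ W) : ∃ v ∈ V, ∀ W ∈ B, v ∉ W := by
  classical
  have := Subspace.biUnion_ne_univ_of_top_notMem (k := K) (E := V)
    (s := hB.toFinset.image (fun W => W.comap V.subtype)) (by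
      intro hmem
      simp only [Finset.mem_image, Set.Finite.mem_toFinset] at hmem
      obtain ⟨W, hW, e⟩ := hmem
      refine h W hW fun x hx => ?_
      have : (⟨x, hx⟩ : V) ∈ W.comap V.subtype := by rw [e]; trivial
      exact this)
  rw [Set.ne_univ_iff_exists_notMem] at this
  obtain ⟨v, hv⟩ := this
  refine ⟨v.1, v.2, fun W hW hvW => hv ?_⟩
  simp only [Set.mem_iUnion]
  exact ⟨W.comap V.subtype, Finset.mem_image_of_mem _ (by simpa using hW), hvW⟩

lemma essFin {V : Submodule K L} (hV : Fr V) : Algebra.EssFiniteType K L := by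
  rw [← IntermediateField.fg_top_iff]
  obtain ⟨s, hs⟩ := hV.fin
  refine ⟨s, ?_⟩
  rw [eq_top_iff, ← hV.gen, IntermediateField.adjoin_le_iff]
  intro x hx
  rw [← hs] at hx
  have h2 : Submodule.span K (s : Set L) ≤
      Subalgebra.toSubmodule (IntermediateField.adjoin K (s : Set L)).toSubalgebra :=
    Submodule.span_le.2 (IntermediateField.subset_adjoin K (s : Set L))
  exact h2 hx

lemma span_dV {V : Submodule K L} (hV : Fr V) :
    Submodule.span L (KaehlerDifferential.D K L '' (V : Set L)) = ⊤ := by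
  rw [eq_top_iff, ← KaehlerDifferential.span_range_derivation, Submodule.span_le]
  rintro _ ⟨x, rfl⟩
  have hx : x ∈ IntermediateField.adjoin K (V : Set L) := by rw [hV.gen]; trivial
  induction hx using IntermediateField.adjoin_induction with
  | mem x hx => exact Submodule.subset_span ⟨x, hx, rfl⟩
  | algebraMap x => simp
  | add x y _ _ hx hy => simpa using add_mem hx hy
  | inv x _ hx =>
    rw [SetLike.mem_coe, Derivation.leibniz_inv]
    exact Submodule.smul_mem _ _ hx
  | mul x y _ _ hx hy =>
    rw [SetLike.mem_coe, Derivation.leibniz]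
    exact add_mem (Submodule.smul_mem _ _ hy) (Submodule.smul_mem _ _ hx)

lemma sep_of_span [Algebra.EssFiniteType K L] {s : Set L}
    (hs : Submodule.span L (KaehlerDifferential.D K L '' s) = ⊤)
    {G : IntermediateField K L} (hG : s ⊆ G) :
    FiniteDimensional G L ∧ Algebra.IsSeparable G L := by
  have : Algebra.EssFiniteType G L := Algebra.EssFiniteType.of_comp K G L
  have hsub : Subsingleton (Ω[L⁄G]) := by
    have hsurj := KaehlerDifferential.map_surjective K G L
    have hz : KaehlerDifferential.map K G L L = 0 := by
      rw [← LinearMap.ker_eq_top, eq_top_iff, ← hs, Submodule.span_le]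
      rintro _ ⟨x, hx, rfl⟩
      rw [SetLike.mem_coe, LinearMap.mem_ker, KaehlerDifferential.map_D]
      exact Derivation.map_algebraMap (KaehlerDifferential.D G L) (⟨x, hG hx⟩ : G)
    refine ⟨fun a b => ?_⟩
    obtain ⟨a, rfl⟩ := hsurj a
    obtain ⟨b, rfl⟩ := hsurj b
    rw [hz]; rfl
  have hun : Algebra.FormallyUnramified G L := ⟨hsub⟩
  exact ⟨Algebra.FormallyUnramified.finite_of_free G L,
    (Algebra.FormallyUnramified.iff_isSeparable G L).1 hun⟩

lemma trdeg_le_of_span [Algebra.EssFiniteType K L] {s : Set L}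
    (hs : Submodule.span L (KaehlerDifferential.D K L '' s) = ⊤) :
    Algebra.trdeg K L ≤ Cardinal.mk s := by
  obtain ⟨h1, h2⟩ := sep_of_span hs (IntermediateField.subset_adjoin K s)
  have : Algebra.IsAlgebraic (IntermediateField.adjoin K s) L := inferInstance
  rw [IntermediateField.isAlgebraic_adjoin_iff_top] at this
  exact Algebra.IsAlgebraic.trdeg_le_cardinalMk K s

lemma omega_drop {t : L} [Module.Finite L (Ω[L⁄K])] (ht : KaehlerDifferential.D K L t ≠ 0) :
    Module.Finite L (Ω[L⁄K⟮t⟯]) ∧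
      Module.finrank L (Ω[L⁄K⟮t⟯]) + 1 ≤ Module.finrank L (Ω[L⁄K]) := by
  have hsurj := KaehlerDifferential.map_surjective K K⟮t⟯ L
  have hfin : Module.Finite L (Ω[L⁄K⟮t⟯]) := Module.Finite.of_surjective _ hsurj
  refine ⟨hfin, ?_⟩
  have := LinearMap.finrank_range_add_finrank_ker (KaehlerDifferential.map K K⟮t⟯ L L)
  rw [LinearMap.range_eq_top.2 hsurj, finrank_top] at this
  have hker : 0 < Module.finrank L (LinearMap.ker (KaehlerDifferential.map K K⟮t⟯ L L)) := by
    rw [Module.finrank_pos_iff_exists_ne_zero]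
    refine ⟨⟨KaehlerDifferential.D K L t, ?_⟩, fun h => ht (congrArg Subtype.val h)⟩
    rw [LinearMap.mem_ker, KaehlerDifferential.map_D]
    exact Derivation.map_algebraMap (KaehlerDifferential.D K⟮t⟯ L)
      (⟨t, IntermediateField.mem_adjoin_simple_self K t⟩ : K⟮t⟯)
  omega

lemma trdeg_drop (t : L) {d : ℕ} (h : ((d + 1 : ℕ) : Cardinal) ≤ Algebra.trdeg K L) :
    (d : Cardinal) ≤ Algebra.trdeg K⟮t⟯ L := by
  have h1 := trdeg_add_eq K K⟮t⟯ (A := L)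
  have h2 : Algebra.trdeg K K⟮t⟯ ≤ 1 := by
    let t' : K⟮t⟯ := ⟨t, IntermediateField.mem_adjoin_simple_self K t⟩
    have : Algebra.IsAlgebraic (Algebra.adjoin K {t'}) K⟮t⟯ := by
      rw [← IntermediateField.isAlgebraic_adjoin_iff_top]
      have : IntermediateField.adjoin K {t'} = ⊤ := by
        rw [eq_top_iff]
        rintro ⟨x, hx⟩ -
        have h0 : IntermediateField.adjoin K {t} ≤
            (IntermediateField.adjoin K {t'}).map (IntermediateField.val K⟮t⟯) := by
          rw [IntermediateField.adjoin_simple_le_iff]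
          exact ⟨t', IntermediateField.mem_adjoin_simple_self K t', rfl⟩
        obtain ⟨y, hy, hxy⟩ := h0 hx
        have : y = ⟨x, hx⟩ := Subtype.ext hxy
        rw [← this]; exact hy
      rw [this]
      refine ⟨fun x => ?_⟩
      exact isAlgebraic_algebraMap (⟨x, trivial⟩ : (⊤ : IntermediateField K K⟮t⟯))
    have := Algebra.IsAlgebraic.trdeg_le_cardinalMk K {t'}
    simpa using this
  by_contra hlt
  push Not at hlt
  have h3 : Algebra.trdeg K⟮t⟯ L < Cardinal.aleph0 := hlt.trans (Cardinal.natCast_lt_aleph0)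
  obtain ⟨a, ha⟩ := Cardinal.lt_aleph0.1 h3
  obtain ⟨b, hb⟩ := Cardinal.lt_aleph0.1 (h2.trans_lt Cardinal.one_lt_aleph0)
  rw [← h1, ha, hb] at h
  rw [ha] at hlt
  rw [hb] at h2
  norm_cast at h h2 hlt
  omega

/-- Zariski-type lemma: a generic `t ∈ V` generates a subfield which is algebraically closed
in `L`. -/
lemma zariski {V : Submodule K L} (hV : Fr V) [Module.Finite L (Ω[L⁄K])] {d : ℕ}
    (hd : Module.finrank L (Ω[L⁄K]) ≤ d + 2)
    (htr : ((d + 2 : ℕ) : Cardinal) ≤ Algebra.trdeg K L)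
    (B : Set (Submodule K L)) (hB : B.Finite) (hBV : ∀ W ∈ B, ¬ V ≤ W) :
    ∃ t ∈ V, (∀ W ∈ B, t ∉ W) ∧ KaehlerDifferential.D K L t ≠ 0 ∧
      ∀ w : L, IsIntegral K⟮t⟯ w → w ∈ K⟮t⟯ := by
  classical
  have hinf := hV.inf
  have hess := essFin hV
  let δ : L →ₗ[K] Ω[L⁄K] := (KaehlerDifferential.D K L).toLinearMap
  have hspan := span_dV hV
  let B1 : Set (Submodule K L) := insert (LinearMap.ker δ) B
  have hB1 : B1.Finite := hB.insert _
  have hB1V : ∀ W ∈ B1, ¬ V ≤ W := by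
    rintro W (rfl | hW)
    · intro hle
      have : Submodule.span L (KaehlerDifferential.D K L '' (∅ : Set L)) = ⊤ := by
        rw [Set.image_empty, Submodule.span_empty, eq_comm, eq_bot_iff, ← hspan, Submodule.span_le]
        rintro _ ⟨x, hx, rfl⟩
        exact LinearMap.mem_ker.1 (hle hx)
      have h1 := htr.trans (trdeg_le_of_span this)
      rw [Cardinal.mk_eq_zero] at h1
      norm_cast at h1
    · exact hBV W hW
  obtain ⟨l₁, hl₁, hl₁B⟩ := avoid V B1 hB1 hB1V
  let W2 : Submodule K L := ((Submodule.span L {KaehlerDifferential.D K L l₁}).restrictScalars K).comap δ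
  have hB2V : ∀ W ∈ insert W2 B1, ¬ V ≤ W := by
    rintro W (rfl | hW)
    · intro hle
      have : Submodule.span L (KaehlerDifferential.D K L '' ({l₁} : Set L)) = ⊤ := by
        rw [Set.image_singleton, eq_top_iff, ← hspan, Submodule.span_le]
        rintro _ ⟨x, hx, rfl⟩
        exact hle hx
      have h1 := htr.trans (trdeg_le_of_span this)
      rw [Cardinal.mk_singleton] at h1
      norm_cast at h1
    · exact hB1V W hW
  obtain ⟨l₂, hl₂, hl₂B⟩ := avoid V (insert W2 B1) (hB1.insert _) hB2V
  have hl₂W : KaehlerDifferential.D K L l₂ ∉ Submodule.span L {KaehlerDifferential.D K L l₁} :=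
    hl₂B W2 (Set.mem_insert _ _)
  have hl₁0 : KaehlerDifferential.D K L l₁ ≠ 0 := fun h =>
    hl₁B _ (Set.mem_insert _ _) (LinearMap.mem_ker.2 h)
  have hne : l₁ ≠ l₂ := by
    rintro rfl
    exact hl₂W (Submodule.mem_span_singleton_self _)
  have hli : LinearIndepOn L (KaehlerDifferential.D K L) ({l₁, l₂} : Set L) := by
    rw [LinearIndepOn.pair_iff _ hne]
    intro a b hab
    have hb : b = 0 := by
      by_contra hb
      refine hl₂W (Submodule.mem_span_singleton.2 ⟨-(b⁻¹ * a), ?_⟩)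
      have : KaehlerDifferential.D K L l₂ = b⁻¹ • (b • KaehlerDifferential.D K L l₂) := by
        rw [smul_smul, inv_mul_cancel₀ hb, one_smul]
      rw [this, eq_neg_of_add_eq_zero_right hab, smul_neg, smul_smul, neg_smul]
    refine ⟨?_, hb⟩
    rw [hb, zero_smul, add_zero] at hab
    exact (smul_eq_zero.1 hab).resolve_right hl₁0
  obtain ⟨b, hbV, hsb, hVb, hbli⟩ := exists_linearIndepOn_extension (t := (V : Set L)) hli (by
    rintro x (rfl | rfl) <;> assumption)
  have hbfin : Finite b := hbli.finite
  have hbcard : Nat.card b ≤ d + 2 := by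
    have := Fintype.ofFinite b
    rw [Nat.card_eq_fintype_card]
    exact (LinearIndependent.fintype_card_le_finrank hbli).trans hd
  have hbs : (b \ {l₁, l₂}).Finite := (Set.toFinite b).subset Set.sdiff_subset
  obtain ⟨m, z, hzinj, hz⟩ := hbs.fin_param
  have hbz : Set.range z ∪ {l₁, l₂} = b := by
    rw [hz, Set.sdiff_union_of_subset hsb]
  have hm : m + 2 ≤ d + 2 := by
    refine le_trans ?_ hbcard
    have h1 : (b \ {l₁, l₂}).ncard = m := by
      rw [← hz, Set.ncard_range_of_injective hzinj]; simp
    have h2 : ({l₁, l₂} : Set L).ncard = 2 := Set.ncard_pair hne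
    have h3 := Set.ncard_sdiff_add_ncard_of_subset hsb (Set.toFinite b)
    have h4 : b.ncard = Nat.card b := rfl
    omega
  let G := IntermediateField.adjoin K (Set.range z ∪ {l₁, l₂})
  have hGspan : Submodule.span L (KaehlerDifferential.D K L '' (Set.range z ∪ {l₁, l₂})) = ⊤ := by
    rw [hbz, eq_top_iff, ← hspan, Submodule.span_le]
    exact hVb
  obtain ⟨hG1, hG2⟩ := sep_of_span hGspan (G := G) (IntermediateField.subset_adjoin K _)
  have hfin := zar_finite (G := G) (m := m) (z := z) hV.closed rfl
    (le_trans (by exact_mod_cast hm) htr)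
  have hfin2 : ∀ W ∈ B1, {a : K | l₁ + algebraMap K L a * l₂ ∈ W}.Finite := by
    intro W hW
    refine Set.Subsingleton.finite ?_
    intro a ha b hb
    by_contra hab
    have h1 : (a - b) • l₂ ∈ W := by
      have ha : l₁ + algebraMap K L a * l₂ ∈ W := ha
      have hb : l₁ + algebraMap K L b * l₂ ∈ W := hb
      have := W.sub_mem ha hb
      rwa [add_sub_add_left_eq_sub, ← Algebra.smul_def, ← Algebra.smul_def, ← sub_smul] at this
    refine hl₂B W (Set.mem_insert_of_mem _ hW) ?_
    have h2 := W.smul_mem (a - b)⁻¹ h1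
    rwa [smul_smul, inv_mul_cancel₀ (sub_ne_zero.2 hab), one_smul] at h2
  have hfin3 := hfin.union (hB1.biUnion hfin2)
  obtain ⟨a, ha⟩ := hfin3.exists_notMem
  rw [Set.mem_union, not_or] at ha
  obtain ⟨ha1, ha2⟩ := ha
  refine ⟨l₁ + algebraMap K L a * l₂, ?_, ?_, ?_, ?_⟩
  · rw [← Algebra.smul_def]
    exact add_mem hl₁ (V.smul_mem _ hl₂)
  · intro W hW hmem
    exact ha2 (Set.mem_biUnion (Set.mem_insert_of_mem _ hW) hmem)
  · intro h0
    exact ha2 (Set.mem_biUnion (Set.mem_insert _ _) (LinearMap.mem_ker.2 h0))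
  · intro w hw
    by_contra hw2
    exact ha1 ⟨w, hw.isAlgebraic, hw2⟩

end Diff
end QP

namespace QP
open scoped Polynomial IntermediateField Pointwise
section Estep
variable {K L : Type} [Field K] [Field L] [Algebra K L]

/-- forward difference -/
def df (f : ℕ → ℤ) : ℕ → ℤ := fun n => f (n + 1) - f n

/-- The `d`-th difference of `f` is eventually equal to `e`. -/
def DegE (f : ℕ → ℤ) (d e : ℕ) : Prop := ∃ n₀, ∀ n, n₀ ≤ n → (df^[d] f) n = e

lemma df_congr {f g : ℕ → ℤ} {n₀ : ℕ} (h : ∀ n, n₀ ≤ n → f n = g n) (d : ℕ) :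
    ∀ n, n₀ ≤ n → (df^[d] f) n = (df^[d] g) n := by
  induction d generalizing f g with
  | zero => exact h
  | succ d ih =>
    rw [Function.iterate_succ_apply, Function.iterate_succ_apply]
    refine ih fun n hn => ?_
    simp only [df]
    rw [h n hn, h (n + 1) (by omega)]

lemma DegE.congr {f g : ℕ → ℤ} {n₀ : ℕ} (h : ∀ n, n₀ ≤ n → f n = g n) {d e : ℕ}
    (hf : DegE f d e) : DegE g d e := by
  obtain ⟨n₁, h1⟩ := hf
  refine ⟨max n₀ n₁, fun n hn => ?_⟩
  rw [← df_congr h d n (le_trans (le_max_left _ _) hn)]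
  exact h1 n (le_trans (le_max_right _ _) hn)

lemma df_shift (f : ℕ → ℤ) (d n : ℕ) : (df^[d] (fun n => f (n + 1))) n = (df^[d] f) (n + 1) := by
  induction d generalizing f with
  | zero => rfl
  | succ d ih =>
    rw [Function.iterate_succ_apply, Function.iterate_succ_apply]
    exact ih (df f)

lemma DegE.unshift {f : ℕ → ℤ} {d e : ℕ} (hf : DegE (fun n => f (n + 1)) d e) : DegE f d e := by
  obtain ⟨n₁, h1⟩ := hf
  refine ⟨n₁ + 1, fun n hn => ?_⟩
  obtain ⟨m, rfl⟩ : ∃ m, n = m + 1 := ⟨n - 1, by omega⟩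
  rw [← df_shift]; exact h1 m (by omega)

/-- The Hilbert function. -/
def al (V : Submodule K L) (n : ℕ) : ℕ := Module.finrank K (V ^ n : Submodule K L)
/-- The dimension of `D_n`. -/
def de (V : Submodule K L) (n : ℕ) : ℕ := Module.finrank K (DD V n)

structure Cond (V : Submodule K L) (d c e : ℕ) : Prop where
  fr : Fr V
  tr : (d : Cardinal) ≤ Algebra.trdeg K L
  om : Module.Finite L (Ω[L⁄K])
  omd : Module.finrank L (Ω[L⁄K]) ≤ d
  rk : Module.finrank K V = d + 1 + c
  deg : DegE (fun n => (al V n : ℤ)) d e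

abbrev SE (t : L) (V : Submodule K L) : Submodule K⟮t⟯ L := Submodule.span K⟮t⟯ (V : Set L)

lemma SE_pow (t : L) (V : Submodule K L) (n : ℕ) : SE t V ^ n = SE t (V ^ n) := by
  have h1 : V ^ n = Submodule.span K ((V : Set L) ^ n) := by
    rw [← Submodule.span_pow, Submodule.span_eq]
  rw [h1, Submodule.span_pow, SE, Submodule.span_span_of_tower]

lemma SE_mul (t : L) (V W : Submodule K L) : SE t V * SE t W = SE t (V * W) := by
  have h1 : V * W = Submodule.span K ((V : Set L) * (W : Set L)) := by
    rw [← Submodule.span_mul_span, Submodule.span_eq, Submodule.span_eq]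
  rw [h1, Submodule.span_mul_span, SE, Submodule.span_span_of_tower]

lemma SE_mono {t : L} {V W : Submodule K L} (h : V ≤ W) : SE t V ≤ SE t W :=
  Submodule.span_mono h

lemma le_SE {t : L} {V : Submodule K L} {x : L} (h : x ∈ V) : x ∈ SE t V :=
  Submodule.subset_span h

lemma SE_DD (t : L) (V : Submodule K L) (n : ℕ) : SE t (DD V n) ≤ DD (SE t V) n := by
  refine Submodule.span_le.2 ?_
  rintro b ⟨k, hk⟩
  refine ⟨k, fun x hx => ?_⟩
  rw [SE_pow] at hx ⊢
  induction hx using Submodule.span_induction with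
  | mem x hx => exact le_SE (hk x hx)
  | zero => simp
  | add x y _ _ hx hy => rw [add_mul]; exact add_mem hx hy
  | smul a x _ hx => rw [smul_mul_assoc]; exact Submodule.smul_mem _ _ hx

lemma SE_fg (t : L) {V : Submodule K L} (h : V.FG) : (SE t V).FG := by
  obtain ⟨s, rfl⟩ := h
  rw [SE, Submodule.span_span_of_tower]
  exact ⟨s, rfl⟩

lemma SE_fr {t : L} {V : Submodule K L} (hV : Fr V)
    (ht : ∀ w : L, IsIntegral K⟮t⟯ w → w ∈ K⟮t⟯) : Fr (SE t V) where
  inf := by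
    have := hV.inf
    exact Infinite.of_injective (algebraMap K K⟮t⟯) (algebraMap K K⟮t⟯).injective
  closed := fun b hb => ⟨⟨b, ht b hb⟩, rfl⟩
  one := le_SE hV.one
  fin := SE_fg t hV.fin
  gen := by
    rw [eq_top_iff]
    intro x _
    have hx : x ∈ IntermediateField.adjoin K (V : Set L) := by rw [hV.gen]; trivial
    have h2 : IntermediateField.adjoin K (V : Set L) ≤
        (IntermediateField.adjoin K⟮t⟯ (SE t V : Set L)).restrictScalars K := by
      rw [IntermediateField.adjoin_le_iff]
      intro y hy
      rw [SetLike.mem_coe, IntermediateField.mem_restrictScalars]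
      exact IntermediateField.subset_adjoin _ _ (le_SE hy)
    have := h2 hx
    rwa [IntermediateField.mem_restrictScalars] at this

lemma transc {V : Submodule K L} (hV : Fr V) {t : L} (ht : t ∉ (1 : Submodule K L)) :
    Transcendental K t := by
  intro h
  obtain ⟨a, ha⟩ := hV.closed t h.isIntegral
  exact ht (Submodule.mem_one.2 ⟨a, ha⟩)

/-- `V0` is a reduction-like subspace generating the same algebra in high degrees. -/
structure Sub0 (V0 V : Submodule K L) : Prop where
  le : V0 ≤ V
  one : (1 : L) ∈ V0
  ev : ∃ n₀, ∀ n, n₀ ≤ n → V0 ^ n = V ^ n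

lemma Sub0.refl {V : Submodule K L} (hV : Fr V) : Sub0 V V := ⟨le_rfl, hV.one, 0, fun _ _ => rfl⟩

lemma Sub0.fr {V0 V : Submodule K L} (h : Sub0 V0 V) (hV : Fr V) : Fr V0 where
  inf := hV.inf
  closed := hV.closed
  one := h.one
  fin := hV.fin.of_le h.le
  gen := by
    rw [eq_top_iff, ← hV.gen, IntermediateField.adjoin_le_iff]
    intro x hx
    obtain ⟨n₀, hn⟩ := h.ev
    have h1 : x ∈ V ^ (n₀ + 1) := by
      have := pow_mono_of_one hV.one (show 1 ≤ n₀ + 1 by omega)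
      rw [pow_one] at this
      exact this hx
    rw [← hn _ (by omega)] at h1
    have h2 : ∀ n, V0 ^ n ≤ Subalgebra.toSubmodule
        (IntermediateField.adjoin K (V0 : Set L)).toSubalgebra := by
      intro n
      induction n with
      | zero =>
        rw [pow_zero, Submodule.one_le]
        exact one_mem (IntermediateField.adjoin K (V0 : Set L))
      | succ n ih =>
        rw [pow_succ]
        refine Submodule.mul_le.2 fun a ha b hb => ?_
        have hb : b ∈ IntermediateField.adjoin K (V0 : Set L) :=
          IntermediateField.subset_adjoin K _ hb
        have ha : a ∈ IntermediateField.adjoin K (V0 : Set L) := ih ha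
        exact (IntermediateField.adjoin K (V0 : Set L)).mul_mem ha hb
    exact h2 _ h1

lemma Sub0.DD {V0 V : Submodule K L} (h : Sub0 V0 V) (n : ℕ) : DD V0 n = DD V n := by
  obtain ⟨n₀, hn⟩ := h.ev
  ext b
  constructor
  · rintro ⟨k, hk⟩
    refine ⟨max k n₀, ?_⟩
    have := mul_ge_of hk (le_max_left k n₀)
    rwa [hn _ (le_max_right k n₀), hn _ (le_trans (le_max_right k n₀) (by omega))] at this
  · rintro ⟨k, hk⟩
    refine ⟨max k n₀, ?_⟩
    have := mul_ge_of hk (le_max_left k n₀)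
    rwa [← hn _ (le_max_right k n₀), ← hn _ (le_trans (le_max_right k n₀) (by omega))] at this

lemma Sub0.Gi {V0 V : Submodule K L} (h : Sub0 V0 V) {t : L} (hG : Gi V0 t) : Gi V t := by
  obtain ⟨n₀, hn⟩ := h.ev
  obtain ⟨n₁, h1⟩ := hG
  refine ⟨max n₀ n₁, fun n hn' => ?_⟩
  have ha : n₀ ≤ n := le_trans (le_max_left _ _) hn'
  have := h1 n (le_trans (le_max_right _ _) hn')
  rwa [hn _ ha, hn _ (by omega)] at this

lemma Sub0.SE {V0 V : Submodule K L} (h : Sub0 V0 V) (t : L) : Sub0 (SE t V0) (SE t V) where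
  le := SE_mono h.le
  one := le_SE h.one
  ev := by
    obtain ⟨n₀, hn⟩ := h.ev
    exact ⟨n₀, fun n hn' => by rw [SE_pow, SE_pow, hn n hn']⟩

/-- Data of a good element `t`. -/
structure Good (V : Submodule K L) (t : L) : Prop where
  mem : t ∈ V
  gi : Gi V t
  nk : t ∉ (1 : Submodule K L)

lemma Good.fil {V : Submodule K L} {t : L} (h : Good V t) (hV : Fr V) : Fil t (FF V) :=
  FF_fil hV h.mem h.gi h.nk

lemma Good.trans {V : Submodule K L} {t : L} (h : Good V t) (hV : Fr V) : Transcendental K t :=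
  transc hV h.nk

/-- dimension of `E D_n`. -/
lemma Good.dimDD {V : Submodule K L} {t : L} (h : Good V t) (hV : Fr V) (n : ℕ) :
    Module.finrank K⟮t⟯ (SE t (DD V (n + 1))) + de V n = de V (n + 1) :=
  (h.fil hV).dimE (n := n + 1) (h.trans hV) ((h.fil hV).mono (n + 1)) ((h.fil hV).mul (n + 1)) le_rfl

lemma Good.dimP {V : Submodule K L} {t : L} (h : Good V t) (hV : Fr V) {n : ℕ}
    (hD : DD V n = V ^ n) :
    al (SE t V) (n + 1) + al V n = al V (n + 1) := by
  have := (h.fil hV).dimE (n := n + 1) (U := V ^ (n + 1)) (h.trans hV) (by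
    show DD V n ≤ _
    rw [hD]; exact pow_mono_of_one hV.one (by omega)) (by
    intro f hf
    have hf : f ∈ V ^ n := by rw [← hD]; exact hf
    rw [pow_succ']
    exact Submodule.mul_mem_mul h.mem hf) (pow_le_DD (n + 1))
  have e2 : FF V (n + 1) = V ^ n := hD
  rw [e2] at this
  rw [al, SE_pow]
  exact this

lemma DD_sq_zero {V : Submodule K L} (hV : Fr V) : DD V 0 = V ^ 0 := by
  rw [DD_zero hV, pow_zero]

lemma al_zero {V : Submodule K L} : al V 0 = 1 := by
  rw [al, pow_zero]
  rw [Submodule.one_eq_span]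
  exact finrank_span_singleton one_ne_zero

lemma al_one {V : Submodule K L} : al V 1 = Module.finrank K V := by
  rw [al, pow_one]

lemma exists_good {V0 V : Submodule K L} {d c e : ℕ} (hC : Cond V (d + 1) c e)
    (h0 : Sub0 V0 V) : ∃ t ∈ V0, Good V t := by
  have hinf := hC.fr.inf
  obtain ⟨B, hB, hBV, hG⟩ := Ginf (h0.fr hC.fr)
  have hne : ¬ V0 ≤ 1 := by
    intro hle
    have hgen := (h0.fr hC.fr).gen
    have hbot : IntermediateField.adjoin K (V0 : Set L) = ⊥ := by
      rw [eq_bot_iff, IntermediateField.adjoin_le_iff]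
      intro x hx
      obtain ⟨a, rfl⟩ := Submodule.mem_one.1 (hle hx)
      exact IntermediateField.algebraMap_mem _ a
    rw [hgen] at hbot
    have halg : Algebra.IsAlgebraic K L := by
      refine ⟨fun x => ?_⟩
      have : x ∈ (⊤ : IntermediateField K L) := trivial
      rw [hbot, IntermediateField.mem_bot] at this
      obtain ⟨a, rfl⟩ := this
      exact isAlgebraic_algebraMap a
    have := hC.tr
    rw [trdeg_eq_zero] at this
    norm_cast at this
  obtain ⟨t, ht, htB⟩ := avoid V0 (insert 1 B) (hB.insert _) (by
    rintro W (rfl | hW)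
    · exact hne
    · exact hBV W hW)
  exact ⟨t, ht, h0.le ht, h0.Gi (hG t ht fun W hW => htB W (Set.mem_insert_of_mem _ hW)),
    htB 1 (Set.mem_insert _ _)⟩

lemma estep {V0 V : Submodule K L} {d c e : ℕ} (hC : Cond V (d + 2) c e)
    (h0 : Sub0 V0 V) : ∃ t ∈ V0, Good V t ∧ Cond (SE t V) (d + 1) c e := by
  have hinf := hC.fr.inf
  have hfin := hC.om
  obtain ⟨B, hB, hBV, hG⟩ := Ginf (h0.fr hC.fr)
  obtain ⟨t, ht, htB, htD, htc⟩ := zariski (h0.fr hC.fr) hC.omd hC.tr B hB hBV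
  have hgood : Good V t := by
    refine ⟨h0.le ht, h0.Gi (hG t ht htB), fun h => htD ?_⟩
    obtain ⟨a, rfl⟩ := Submodule.mem_one.1 h
    exact Derivation.map_algebraMap _ a
  refine ⟨t, ht, hgood, ?_⟩
  obtain ⟨ho1, ho2⟩ := omega_drop htD
  refine ⟨SE_fr hC.fr htc, trdeg_drop t hC.tr, ho1, ?_, ?_, ?_⟩
  · have := hC.omd; omega
  · have := hgood.dimP hC.fr (n := 0) (DD_sq_zero hC.fr)
    rw [zero_add, al_one, al_one, al_zero, hC.rk] at this
    omega
  · obtain ⟨n₁, hn₁⟩ := DD_large hC.fr.one hgood.mem hgood.gi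
    refine DegE.unshift ?_
    have hd := hC.deg
    have hd : DegE (df (fun n => (al V n : ℤ))) (d + 1) e := hd
    refine hd.congr (n₀ := n₁) fun n hn => ?_
    have := hgood.dimP hC.fr (n := n) (hn₁ n hn)
    simp only [df]
    push_cast [← this]
    ring

end Estep
end QP

namespace QP
open scoped Polynomial IntermediateField Pointwise
section MDsec
variable {K L : Type} [Field K] [Field L] [Algebra K L]

lemma fdim {V : Submodule K L} (h : V.FG) : FiniteDimensional K V :=
  Module.Finite.iff_fg.2 h

lemma Good.DD_fg {V : Submodule K L} {t : L} (h : Good V t) (hV : Fr V) (n : ℕ) :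
    (DD V n).FG := QP.DD_fg hV h.mem h.gi n

/-- `b_n = dim_E E D_n`. -/
def bb (V : Submodule K L) (t : L) (n : ℕ) : ℕ := Module.finrank K⟮t⟯ (SE t (DD V n))

lemma de_zero {V : Submodule K L} (hV : Fr V) : de V 0 = 1 := by
  rw [de, DD_sq_zero hV]; exact al_zero

lemma Good.bb_succ {V : Submodule K L} {t : L} (h : Good V t) (hV : Fr V) (n : ℕ) :
    bb V t (n + 1) + de V n = de V (n + 1) := h.dimDD hV n

lemma Good.bb_mono {V : Submodule K L} {t : L} (h : Good V t) (hV : Fr V) :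
    Monotone (bb V t) := by
  refine monotone_nat_of_le_succ fun n => ?_
  have := fdim (SE_fg t (h.DD_fg hV (n + 1)))
  exact Submodule.finrank_mono (SE_mono (DD_mono hV.one (by omega)))

/-- Lifting an inclusion of `E`-spans. -/
lemma Good.lift {V U : Submodule K L} {t : L} (h : Good V t) (hV : Fr V) {n : ℕ}
    (hU : U ≤ DD V (n + 1)) (hs : SE t (DD V (n + 1)) ≤ SE t U) :
    ∃ τ : K, ∀ b ∈ DD V (n + 1), ∃ u ∈ U, ∃ w ∈ DD V n,
      b = u + (t - algebraMap K L τ) * w := by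
  have hinf := hV.inf
  obtain ⟨S, hS⟩ := (h.fil hV).spec (n := n + 1) (h.trans hV) (U := U) (W := DD V (n + 1))
    hU le_rfl (fun x hx => hs (le_SE hx))
  obtain ⟨τ, hτ⟩ := Infinite.exists_notMem_finset S
  exact ⟨τ, hS τ hτ⟩

lemma Good.lift_eq {V : Submodule K L} {t : L} (h : Good V t) (hV : Fr V) {n : ℕ}
    (hs : SE t (DD V (n + 1)) ≤ SE t (V ^ (n + 1))) (hn : DD V n = V ^ n) :
    DD V (n + 1) = V ^ (n + 1) := by
  obtain ⟨τ, hτ⟩ := h.lift hV (pow_le_DD (n + 1)) hs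
  refine le_antisymm ?_ (pow_le_DD _)
  intro b hb
  obtain ⟨u, hu, w, hw, rfl⟩ := hτ b hb
  refine add_mem hu ?_
  rw [hn] at hw
  rw [pow_succ']
  refine Submodule.mul_mem_mul (sub_mem h.mem ?_) hw
  rw [Algebra.algebraMap_eq_smul_one]
  exact V.smul_mem _ hV.one

lemma Good.bb_eq {V : Submodule K L} {t : L} (h : Good V t) (hV : Fr V) {n : ℕ}
    (hb : bb V t (n + 1) ≤ bb V t n) :
    ∀ b ∈ DD V (n + 1), ∃ u ∈ DD V n, ∃ w ∈ DD V n, b = u + t * w := by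
  have := fdim (SE_fg t (h.DD_fg hV (n + 1)))
  have heq : SE t (DD V n) = SE t (DD V (n + 1)) :=
    Submodule.eq_of_le_of_finrank_le (SE_mono (DD_mono hV.one (by omega))) hb
  obtain ⟨τ, hτ⟩ := h.lift hV (DD_mono hV.one (by omega)) heq.ge
  intro b hb
  obtain ⟨u, hu, w, hw, rfl⟩ := hτ b hb
  refine ⟨u - τ • w, sub_mem hu (Submodule.smul_mem _ _ hw), w, hw, ?_⟩
  rw [Algebra.smul_def]; ring

/-- in dimension one, `b_n ≤ e`, with equality for large `n`. -/
lemma Good.bb_large {V : Submodule K L} {t : L} {c e : ℕ} (h : Good V t) (hC : Cond V 1 c e) :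
    ∃ n₀, ∀ n, n₀ ≤ n → bb V t n = e := by
  obtain ⟨n₁, h1⟩ := DD_large hC.fr.one h.mem h.gi
  obtain ⟨n₂, h2⟩ := hC.deg
  refine ⟨max n₁ n₂ + 1, fun n hn => ?_⟩
  obtain ⟨m, rfl⟩ : ∃ m, n = m + 1 := ⟨n - 1, by omega⟩
  have h3 := h2 m (by have := le_max_right n₁ n₂; omega)
  have h4 := h.bb_succ hC.fr m
  rw [de, de, h1 m (by have := le_max_left n₁ n₂; omega),
    h1 (m + 1) (by have := le_max_left n₁ n₂; omega)] at h4
  simp only [Function.iterate_one, df, al] at h3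
  omega

lemma Good.bb_le {V : Submodule K L} {t : L} {c e : ℕ} (h : Good V t) (hC : Cond V 1 c e)
    (n : ℕ) : bb V t n ≤ e := by
  obtain ⟨n₀, h0⟩ := h.bb_large hC
  rw [← h0 (max n n₀) (le_max_right _ _)]
  exact h.bb_mono hC.fr (le_max_left _ _)

lemma V_le_D1 {V : Submodule K L} : V ≤ DD V 1 := by
  have := pow_le_DD (V := V) 1
  rwa [pow_one] at this

/-- common denominators -/
lemma common_den {U : Submodule K L} {t : L} (htr : Transcendental K t) {ι : Type} [Fintype ι]
    (x : ι → L) (hx : ∀ i, x i ∈ SE t U) :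
    ∃ q : K[X], q ≠ 0 ∧ ∃ P : ι → L[X], (∀ i j, (P i).coeff j ∈ U) ∧
      ∀ i, Polynomial.aeval t q * x i = (P i).eval t := by
  classical
  choose q hq P hP e using fun i => mem_spanE htr (hx i)
  refine ⟨∏ i, q i, Finset.prod_ne_zero_iff.2 fun i _ => hq i,
    fun i => (∏ j ∈ Finset.univ.erase i, q j).map (algebraMap K L) * P i,
    fun i => coeff_mem_map_mul _ (hP i), fun i => ?_⟩
  rw [← Finset.mul_prod_erase Finset.univ q (Finset.mem_univ i), Polynomial.eval_mul, ← e i,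
    map_mul, Polynomial.eval_map_algebraMap]
  ring

lemma Good.redstep {V0 V : Submodule K L} {t : L} (h : Good V t) (hV : Fr V) (ht0 : t ∈ V0)
    (h0 : Sub0 V0 V) (hD1 : DD V 1 = V) (hD2 : DD V 2 = V ^ 2) {m : ℕ} (p' : Fin m → L)
    (hp' : ∀ i, p' i ∈ SE t V0)
    (hr : ∀ b ∈ SE t V ^ 2, ∃ r0 ∈ SE t V, ∃ r : Fin m → L, (∀ i, r i ∈ SE t V) ∧
      b = r0 + ∑ i, p' i * r i) :
    ∃ p : Fin (m + 1) → L, (∀ i, p i ∈ V0) ∧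
      ∀ b ∈ V ^ 2, ∃ r0 ∈ V, ∃ r : Fin (m + 1) → L, (∀ i, r i ∈ V) ∧
      b = r0 + ∑ i, p i * r i := by
  classical
  have hinf := hV.inf
  have htr := h.trans hV
  obtain ⟨q₀, hq₀, P, hP, eP⟩ := common_den htr p' hp'
  have hq₀t : Polynomial.aeval t q₀ ≠ 0 := fun hh => hq₀ ((transcendental_iff.1 htr) q₀ hh)
  -- each `b` has a polynomial representation
  have key : ∀ b ∈ V ^ 2, ∃ S : Finset K, ∀ τ ∉ S, ∃ r0 ∈ V, ∃ r1 ∈ V, ∃ r : Fin m → L,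
      (∀ i, r i ∈ V) ∧ b = r0 + (t - algebraMap K L τ) * r1 +
        ∑ i, (P i).eval (algebraMap K L τ) * r i := by
    intro b hb
    obtain ⟨r0, hr0, r, hr, hbr⟩ := hr b (by rw [SE_pow]; exact le_SE hb)
    have hqm : (Polynomial.aeval t q₀)⁻¹ ∈ K⟮t⟯ := inv_mem (by
      have : Polynomial.aeval t q₀ = ((Polynomial.aeval
        (⟨t, IntermediateField.mem_adjoin_simple_self K t⟩ : K⟮t⟯) q₀ : K⟮t⟯) : L) := by
        rw [← IntermediateField.aeval_coe]
      rw [this]; exact SetLike.coe_mem _)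
    obtain ⟨s, hs, R, hR, eR⟩ := common_den htr (U := V) (ι := Option (Fin m))
      (fun o => o.elim r0 (fun i => (Polynomial.aeval t q₀)⁻¹ * r i)) (by
        rintro (_ | i)
        · exact hr0
        · exact (SE t V).smul_mem ⟨_, hqm⟩ (hr i))
    have e0 := eR none
    have e1 : ∀ i, Polynomial.aeval t s * ((Polynomial.aeval t q₀)⁻¹ * r i) = (R (some i)).eval t :=
      fun i => eR (some i)
    simp only [Option.elim_none] at e0
    have esb : Polynomial.aeval t s * b = (R none).eval t + ∑ i, (P i).eval t * (R (some i)).eval t := by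
      rw [hbr, mul_add, e0, Finset.mul_sum]
      congr 1
      refine Finset.sum_congr rfl fun i _ => ?_
      rw [← eP, ← e1]
      field_simp
    have hcoef : ∀ j, (s.map (algebraMap K L) * Polynomial.C b -
        (R none + ∑ i, P i * R (some i))).coeff j ∈ FF V 3 := by
      have e3 : FF V 3 = V ^ 2 := hD2
      rw [e3]
      refine coeff_mem_sub (coeff_mem_map_mul s (coeff_mem_C hb)) (coeff_mem_add ?_ ?_)
      · intro i
        have := pow_mono_of_one hV.one (show 1 ≤ 2 by omega)
        rw [pow_one] at this
        exact this (hR none i)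
      · intro j
        rw [Polynomial.finsetSum_coeff]
        refine sum_mem fun i _ => ?_
        rw [Polynomial.coeff_mul]
        refine sum_mem fun x _ => ?_
        rw [pow_two]
        exact Submodule.mul_mem_mul (h0.le (hP i _)) (hR _ _)
    obtain ⟨Q, hQ, eQ⟩ := (h.fil hV).key (n := 2) _ hcoef (by
      rw [Polynomial.eval_sub, Polynomial.eval_mul, Polynomial.eval_map_algebraMap,
        Polynomial.eval_C, esb, Polynomial.eval_add, Polynomial.eval_finsetSum]
      simp)
    have hQ : ∀ i, Q.coeff i ∈ V := by
      have e2 : FF V 2 = V := hD1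
      rw [e2] at hQ; exact hQ
    refine ⟨s.roots.toFinset, fun τ hτ => ?_⟩
    have hsτ : s.eval τ ≠ 0 := by
      intro hh
      exact hτ (by rw [Multiset.mem_toFinset, Polynomial.mem_roots hs]; exact hh)
    have e4 := congrArg (Polynomial.eval (algebraMap K L τ)) eQ
    simp only [Polynomial.eval_sub, Polynomial.eval_mul, Polynomial.eval_add,
      Polynomial.eval_finsetSum, Polynomial.eval_C, Polynomial.eval_X,
      Polynomial.eval_map_algebraMap, Polynomial.aeval_algebraMap_apply] at e4
    rw [Polynomial.coe_aeval_eq_eval] at e4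
    have hne : algebraMap K L (s.eval τ) ≠ 0 := by simpa using hsτ
    have hsm : ∀ x ∈ V, (algebraMap K L (s.eval τ))⁻¹ * x ∈ V := by
      intro x hx
      rw [← map_inv₀, ← Algebra.smul_def]
      exact V.smul_mem _ hx
    refine ⟨(algebraMap K L (s.eval τ))⁻¹ * (R none).eval (algebraMap K L τ),
      hsm _ (eval_algebraMap_mem (hR none) τ),
      -((algebraMap K L (s.eval τ))⁻¹ * Q.eval (algebraMap K L τ)),
      neg_mem (hsm _ (eval_algebraMap_mem hQ τ)),
      fun i => (algebraMap K L (s.eval τ))⁻¹ * (R (some i)).eval (algebraMap K L τ),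
      fun i => hsm _ (eval_algebraMap_mem (hR _) τ), ?_⟩
    have e5 : ∑ i, (P i).eval (algebraMap K L τ) *
        ((algebraMap K L (s.eval τ))⁻¹ * (R (some i)).eval (algebraMap K L τ)) =
        (algebraMap K L (s.eval τ))⁻¹ * ∑ i, (P i).eval (algebraMap K L τ) *
          (R (some i)).eval (algebraMap K L τ) := by
      rw [Finset.mul_sum]
      refine Finset.sum_congr rfl fun i _ => by ring
    rw [e5]
    have e6 : b = (algebraMap K L (s.eval τ))⁻¹ * (algebraMap K L (s.eval τ) * b) := by
      rw [← mul_assoc, inv_mul_cancel₀ hne, one_mul]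
    rw [e6, sub_eq_iff_eq_add.1 e4]
    ring
  obtain ⟨B, hB⟩ := hV.fin.pow 2
  have hBV : ∀ b ∈ B, b ∈ V ^ 2 := fun b hb => hB ▸ Submodule.subset_span hb
  choose S hS using fun b : B => key b.1 (hBV b.1 b.2)
  obtain ⟨τ, hτ⟩ := Infinite.exists_notMem_finset (B.attach.biUnion S)
  refine ⟨Fin.cons (t - algebraMap K L τ) (fun i => (P i).eval (algebraMap K L τ)), ?_, ?_⟩
  · intro i
    refine Fin.cases ?_ (fun i => ?_) i
    · rw [Fin.cons_zero, Algebra.algebraMap_eq_smul_one]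
      exact sub_mem ht0 (V0.smul_mem _ h0.one)
    · rw [Fin.cons_succ]
      exact eval_algebraMap_mem (hP i) τ
  · intro b hb
    rw [← hB] at hb
    induction hb using Submodule.span_induction with
    | mem b hb =>
      obtain ⟨r0, hr0, r1, hr1, r, hr, e⟩ := hS ⟨b, hb⟩ τ (fun hh => hτ (by
        rw [Finset.mem_biUnion]; exact ⟨⟨b, hb⟩, Finset.mem_attach _ _, hh⟩))
      refine ⟨r0, hr0, Fin.cons r1 r, fun i => Fin.cases hr1 hr i, ?_⟩
      rw [Fin.sum_univ_succ]
      simp only [Fin.cons_zero, Fin.cons_succ]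
      rw [← add_assoc]; exact e
    | zero => exact ⟨0, zero_mem _, 0, fun i => zero_mem _, by simp⟩
    | add x y _ _ hx hy =>
      obtain ⟨a, ha, f, hf, rfl⟩ := hx
      obtain ⟨b, hb, g, hg, rfl⟩ := hy
      refine ⟨a + b, add_mem ha hb, f + g, fun i => add_mem (hf i) (hg i), ?_⟩
      simp only [Pi.add_apply, mul_add, Finset.sum_add_distrib]
      ring
    | smul a x _ hx =>
      obtain ⟨b, hb, g, hg, rfl⟩ := hx
      refine ⟨a • b, V.smul_mem _ hb, a • g, fun i => V.smul_mem _ (hg i), ?_⟩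
      simp only [Pi.smul_apply, mul_smul_comm, smul_add, Finset.smul_sum]

theorem MD (d : ℕ) : ∀ {K L : Type} [Field K] [Field L] [Algebra K L] (V0 V : Submodule K L)
    (c : ℕ), Cond V (d + 1) c (c + 1) → Sub0 V0 V →
    (∀ n, DD V n = V ^ n) ∧
    (∀ n, al V (n + 1) = (n + 1 + (d + 1)).choose (d + 1) + c * (n + (d + 1)).choose (d + 1)) ∧
    ∃ p : Fin (d + 1) → L, (∀ i, p i ∈ V0) ∧
      ∀ b ∈ V ^ 2, ∃ r0 ∈ V, ∃ r : Fin (d + 1) → L, (∀ i, r i ∈ V) ∧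
      b = r0 + ∑ i, p i * r i := by
  induction d with
  | zero =>
    intro K L _ _ _ V0 V c hC h0
    obtain ⟨t, ht0, ht⟩ := exists_good hC h0
    have hV := hC.fr
    have hb1 := ht.bb_succ hV 0
    have hble := ht.bb_le hC
    rw [de_zero hV] at hb1
    have hf1 := fdim (ht.DD_fg hV 1)
    have hD1 : DD V 1 = V := by
      refine (Submodule.eq_of_le_of_finrank_le V_le_D1 ?_).symm
      have h1 := hC.rk
      have h2 := hble 1
      change de V 1 ≤ _
      rw [zero_add] at *
      omega
    have hde1 : de V 1 = c + 2 := by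
      rw [de, hD1, hC.rk]; omega
    have hbn : ∀ n, bb V t (n + 1) = c + 1 := by
      intro n
      have h1 := hble (n + 1)
      have h2 := ht.bb_mono hV (show 1 ≤ n + 1 by omega)
      rw [zero_add] at *
      omega
    have hstep : ∀ n, ∀ b ∈ DD V (n + 1 + 1), ∃ u ∈ DD V (n + 1), ∃ w ∈ DD V (n + 1),
        b = u + t * w := fun n => ht.bb_eq hV (by rw [hbn, hbn])
    have hD : ∀ n, DD V n = V ^ n := by
      intro n
      induction n with
      | zero => exact DD_sq_zero hV
      | succ n ih =>
        cases n with
        | zero => rw [zero_add, pow_one]; exact hD1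
        | succ n =>
          refine le_antisymm (fun b hb => ?_) (pow_le_DD _)
          obtain ⟨u, hu, w, hw, rfl⟩ := hstep n b hb
          rw [ih] at hu hw
          refine add_mem (pow_mono_of_one hV.one (by omega) hu) ?_
          rw [pow_succ' V (n + 1)]
          exact Submodule.mul_mem_mul ht.mem hw
    refine ⟨hD, ?_, fun _ => t, fun _ => ht0, ?_⟩
    · intro n
      simp only [zero_add, Nat.choose_one_right]
      induction n with
      | zero => rw [zero_add, al_one, hC.rk]; ring
      | succ n ih =>
        have h1 := ht.bb_succ hV (n + 1)
        rw [de, de, hD, hD, hbn] at h1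
        change _ + al V (n + 1) = al V (n + 1 + 1) at h1
        rw [← h1, ih]; ring
    · intro b hb
      rw [← hD 2] at hb
      obtain ⟨u, hu, w, hw, rfl⟩ := hstep 0 b hb
      rw [zero_add, hD1] at hu hw
      exact ⟨u, hu, fun _ => w, fun _ => hw, by simp⟩
  | succ d ih =>
    intro K L _ _ _ V0 V c hC h0
    obtain ⟨t, ht0, ht, hC'⟩ := estep hC h0
    have hV := hC.fr
    obtain ⟨h1, h2, p, hp, hr⟩ := ih (SE t V0) (SE t V) c hC' (h0.SE t)
    have hD : ∀ n, DD V n = V ^ n := by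
      intro n
      induction n with
      | zero => exact DD_sq_zero hV
      | succ n ihn =>
        refine ht.lift_eq hV ((SE_DD t V _).trans ?_) ihn
        rw [h1, SE_pow]
    refine ⟨hD, ?_, ?_⟩
    · intro n
      induction n with
      | zero =>
        rw [zero_add, al_one, hC.rk, zero_add, Nat.choose_self, add_comm 1 (d + 1 + 1),
          Nat.choose_succ_self_right]
        ring
      | succ n ihn =>
        rw [← ht.dimP hV (hD (n + 1)), ihn, h2 (n + 1)]
        have e1 : (n + 1 + 1 + (d + 1 + 1)).choose (d + 1 + 1) =
          (n + 1 + 1 + (d + 1)).choose (d + 1) + (n + 1 + (d + 1 + 1)).choose (d + 1 + 1) := by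
          have := Nat.choose_succ_succ (n + 1 + 1 + (d + 1)) (d + 1)
          rw [show n + 1 + 1 + (d + 1 + 1) = (n + 1 + 1 + (d + 1)).succ by omega]
          rw [this, show n + 1 + 1 + (d + 1) = n + 1 + (d + 1 + 1) by omega]
        have e2 : (n + 1 + (d + 1 + 1)).choose (d + 1 + 1) =
          (n + 1 + (d + 1)).choose (d + 1) + (n + (d + 1 + 1)).choose (d + 1 + 1) := by
          have := Nat.choose_succ_succ (n + 1 + (d + 1)) (d + 1)
          rw [show n + 1 + (d + 1 + 1) = (n + 1 + (d + 1)).succ by omega]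
          rw [this, show n + 1 + (d + 1) = n + (d + 1 + 1) by omega]
        rw [e1, e2]; ring
    · exact ht.redstep hV ht0 h0 (by rw [hD, pow_one]) (hD 2) p hp hr

end MDsec
end QP

namespace QP
open scoped Polynomial IntermediateField Pointwise
section Dims
variable {K L : Type} [Field K] [Field L] [Algebra K L]

lemma fr_mono {A B : Submodule K L} (hB : B.FG) (h : A ≤ B) :
    Module.finrank K A ≤ Module.finrank K B := by
  have := fdim hB
  exact Submodule.finrank_mono h

lemma fr_sup {A B C : Submodule K L} (hA : A.FG) (hB : B.FG) (h : C ≤ A ⊔ B) :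
    Module.finrank K C ≤ Module.finrank K A + Module.finrank K B := by
  have := fdim hA
  have := fdim hB
  exact (fr_mono (hA.sup hB) h).trans (Submodule.finrank_add_le_finrank_add_finrank A B)

lemma fg_single (x : L) : (Submodule.span K {x}).FG := Submodule.fg_span_singleton x

lemma fr_mul_single {A : Submodule K L} (hA : A.FG) (x : L) :
    Module.finrank K (A * Submodule.span K {x} : Submodule K L) ≤ Module.finrank K A := by
  have := fdim hA
  have h : A * Submodule.span K {x} = A.map (LinearMap.mulRight K x) := by
    ext y
    rw [Submodule.mem_mul_span_singleton, Submodule.mem_map]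
    rfl
  rw [h]
  exact Submodule.finrank_map_le _ _

lemma decomp {U P : Submodule K L} (hP : P.FG) (hUP : U ≤ P) {x : L} (hx : x ∈ P) (hxU : x ∉ U)
    {k : ℕ} (hk : Module.finrank K P ≤ k + 1) :
    ∃ P' : Submodule K L, U ≤ P' ∧ P' ≤ P ∧ Module.finrank K P' ≤ k ∧
      P = P' ⊔ Submodule.span K {x} := by
  have hfd := fdim hP
  obtain ⟨f, hfx, hfU⟩ := Submodule.exists_le_ker_of_notMem hxU
  refine ⟨P ⊓ LinearMap.ker f, le_inf hUP hfU, inf_le_left, ?_, ?_⟩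
  · have : P ⊓ LinearMap.ker f < P := by
      refine lt_of_le_of_ne inf_le_left fun h => hfx ?_
      rw [← h] at hx
      exact hx.2
    have := Submodule.finrank_lt_finrank_of_lt this
    omega
  · refine le_antisymm ?_ (sup_le inf_le_left ((Submodule.span_singleton_le_iff_mem _ _).2 hx))
    intro y hy
    rw [Submodule.mem_sup]
    refine ⟨y - (f y / f x) • x, ⟨sub_mem hy (P.smul_mem _ hx), ?_⟩, (f y / f x) • x,
      Submodule.smul_mem _ _ (Submodule.mem_span_singleton_self x), by simp⟩
    rw [SetLike.mem_coe, LinearMap.mem_ker, map_sub, map_smul, smul_eq_mul, div_mul_cancel₀ _ hfx, sub_self]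

lemma decomp0 {P : Submodule K L} (hP : P.FG) {k : ℕ} (hk : Module.finrank K P ≤ k + 1) :
    ∃ P' : Submodule K L, ∃ x ∈ P, P' ≤ P ∧ Module.finrank K P' ≤ k ∧
      P = P' ⊔ Submodule.span K {x} := by
  by_cases h : P = ⊥
  · subst h
    exact ⟨⊥, 0, zero_mem _, le_rfl, by simp, by simp⟩
  · obtain ⟨x, hx, hx0⟩ := Submodule.exists_mem_ne_zero_of_ne_bot h
    obtain ⟨P', _, h2, h3, h4⟩ := decomp (U := ⊥) hP bot_le hx (by simpa using hx0) hk
    exact ⟨P', x, hx, h2, h3, h4⟩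

lemma eq_bot_of_fr {A : Submodule K L} (hA : A.FG) (h : Module.finrank K A ≤ 0) : A = ⊥ := by
  have := fdim hA
  exact Submodule.finrank_eq_zero.1 (by omega)

lemma fr_mul_le {A : Submodule K L} (hA : A.FG) (k : ℕ) {B : Submodule K L} (hB : B.FG)
    (hk : Module.finrank K B ≤ k) :
    Module.finrank K (A * B : Submodule K L) ≤ k * Module.finrank K A := by
  induction k generalizing B with
  | zero => rw [eq_bot_of_fr hB hk, Submodule.mul_bot]; simp
  | succ k ih =>
    obtain ⟨B', x, hx, h2, h3, h4⟩ := decomp0 hB hk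
    have hB' := hB.of_le h2
    have h5 : A * B ≤ A * B' ⊔ A * Submodule.span K {x} := by
      rw [h4, Submodule.mul_sup]
    have := fr_sup (hA.mul hB') (hA.mul (fg_single x)) h5
    have h6 := ih hB' h3
    have h7 := fr_mul_single hA x
    rw [add_mul, one_mul]; omega

lemma pow_split {P U : Submodule K L} {x : L} (hU : U ≤ P) (h : P = U ⊔ Submodule.span K {x}) (m : ℕ) :
    P ^ (m + 1) ≤ U ^ (m + 1) ⊔ P ^ m * Submodule.span K {x} := by
  induction m with
  | zero => simp [h]
  | succ m ih =>
    have hx : Submodule.span K {x} ≤ P := by rw [h]; exact le_sup_right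
    have hpow : U ^ (m + 1) ≤ P ^ (m + 1) := pow_le_pow_left' hU _
    calc P ^ (m + 1 + 1) = P ^ (m + 1) * P := pow_succ _ _
      _ ≤ (U ^ (m + 1) ⊔ P ^ m * Submodule.span K {x}) * P := mul_le_mul' ih le_rfl
      _ = U ^ (m + 1) * P ⊔ P ^ m * Submodule.span K {x} * P := Submodule.sup_mul _ _ _
      _ ≤ _ := by
        refine sup_le ?_ ?_
        · calc U ^ (m + 1) * P = U ^ (m + 1) * (U ⊔ Submodule.span K {x}) := by rw [← h]
            _ = U ^ (m + 1) * U ⊔ U ^ (m + 1) * Submodule.span K {x} := Submodule.mul_sup _ _ _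
            _ ≤ _ := sup_le_sup (pow_succ _ _).ge (mul_le_mul' hpow le_rfl)
        · refine le_trans (le_of_eq ?_) le_sup_right
          rw [pow_succ]
          ring

lemma sym_dim (k : ℕ) : ∀ (P : Submodule K L), P.FG → Module.finrank K P ≤ k → ∀ m,
    Module.finrank K (P ^ m : Submodule K L) ≤ Nat.multichoose k m := by
  induction k with
  | zero =>
    intro P hP hk m
    rw [eq_bot_of_fr hP hk]
    cases m with
    | zero => rw [Nat.multichoose_zero_right]; exact al_zero.le
    | succ m => rw [pow_succ, Submodule.mul_bot]; simp
  | succ k ih =>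
    intro P hP hk m
    obtain ⟨U, x, hx, hUP, hU, h⟩ := decomp0 hP hk
    have hUf := hP.of_le hUP
    induction m with
    | zero => rw [Nat.multichoose_zero_right]; exact al_zero.le
    | succ m ihm =>
      have h1 := fr_sup (hUf.pow (m + 1)) ((hP.pow m).mul (fg_single x)) (pow_split hUP h m)
      have h2 := ih U hUf hU (m + 1)
      have h3 := fr_mul_single (hP.pow m) x
      rw [Nat.multichoose_succ_succ]
      omega

lemma sym_dim' {k : ℕ} {U P : Submodule K L} {x : L} (hP : P.FG) (hUP : U ≤ P)
    (hU : Module.finrank K U ≤ k) (h : P = U ⊔ Submodule.span K {x}) (m : ℕ) :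
    Module.finrank K (U * P ^ m : Submodule K L) + 1 ≤ Nat.multichoose (k + 1) (m + 1) := by
  have hUf := hP.of_le hUP
  induction m with
  | zero => rw [pow_zero, mul_one, Nat.multichoose_one_right]; omega
  | succ m ihm =>
    have h0 : U * P ^ (m + 1) ≤ U ^ (m + 2) ⊔ U * P ^ m * Submodule.span K {x} := by
      calc U * P ^ (m + 1) ≤ U * (U ^ (m + 1) ⊔ P ^ m * Submodule.span K {x}) :=
            mul_le_mul' le_rfl (pow_split hUP h m)
        _ = _ := by rw [Submodule.mul_sup, ← pow_succ', mul_assoc]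
    have h1 := fr_sup (hUf.pow (m + 2)) ((hUf.mul (hP.pow m)).mul (fg_single x)) h0
    have h2 := sym_dim k U hUf hU (m + 2)
    have h3 := fr_mul_single (hUf.mul (hP.pow m)) x
    rw [Nat.multichoose_succ_succ]
    rw [show m + 1 + 1 = m + 2 from rfl]
    omega

lemma enlarge {P V : Submodule K L} (hV : V.FG) (hPV : P ≤ V) {m : ℕ}
    (h1 : Module.finrank K P ≤ m) (h2 : m ≤ Module.finrank K V) :
    ∃ P' : Submodule K L, P ≤ P' ∧ P' ≤ V ∧ Module.finrank K P' = m := by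
  obtain ⟨j, hj⟩ : ∃ j, m = Module.finrank K P + j := ⟨m - Module.finrank K P, by omega⟩
  induction j generalizing P with
  | zero => exact ⟨P, le_rfl, hPV, by omega⟩
  | succ j ih =>
    have hne : ¬ V ≤ P := by
      intro h
      have := fr_mono (hV.of_le hPV) h
      omega
    obtain ⟨x, hx, hxP⟩ := SetLike.not_le_iff_exists.1 hne
    have hle : P ⊔ Submodule.span K {x} ≤ V :=
      sup_le hPV ((Submodule.span_singleton_le_iff_mem _ _).2 hx)
    have hs := fr_sup (hV.of_le hPV) (fg_single x) (le_refl (P ⊔ Submodule.span K {x}))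
    have hs1 : Module.finrank K (Submodule.span K {x}) ≤ 1 := by
      have := finrank_span_le_card (R := K) ({x} : Set L); simpa using this
    have hs2 : Module.finrank K P < Module.finrank K (P ⊔ Submodule.span K {x} : Submodule K L) := by
      have := fdim (hV.of_le hle)
      refine Submodule.finrank_lt_finrank_of_lt (lt_of_le_not_ge le_sup_left fun h => hxP ?_)
      exact h (Submodule.mem_sup_right (Submodule.mem_span_singleton_self x))
    obtain ⟨P', h3, h4, h5⟩ := ih hle (by omega) (by omega)
    exact ⟨P', le_sup_left.trans h3, h4, h5⟩

lemma compl_in {P V : Submodule K L} (hV : V.FG) (hPV : P ≤ V) {c : ℕ}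
    (h : Module.finrank K V = Module.finrank K P + c) :
    ∃ W : Submodule K L, W ≤ V ∧ Module.finrank K W ≤ c ∧ V = P ⊔ W := by
  induction c generalizing V with
  | zero =>
    have := fdim hV
    exact ⟨⊥, bot_le, by simp, by
      rw [sup_bot_eq]; exact (Submodule.eq_of_le_of_finrank_le hPV (by omega)).symm⟩
  | succ c ih =>
    obtain ⟨V', h1, h2, h3⟩ := enlarge hV hPV (m := Module.finrank K P + c) (by omega) (by omega)
    obtain ⟨W, hW, hWc, e⟩ := ih (hV.of_le h2) h1 h3
    have hne : ¬ V ≤ V' := by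
      intro hh
      have := fr_mono (hV.of_le h2) hh
      omega
    obtain ⟨x, hx, hxP⟩ := SetLike.not_le_iff_exists.1 hne
    have hs1 : Module.finrank K (Submodule.span K {x}) ≤ 1 := by
      have := finrank_span_le_card (R := K) ({x} : Set L); simpa using this
    have hle : V' ⊔ Submodule.span K {x} ≤ V :=
      sup_le h2 ((Submodule.span_singleton_le_iff_mem _ _).2 hx)
    have hs2 : Module.finrank K V' < Module.finrank K (V' ⊔ Submodule.span K {x} : Submodule K L) := by
      have := fdim (hV.of_le hle)
      refine Submodule.finrank_lt_finrank_of_lt (lt_of_le_not_ge le_sup_left fun h => hxP ?_)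
      exact h (Submodule.mem_sup_right (Submodule.mem_span_singleton_self x))
    have hfd := fdim hV
    have he : V' ⊔ Submodule.span K {x} = V := Submodule.eq_of_le_of_finrank_le hle (by omega)
    refine ⟨W ⊔ Submodule.span K {x}, sup_le (hW.trans h2) (le_sup_right.trans hle), ?_, ?_⟩
    · have := fr_sup ((hV.of_le h2).of_le hW) (fg_single x) (le_refl (W ⊔ Submodule.span K {x}))
      omega
    · rw [← sup_assoc, ← e, he]

end Dims
end QP

namespace QP
open scoped Polynomial IntermediateField Pointwise
section Tail
variable {K L : Type} [Field K] [Field L] [Algebra K L]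

lemma mc_eq (d n : ℕ) : Nat.multichoose (d + 1) n = (n + d).choose d := by
  rw [Nat.multichoose_eq, show d + 1 + n - 1 = n + d by omega]
  exact Nat.choose_symm_add

theorem tail {V : Submodule K L} {d c : ℕ} (hC : Cond V (d + 1) c (c + 2)) {t : L} (ht : Good V t)
    (h1 : de V 1 = Module.finrank K V + 1)
    (hgen : ∀ n, DD V (n + 1) ≤ V ^ n * DD V 1) :
    (∀ n, DD V (n + 2) = V ^ (n + 2)) ∧
      al V 2 = (d + 3).choose (d + 1) + (c + 1) * (d + 2) := by
  have hV := hC.fr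
  have hVfg := hV.fin
  have hDfg := ht.DD_fg hV
  -- the enlarged space
  have hpow : ∀ n, DD V 1 ^ n = DD V n := by
    intro n
    refine le_antisymm ?_ ?_
    · induction n with
      | zero => rw [pow_zero, DD_zero hV]
      | succ n ih =>
        rw [pow_succ]
        exact (mul_le_mul' ih le_rfl).trans (DD_mul_le n 1)
    · cases n with
      | zero => rw [pow_zero, DD_zero hV]
      | succ n =>
        refine (hgen n).trans ?_
        rw [pow_succ]
        exact mul_le_mul' (pow_le_pow_left' V_le_D1 n) le_rfl
  obtain ⟨n₁, hn₁⟩ := DD_large hV.one ht.mem ht.gi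
  have hsub : Sub0 V (DD V 1) := ⟨V_le_D1, hV.one, n₁, fun n hn => by rw [hpow, hn₁ n hn]⟩
  have hC' : Cond (DD V 1) (d + 1) (c + 1) (c + 1 + 1) := by
    refine ⟨⟨hV.inf, hV.closed, V_le_D1 hV.one, hDfg 1, ?_⟩, hC.tr, hC.om, hC.omd, ?_, ?_⟩
    · rw [eq_top_iff, ← hV.gen]
      exact IntermediateField.adjoin.mono K _ _ V_le_D1
    · have := hC.rk
      change de V 1 = _
      omega
    · refine hC.deg.congr (n₀ := n₁) fun n hn => ?_
      rw [al, al, hpow, hn₁ n hn]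
  obtain ⟨-, hal, p, hp, hr⟩ := MD d V (DD V 1) (c + 1) hC' hsub
  -- choose `w`
  have hne : ¬ DD V 1 ≤ V := by
    intro h
    have h2 := fr_mono hVfg h
    rw [de] at h1
    omega
  obtain ⟨w, hw, hwV⟩ := SetLike.not_le_iff_exists.1 hne
  set W := Submodule.span K {w} with hWdef
  have hD1 : DD V 1 = V ⊔ W := by
    have hle : V ⊔ W ≤ DD V 1 :=
      sup_le V_le_D1 ((Submodule.span_singleton_le_iff_mem _ _).2 hw)
    have hfd := fdim (hDfg 1)
    refine (Submodule.eq_of_le_of_finrank_le hle ?_).symm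
    have := fdim ((hDfg 1).of_le hle)
    have hlt : Module.finrank K V < Module.finrank K (V ⊔ W : Submodule K L) := by
      refine Submodule.finrank_lt_finrank_of_lt (lt_of_le_not_ge le_sup_left fun h => hwV ?_)
      exact h (Submodule.mem_sup_right (Submodule.mem_span_singleton_self w))
    change de V 1 ≤ _
    omega
  -- the reduction space
  let P0 : Submodule K L := Submodule.span K (Set.range (Fin.cons 1 p : Fin (d + 2) → L))
  have hP0V : P0 ≤ V := by
    refine Submodule.span_le.2 ?_
    rintro _ ⟨i, rfl⟩
    refine Fin.cases ?_ (fun i => ?_) i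
    · exact hV.one
    · exact hp i
  have hP0r : Module.finrank K P0 ≤ d + 2 := by
    have := finrank_range_le_card (R := K) (Fin.cons 1 p : Fin (d + 2) → L)
    simpa [Set.finrank] using this
  obtain ⟨P, hP0P, hPV, hPr⟩ := enlarge hVfg hP0V (m := d + 2) hP0r (by rw [hC.rk]; omega)
  have hPfg := hVfg.of_le hPV
  have hone : (1 : L) ∈ P := hP0P (Submodule.subset_span ⟨0, rfl⟩)
  have hpP : ∀ i, p i ∈ P := fun i => hP0P (Submodule.subset_span ⟨i.succ, rfl⟩)
  have hD2 : DD V 2 ≤ P * V ⊔ P * W := by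
    rw [← hpow 2, ← Submodule.mul_sup, ← hD1]
    intro b hb
    obtain ⟨r0, hr0, r, hr, rfl⟩ := hr b hb
    refine add_mem ?_ (sum_mem fun i _ => Submodule.mul_mem_mul (hpP i) (hr i))
    have := Submodule.mul_mem_mul hone hr0
    rwa [one_mul] at this
  let U : Submodule K L := P ⊓ (V ^ 2).comap (LinearMap.mulRight K w)
  have hUP : U ≤ P := inf_le_left
  have hUw : ∀ u ∈ U, u * w ∈ V ^ 2 := fun u hu => hu.2
  have hPVV : P * V ≤ V ^ 2 := by rw [pow_two]; exact mul_le_mul' hPV le_rfl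
  have hV2 : V ^ 2 ≤ P * V ⊔ U * W := by
    intro x hx
    obtain ⟨a, ha, y, hy, rfl⟩ := Submodule.mem_sup.1 (hD2 (pow_le_DD 2 hx))
    obtain ⟨b, hb, rfl⟩ := Submodule.mem_mul_span_singleton.1 hy
    refine Submodule.add_mem_sup ha (Submodule.mem_mul_span_singleton.2 ⟨b, ⟨hb, ?_⟩, rfl⟩)
    have := sub_mem hx (hPVV ha)
    rwa [add_sub_cancel_left] at this
  have hWV : W * V ≤ P * V ⊔ P * W := by
    refine le_trans ?_ hD2
    refine le_trans ?_ (DD_mul_le 1 1)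
    exact mul_le_mul' (by rw [hD1]; exact le_sup_right) V_le_D1
  have hVn : ∀ n, V ^ (n + 2) ≤ P ^ (n + 1) * V ⊔ U * P ^ n * W := by
    intro n
    induction n with
    | zero => simpa using hV2
    | succ n ih =>
      calc V ^ (n + 1 + 2) = V ^ (n + 2) * V := by rw [← pow_succ]
        _ ≤ (P ^ (n + 1) * V ⊔ U * P ^ n * W) * V := mul_le_mul' ih le_rfl
        _ = P ^ (n + 1) * V ^ 2 ⊔ U * P ^ n * (W * V) := by
          rw [Submodule.sup_mul, mul_assoc, mul_assoc, pow_two]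
        _ ≤ P ^ (n + 1) * (P * V ⊔ U * W) ⊔ U * P ^ n * (P * V ⊔ P * W) :=
          sup_le_sup (mul_le_mul' le_rfl hV2) (mul_le_mul' le_rfl hWV)
        _ = (P ^ (n + 1 + 1) * V ⊔ U * P ^ (n + 1) * W) ⊔ (U * P ^ (n + 1) * V ⊔
              U * P ^ (n + 1) * W) := by
          rw [Submodule.mul_sup, Submodule.mul_sup]
          congr 2
          · rw [pow_succ P (n + 1), mul_assoc]
          · ring
          · rw [pow_succ P n]; ring
          · rw [pow_succ P n]; ring
        _ ≤ _ := by
          refine sup_le le_rfl (sup_le (le_trans ?_ le_sup_left) le_sup_right)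
          refine mul_le_mul' ?_ le_rfl
          rw [pow_succ' P (n + 1)]
          exact mul_le_mul' hUP le_rfl
  have hPU : P ≤ U := by
    by_contra hnot
    obtain ⟨x, hx, hxU⟩ := SetLike.not_le_iff_exists.1 hnot
    obtain ⟨U', hUU', hU'P, hU'r, hsup⟩ := decomp hPfg hUP hx hxU (k := d + 1) (by omega)
    obtain ⟨Z, hZV, hZr, hZ⟩ := compl_in hVfg hPV (c := c) (by rw [hC.rk, hPr])
    have hZfg := hVfg.of_le hZV
    have hU'fg := hPfg.of_le hU'P
    have hle : V ^ (n₁ + 2) ≤ P ^ (n₁ + 2) ⊔ P ^ (n₁ + 1) * Z ⊔ U' * P ^ n₁ * W := by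
      refine (hVn n₁).trans (sup_le_sup (le_of_eq ?_) (mul_le_mul' (mul_le_mul' hUU' le_rfl) le_rfl))
      calc P ^ (n₁ + 1) * V = P ^ (n₁ + 1) * (P ⊔ Z) := by rw [← hZ]
        _ = _ := by rw [Submodule.mul_sup, ← pow_succ]
    have e1 := fr_sup (((hPfg.pow _).sup ((hPfg.pow _).mul hZfg))) ((hU'fg.mul (hPfg.pow _)).mul
      (fg_single w)) hle
    have e2 := fr_sup (hPfg.pow (n₁ + 2)) ((hPfg.pow (n₁ + 1)).mul hZfg) le_rfl
    have e3 := fr_mul_single (hU'fg.mul (hPfg.pow n₁)) w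
    have e4 := sym_dim' hPfg hU'P hU'r hsup n₁
    have e5 := sym_dim (d + 2) P hPfg hPr.le (n₁ + 2)
    have e6 := sym_dim (d + 2) P hPfg hPr.le (n₁ + 1)
    have e7 := fr_mul_le (hPfg.pow (n₁ + 1)) c hZfg hZr
    have e8 := hal (n₁ + 1)
    rw [al, hpow, show n₁ + 1 + 1 = n₁ + 2 from rfl, hn₁ (n₁ + 2) (by omega)] at e8
    have e9 := Nat.mul_le_mul_left c e6
    rw [mc_eq] at e4 e5
    rw [mc_eq] at e9
    rw [add_mul, one_mul] at e8
    omega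
  have hD2V : DD V 2 = V ^ 2 := by
    refine le_antisymm (hD2.trans (sup_le hPVV ?_)) (pow_le_DD 2)
    refine Submodule.mul_le.2 fun a ha b hb => ?_
    obtain ⟨k, rfl⟩ := Submodule.mem_span_singleton.1 hb
    rw [mul_smul_comm]
    exact Submodule.smul_mem _ _ (hUw a (hPU ha))
  refine ⟨fun n => le_antisymm ?_ (pow_le_DD _), ?_⟩
  · refine (hgen (n + 1)).trans ?_
    rw [pow_succ, mul_assoc, pow_add]
    refine mul_le_mul' le_rfl ?_
    rw [← hD2V]
    exact (mul_le_mul' V_le_D1 le_rfl).trans (DD_mul_le 1 1)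
  · have := hal 1
    rw [al, hpow, show 1 + 1 = 2 from rfl, hD2V] at this
    rw [al, this, show 2 + (d + 1) = d + 3 by omega, show 1 + (d + 1) = d + 1 + 1 by omega,
      Nat.choose_succ_self_right]

end Tail
end QP

namespace QP
open scoped Polynomial IntermediateField Pointwise
section SS

lemma gen_all {K L : Type} [Field K] [Field L] [Algebra K L] {V : Submodule K L}
    (hV : Fr V) (h1 : DD V 1 = V) (hgen : ∀ n, DD V (n + 1) ≤ V ^ n * DD V 1) :
    ∀ n, DD V n = V ^ n := by
  intro n
  cases n with
  | zero => exact DD_sq_zero hV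
  | succ n =>
    refine le_antisymm ((hgen n).trans ?_) (pow_le_DD _)
    rw [h1, pow_succ]

theorem SThm (d : ℕ) : ∀ {K L : Type} [Field K] [Field L] [Algebra K L] (V : Submodule K L)
    (c : ℕ), Cond V (d + 1) c (c + 2) →
    ((∀ n, DD V n = V ^ n) ∧ (d = 0 → al V 2 = 2 * c + 4)) ∨
    (de V 1 = Module.finrank K V + 1 ∧ (∀ n, DD V (n + 2) = V ^ (n + 2)) ∧
      al V 2 = (d + 3).choose (d + 1) + (c + 1) * (d + 2)) := by
  induction d with
  | zero =>
    intro K L _ _ _ V c hC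
    obtain ⟨t, -, ht⟩ := exists_good hC (Sub0.refl hC.fr)
    have hV := hC.fr
    have hb1 := ht.bb_succ hV 0
    have hble := ht.bb_le hC
    have hrk := hC.rk
    rw [de_zero hV] at hb1
    have hf1 := fdim (ht.DD_fg hV 1)
    have hge : Module.finrank K V ≤ de V 1 := fr_mono (ht.DD_fg hV 1) V_le_D1
    have hb1le := hble 1
    rw [zero_add] at *
    rcases Nat.lt_or_ge (de V 1) (c + 3) with hlt | hge'
    · left
      have hD1 : DD V 1 = V := by
        refine (Submodule.eq_of_le_of_finrank_le V_le_D1 ?_).symm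
        change de V 1 ≤ _
        omega
      have hb1' : bb V t 1 = c + 1 := by omega
      have hsub : SE t V ≤ SE t (V ^ 2) := SE_mono (by
        have := pow_mono_of_one hV.one (show 1 ≤ 2 by omega)
        rwa [pow_one] at this)
      have hfg2 := SE_fg t (hV.fin.pow 2)
      have hfd2 := fdim hfg2
      have hne : ¬ SE t (V ^ 2) ≤ SE t V := by
        intro hle
        have hall : ∀ n, SE t (V ^ (n + 1)) ≤ SE t V := by
          intro n
          induction n with
          | zero => rw [zero_add, pow_one]
          | succ n ih =>
            rw [pow_succ, ← SE_mul]
            refine (mul_le_mul' ih le_rfl).trans ?_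
            rw [SE_mul, ← pow_two]; exact hle
        obtain ⟨n₀, hn₀⟩ := ht.bb_large hC
        obtain ⟨n₁, hn₁⟩ := DD_large hV.one ht.mem ht.gi
        have h2 := hn₀ (max n₀ n₁ + 1) (by have := le_max_left n₀ n₁; omega)
        rw [bb, hn₁ _ (by have := le_max_right n₀ n₁; omega)] at h2
        have h3 := fr_mono (SE_fg t hV.fin) (hall (max n₀ n₁))
        rw [bb, hD1] at hb1'
        omega
      have hlt2 : Module.finrank K⟮t⟯ (SE t V) < Module.finrank K⟮t⟯ (SE t (V ^ 2)) :=
        Submodule.finrank_lt_finrank_of_lt (lt_of_le_not_ge hsub hne)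
      have hb2 := hble 2
      have hb1'' := hb1'
      rw [bb, hD1] at hb1'
      have hfD2 := fdim (SE_fg t (ht.DD_fg hV 2))
      have hSE2 : SE t (V ^ 2) = SE t (DD V 2) := by
        refine Submodule.eq_of_le_of_finrank_le (SE_mono (pow_le_DD 2)) ?_
        change bb V t 2 ≤ _
        omega
      have hD2 : DD V 2 = V ^ 2 := ht.lift_eq hV (n := 1) hSE2.ge (by rw [pow_one, hD1])
      have hb2' : bb V t 2 = c + 2 := by
        have : bb V t 2 = Module.finrank K⟮t⟯ (SE t (V ^ 2)) := by rw [bb, hD2]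
        omega
      refine ⟨?_, fun _ => ?_⟩
      · intro n
        induction n with
        | zero => exact DD_sq_zero hV
        | succ n ih =>
          match n, ih with
          | 0, _ => rw [zero_add, pow_one]; exact hD1
          | 1, _ => exact hD2
          | n + 2, ih =>
            refine le_antisymm (fun b hb => ?_) (pow_le_DD _)
            obtain ⟨u, hu, w, hw, rfl⟩ := ht.bb_eq hV (n := n + 2) (by
              have h5 := hble (n + 2 + 1)
              have h6 := ht.bb_mono hV (show 2 ≤ n + 2 by omega)
              omega) b hb
            rw [ih] at hu hw
            refine add_mem (pow_mono_of_one hV.one (by omega) hu) ?_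
            rw [pow_succ' V (n + 2)]
            exact Submodule.mul_mem_mul ht.mem hw
      · have h7 := ht.bb_succ hV 1
        have h8 : de V 2 = al V 2 := by rw [de, hD2, al]
        have h9 : de V 1 = c + 2 := by omega
        rw [show 1 + 1 = 2 from rfl] at h7
        omega
    · right
      have hb1' : bb V t 1 = c + 2 := by omega
      have hstep : ∀ n, ∀ b ∈ DD V (n + 1 + 1), ∃ u ∈ DD V (n + 1), ∃ w ∈ DD V (n + 1),
          b = u + t * w := fun n => ht.bb_eq hV (by
            have h5 := hble (n + 1 + 1)
            have h6 := ht.bb_mono hV (show 1 ≤ n + 1 by omega)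
            omega)
      have hgen : ∀ n, DD V (n + 1) ≤ V ^ n * DD V 1 := by
        intro n
        induction n with
        | zero => rw [zero_add, pow_zero, one_mul]
        | succ n ih =>
          intro b hb
          obtain ⟨u, hu, w, hw, rfl⟩ := hstep n b hb
          refine add_mem ((mul_le_mul' (pow_mono_of_one hV.one (by omega)) le_rfl : V ^ n * DD V 1 ≤ _)
            (ih hu)) ?_
          rw [pow_succ', mul_assoc]
          exact Submodule.mul_mem_mul ht.mem (ih hw)
      have h1 : de V 1 = Module.finrank K V + 1 := by omega
      obtain ⟨ha, hb⟩ := tail (d := 0) hC ht h1 hgen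
      exact ⟨h1, ha, hb⟩
  | succ d ih =>
    intro K L _ _ _ V c hC
    obtain ⟨t, -, ht, hC'⟩ := estep hC (Sub0.refl hC.fr)
    have hV := hC.fr
    obtain ⟨t', -, ht'⟩ := exists_good hC' (Sub0.refl hC'.fr)
    have hrk := hC.rk
    have hrk' := hC'.rk
    have hD' : (∀ n, DD (SE t V) (n + 2) = SE t V ^ (n + 2)) ∧
        de (SE t V) 1 ≤ Module.finrank K⟮t⟯ (SE t V) + 1 := by
      rcases ih (SE t V) c hC' with ⟨h1, -⟩ | ⟨h1, h2, -⟩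
      · refine ⟨fun n => h1 _, ?_⟩
        rw [de, h1, pow_one]; omega
      · exact ⟨h2, h1.le⟩
    obtain ⟨hD', hd1⟩ := hD'
    have hgen : ∀ n, DD V (n + 1) ≤ V ^ n * DD V 1 := by
      intro n
      induction n with
      | zero => rw [zero_add, pow_zero, one_mul]
      | succ n ihn =>
        obtain ⟨τ, hτ⟩ := ht.lift hV (n := n + 1) (pow_le_DD (n + 1 + 1)) ((SE_DD t V _).trans (by
          rw [hD' n, SE_pow]))
        intro b hb
        obtain ⟨u, hu, w, hw, rfl⟩ := hτ b hb
        refine add_mem ?_ ?_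
        · rw [pow_succ] at hu
          exact (mul_le_mul' le_rfl V_le_D1 : V ^ (n + 1) * V ≤ _) hu
        · rw [pow_succ', mul_assoc]
          refine Submodule.mul_mem_mul (sub_mem ht.mem ?_) (ihn hw)
          rw [Algebra.algebraMap_eq_smul_one]
          exact V.smul_mem _ hV.one
    have hb1 := ht.bb_succ hV 0
    rw [de_zero hV, zero_add] at hb1
    have hle : bb V t 1 ≤ de (SE t V) 1 :=
      fr_mono (ht'.DD_fg hC'.fr 1) (SE_DD t V 1)
    have hge : Module.finrank K V ≤ de V 1 := fr_mono (ht.DD_fg hV 1) V_le_D1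
    rcases Nat.eq_or_lt_of_le hge with heq | hlt
    · left
      have hf1 := fdim (ht.DD_fg hV 1)
      have hD1 : DD V 1 = V := (Submodule.eq_of_le_of_finrank_le V_le_D1 heq.ge).symm
      exact ⟨gen_all hV hD1 hgen, fun h => by omega⟩
    · right
      have h1 : de V 1 = Module.finrank K V + 1 := by omega
      obtain ⟨ha, hb⟩ := tail hC ht h1 hgen
      exact ⟨h1, ha, hb⟩

end SS
end QP

namespace QP
section RelDepth
variable {R : Type} [CommRing R]

/-- `x` is a nonzerodivisor modulo `I`. -/
def Nzd (I : Ideal R) (x : R) : Prop := ∀ y, x * y ∈ I → y ∈ I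

/-- The depth of `R / I` with respect to `J` is `n`. -/
def Rel (J : Ideal R) : ℕ → Ideal R → Prop
  | 0, I => ∃ y, y ∉ I ∧ ∀ a ∈ J, a * y ∈ I
  | n + 1, I => ∃ x ∈ J, Nzd I x ∧ Rel J n (I ⊔ Ideal.span {x})

lemma mem_sup1 {I : Ideal R} {x y : R} :
    y ∈ I ⊔ Ideal.span {x} ↔ ∃ b, y - x * b ∈ I := by
  rw [Submodule.mem_sup]
  constructor
  · rintro ⟨i, hi, s, hs, rfl⟩
    obtain ⟨b, rfl⟩ := Ideal.mem_span_singleton'.1 hs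
    exact ⟨b, by convert hi using 1; ring⟩
  · rintro ⟨b, hb⟩
    exact ⟨_, hb, x * b, Ideal.mul_mem_right _ _ (Ideal.mem_span_singleton_self x), by ring⟩

lemma avoid3 [IsNoetherianRing R] {J I1 I2 I3 : Ideal R} (h1 : ¬ Rel J 0 I1)
    (h2 : ¬ Rel J 0 I2) (h3 : ¬ Rel J 0 I3) :
    ∃ z ∈ J, Nzd I1 z ∧ Nzd I2 z ∧ Nzd I3 z := by
  have key : ∀ I : Ideal R, ¬ Rel J 0 I → ∀ f : (R ⧸ J) →ₗ[R] (R ⧸ I), f = 0 := by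
    intro I hI f
    by_contra hf
    apply hI
    obtain ⟨y, hy⟩ := Ideal.Quotient.mk_surjective (f 1)
    have h1 : f 1 ≠ 0 := by
      intro h
      apply hf
      ext
      simpa using h
    refine ⟨y, fun h => h1 ?_, fun a ha => ?_⟩
    · rw [← hy]; exact Ideal.Quotient.eq_zero_iff_mem.2 h
    · rw [← Ideal.Quotient.eq_zero_iff_mem, map_mul, hy]
      have : (a • (1 : R ⧸ J)) = 0 := by
        rw [Algebra.smul_def, mul_one]
        exact Ideal.Quotient.eq_zero_iff_mem.2 ha
      have h := f.map_smul a 1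
      rw [this, map_zero] at h
      rw [h]; rfl
  have hs : Subsingleton ((R ⧸ J) →ₗ[R] ((R ⧸ I1) × (R ⧸ I2) × (R ⧸ I3))) := by
    refine subsingleton_of_forall_eq 0 fun f => ?_
    have e1 := key I1 h1 ((LinearMap.fst R _ _).comp f)
    have e2 := key I2 h2 ((LinearMap.fst R _ _).comp ((LinearMap.snd R _ _).comp f))
    have e3 := key I3 h3 ((LinearMap.snd R _ _).comp ((LinearMap.snd R _ _).comp f))
    refine LinearMap.ext fun x => ?_
    refine Prod.ext (LinearMap.congr_fun e1 x) (Prod.ext (LinearMap.congr_fun e2 x) (LinearMap.congr_fun e3 x))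
  obtain ⟨z, hz, hreg⟩ := IsSMulRegular.subsingleton_linearMap_iff.1 hs
  rw [Ideal.annihilator_quotient] at hz
  refine ⟨z, hz, ?_, ?_, ?_⟩
  · intro y hy
    have := @hreg ((Ideal.Quotient.mk _ y), 0, 0) 0 (by
      simp only [Prod.smul_mk, smul_zero]
      exact Prod.ext (Ideal.Quotient.eq_zero_iff_mem.2 hy) rfl)
    exact Ideal.Quotient.eq_zero_iff_mem.1 (congrArg Prod.fst this)
  · intro y hy
    have := @hreg (0, (Ideal.Quotient.mk _ y), 0) 0 (by
      simp only [Prod.smul_mk, smul_zero]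
      exact Prod.ext rfl (Prod.ext (Ideal.Quotient.eq_zero_iff_mem.2 hy) rfl))
    exact Ideal.Quotient.eq_zero_iff_mem.1 (congrArg (fun p => p.2.1) this)
  · intro y hy
    have := @hreg (0, 0, (Ideal.Quotient.mk _ y)) 0 (by
      simp only [Prod.smul_mk, smul_zero]
      exact Prod.ext rfl (Prod.ext rfl (Ideal.Quotient.eq_zero_iff_mem.2 hy)))
    exact Ideal.Quotient.eq_zero_iff_mem.1 (congrArg (fun p => p.2.2) this)

lemma Nzd.swap {I : Ideal R} {x z : R} (hx : Nzd I x) (hz : Nzd (I ⊔ Ideal.span {x}) z) :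
    Nzd (I ⊔ Ideal.span {z}) x := by
  intro y hy
  obtain ⟨b, hb⟩ := mem_sup1.1 hy
  have h1 : z * b ∈ I ⊔ Ideal.span {x} := by
    rw [mem_sup1]
    refine ⟨y, ?_⟩
    have := I.neg_mem hb
    convert this using 1; ring
  obtain ⟨c, hc⟩ := mem_sup1.1 (hz b h1)
  rw [mem_sup1]
  refine ⟨c, hx _ ?_⟩
  have : x * (y - z * c) = (x * y - z * b) + z * (b - x * c) := by ring
  rw [this]
  exact I.add_mem hb (I.mul_mem_left _ hc)

lemma Nzd.no0 {I J : Ideal R} {x : R} (hx : x ∈ J) (h : Nzd I x) : ¬ Rel J 0 I := by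
  rintro ⟨y, hy, hJ⟩
  exact hy (h y (hJ x hx))

lemma exch0 {I J : Ideal R} {x l : R} (hl : l ∈ J) (hx : Nzd I x) (hnl : Nzd I l)
    (h : Rel J 0 (I ⊔ Ideal.span {x})) : Rel J 0 (I ⊔ Ideal.span {l}) := by
  obtain ⟨y, hy, hJ⟩ := h
  obtain ⟨y', hy'⟩ := mem_sup1.1 (hJ l hl)
  refine ⟨y', fun hm => hy ?_, fun a ha => ?_⟩
  · obtain ⟨b, hb⟩ := mem_sup1.1 hm
    rw [mem_sup1]
    refine ⟨b, hnl _ ?_⟩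
    have : l * (y - x * b) = (l * y - x * y') + x * (y' - l * b) := by ring
    rw [this]
    exact I.add_mem hy' (I.mul_mem_left _ hb)
  · obtain ⟨b, hb⟩ := mem_sup1.1 (hJ a ha)
    rw [mem_sup1]
    refine ⟨b, hx _ ?_⟩
    have : x * (a * y' - l * b) = l * (a * y - x * b) - a * (l * y - x * y') := by ring
    rw [this]
    exact I.sub_mem (I.mul_mem_left _ hb) (I.mul_mem_left _ hy')

theorem exch [IsNoetherianRing R] {J : Ideal R} : ∀ (n : ℕ) (I : Ideal R), Rel J (n + 1) I →
    ∀ l ∈ J, Nzd I l → Rel J n (I ⊔ Ideal.span {l}) := by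
  intro n
  induction n with
  | zero =>
    rintro I ⟨x, hx, hxn, hr⟩ l hl hln
    exact exch0 hl hxn hln hr
  | succ n ih =>
    rintro I ⟨x, hx, hxn, hr⟩ l hl hln
    have n1 : ¬ Rel J 0 I := hxn.no0 hx
    have n2 : ¬ Rel J 0 (I ⊔ Ideal.span {x}) := by
      obtain ⟨x2, hx2, hn2, -⟩ := hr
      exact hn2.no0 hx2
    have n3 : ¬ Rel J 0 (I ⊔ Ideal.span {l}) := fun h => n2 (exch0 hx hln hxn h)
    obtain ⟨z, hz, z1, z2, z3⟩ := avoid3 n1 n2 n3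
    have r1 := ih _ hr z hz z2
    have r2 : Rel J (n + 1) (I ⊔ Ideal.span {z}) :=
      ⟨x, hx, hxn.swap z2, by rwa [sup_right_comm]⟩
    have r3 := ih _ r2 l hl (hln.swap z3)
    exact ⟨z, hz, z3, by rwa [sup_right_comm]⟩

lemma Rel.map {R' : Type} [CommRing R'] (f : R →+* R') (hf : Function.Surjective f)
    {J : Ideal R} : ∀ (n : ℕ) (I : Ideal R), RingHom.ker f ≤ I → Rel J n I →
    Rel (J.map f) n (I.map f) := by
  have mem : ∀ I : Ideal R, RingHom.ker f ≤ I → ∀ y, f y ∈ I.map f ↔ y ∈ I := by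
    intro I hI y
    constructor
    · intro h
      obtain ⟨x, hx, e⟩ := (Ideal.mem_map_iff_of_surjective f hf).1 h
      have : y - x ∈ I := hI (by rw [RingHom.mem_ker, map_sub, e, sub_self])
      simpa using I.add_mem this hx
    · exact Ideal.mem_map_of_mem f
  intro n
  induction n with
  | zero =>
    rintro I hI ⟨y, hy, hJ⟩
    refine ⟨f y, by rwa [mem I hI], fun a ha => ?_⟩
    obtain ⟨a, ha', rfl⟩ := (Ideal.mem_map_iff_of_surjective f hf).1 ha
    rw [← map_mul, mem I hI]
    exact hJ a ha'
  | succ n ih =>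
    rintro I hI ⟨x, hx, hn, hr⟩
    refine ⟨f x, Ideal.mem_map_of_mem f hx, fun y hy => ?_, ?_⟩
    · obtain ⟨y, rfl⟩ := hf y
      rw [← map_mul, mem I hI] at hy
      rw [mem I hI]
      exact hn y hy
    · have := ih _ (hI.trans le_sup_left) hr
      rwa [Ideal.map_sup, Ideal.map_span, Set.image_singleton] at this

/-- regular sequences modulo `I`. -/
def RegI : Ideal R → List R → Prop
  | _, [] => True
  | I, x :: rs => Nzd I x ∧ RegI (I ⊔ Ideal.span {x}) rs

lemma span_cons (x : R) (rs : List R) (I : Ideal R) :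
    I ⊔ Ideal.span {y | y ∈ x :: rs} = (I ⊔ Ideal.span {x}) ⊔ Ideal.span {y | y ∈ rs} := by
  rw [sup_assoc, ← Ideal.span_union]
  congr 2
  ext y; simp

lemma RegI_iff (rs : List R) : ∀ I : Ideal R, RegI I rs ↔
    ∀ (i : Fin rs.length) (y : R), rs.get i * y ∈ I ⊔ Ideal.span {x | x ∈ rs.take i.1} →
      y ∈ I ⊔ Ideal.span {x | x ∈ rs.take i.1} := by
  induction rs with
  | nil => intro I; simp [RegI]
  | cons x rs ih =>
    intro I
    rw [RegI, ih]
    constructor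
    · rintro ⟨h1, h2⟩ ⟨i, hi⟩ y
      rcases i with _ | i
      · simpa using h1 y
      · have := h2 ⟨i, by simpa using hi⟩ y
        simp only [List.take_succ_cons, span_cons]
        exact this
    · intro h
      refine ⟨fun y hy => ?_, fun ⟨i, hi⟩ y hy => ?_⟩
      · have := h ⟨0, by simp⟩ y
        simp at this
        exact this hy
      · have := h ⟨i + 1, by simpa using hi⟩ y
        simp only [List.take_succ_cons, span_cons] at this
        exact this hy

lemma RegI_append (rs : List R) (z : R) : ∀ I : Ideal R, RegI I (rs ++ [z]) ↔
    RegI I rs ∧ Nzd (I ⊔ Ideal.span {x | x ∈ rs}) z := by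
  induction rs with
  | nil => intro I; simp [RegI]
  | cons x rs ih =>
    intro I
    rw [List.cons_append, RegI, ih, RegI, span_cons, and_assoc]

lemma Rel_of_RegI {J : Ideal R} (rs : List R) : ∀ I : Ideal R, RegI I rs → (∀ x ∈ rs, x ∈ J) →
    Rel J 0 (I ⊔ Ideal.span {x | x ∈ rs}) → Rel J rs.length I := by
  induction rs with
  | nil => intro I _ _ h; simpa using h
  | cons x rs ih =>
    intro I h1 h2 h3
    rw [span_cons] at h3
    exact ⟨x, h2 x (by simp), h1.1, ih _ h1.2 (fun y hy => h2 y (by simp [hy])) h3⟩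

lemma Rel_of_max [IsNoetherianRing R] {J : Ideal R} {t : ℕ}
    (h : ∃ rs : List R, rs.length = t ∧ (∀ x ∈ rs, x ∈ J) ∧ AMD.IsRegSeq rs)
    (hmax : ∀ rs : List R, (∀ x ∈ rs, x ∈ J) → AMD.IsRegSeq rs → rs.length ≤ t) :
    Rel J t (⊥ : Ideal R) := by
  have hreg : ∀ rs : List R, AMD.IsRegSeq rs ↔ RegI ⊥ rs := by
    intro rs
    rw [RegI_iff]
    simp only [bot_sup_eq]
    rfl
  obtain ⟨rs, rfl, hJ, hr⟩ := h
  rw [hreg] at hr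
  refine Rel_of_RegI rs ⊥ hr hJ ?_
  by_contra hc
  obtain ⟨z, hz, hn, -⟩ := avoid3 hc hc hc
  have := hmax (rs ++ [z]) (by
    intro x hx
    rcases List.mem_append.1 hx with h | h
    · exact hJ x h
    · simp at h; rwa [h]) (by rw [hreg, RegI_append]; exact ⟨hr, hn⟩)
  simp at this

end RelDepth
end QP

namespace QP
open scoped Polynomial
section BaseCh
variable (K R : Type) [Field K] [CommRing R] [Algebra K R]

/-- The multiplicative set of nonzero polynomials over the ground field. -/
def MK : Submonoid R[X] :=
  (nonZeroDivisors K[X]).map (Polynomial.mapRingHom (algebraMap K R))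

/-- The ring `K(T) ⊗ R`. -/
abbrev BC : Type := Localization (MK K R)

/-- The canonical map `R → K(T) ⊗ R`. -/
def bi : R →+* BC K R := (algebraMap R[X] (BC K R)).comp Polynomial.C

variable {K R}

lemma BC_mem (I : Ideal R) (P : R[X]) :
    algebraMap R[X] (BC K R) P ∈ I.map (bi K R) ↔ ∀ j, P.coeff j ∈ I := by
  have e : I.map (bi K R) = (I.map (Polynomial.C : R →+* R[X])).map (algebraMap R[X] (BC K R)) := by
    rw [Ideal.map_map]; rfl
  rw [e, IsLocalization.algebraMap_mem_map_algebraMap_iff (MK K R)]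
  simp only [Ideal.mem_map_C_iff]
  constructor
  · rintro ⟨m, ⟨p, hp, rfl⟩, hm⟩ j
    have hp0 : p ≠ 0 := nonZeroDivisors.ne_zero hp
    let φ := Ideal.Quotient.mk I
    have hmon : (p * Polynomial.C p.leadingCoeff⁻¹).Monic := Polynomial.monic_mul_leadingCoeff_inv hp0
    have hmon2 := (hmon.map (algebraMap K R)).map φ
    have h0 : (((p * Polynomial.C p.leadingCoeff⁻¹).map (algebraMap K R)).map φ) * (P.map φ) = 0 := by
      ext i
      have h1 : ((p.map (algebraMap K R)) * P).map φ = 0 := by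
        ext i
        rw [Polynomial.coeff_map, Polynomial.coeff_zero]
        exact Ideal.Quotient.eq_zero_iff_mem.2 (hm i)
      rw [Polynomial.map_mul] at h1
      rw [Polynomial.map_mul, Polynomial.map_mul, mul_right_comm, h1, zero_mul]
    have h2 := (hmon2.mul_right_eq_zero_iff).1 h0
    have := congrArg (fun q => q.coeff j) h2
    simp only [Polynomial.coeff_map, Polynomial.coeff_zero] at this
    exact Ideal.Quotient.eq_zero_iff_mem.1 this
  · intro h
    exact ⟨1, one_mem _, by simpa using h⟩

lemma BC_rep (b : BC K R) : ∃ (P : R[X]) (u : BC K R), IsUnit u ∧ b * u = algebraMap R[X] (BC K R) P := by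
  obtain ⟨⟨P, m⟩, h⟩ := IsLocalization.surj (MK K R) b
  exact ⟨P, _, IsLocalization.map_units (BC K R) m, h⟩

lemma Nzd.bc {I : Ideal R} {x : R} (h : Nzd I x) : Nzd (I.map (bi K R)) (bi K R x) := by
  intro b hb
  obtain ⟨P, u, hu, e⟩ := BC_rep b
  have h1 : algebraMap R[X] (BC K R) (Polynomial.C x * P) ∈ I.map (bi K R) := by
    rw [map_mul, ← e, ← mul_assoc]
    exact Ideal.mul_mem_right _ _ hb
  rw [BC_mem] at h1
  have h2 : algebraMap R[X] (BC K R) P ∈ I.map (bi K R) := by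
    rw [BC_mem]
    intro j
    apply h
    simpa using h1 j
  rw [← e] at h2
  exact (Ideal.mul_unit_mem_iff_mem _ hu).1 h2

theorem Rel.bc {J : Ideal R} : ∀ (n : ℕ) (I : Ideal R), Rel J n I →
    Rel (J.map (bi K R)) n (I.map (bi K R)) := by
  intro n
  induction n with
  | zero =>
    rintro I ⟨y, hy, hJ⟩
    refine ⟨bi K R y, fun h => hy ?_, fun a ha => ?_⟩
    · have := (BC_mem I (Polynomial.C y)).1 h 0
      simpa using this
    · rw [Ideal.map] at ha
      refine Submodule.span_induction (p := fun a _ => a * bi K R y ∈ I.map (bi K R)) ?_ ?_ ?_ ?_ ha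
      · rintro _ ⟨a, ha, rfl⟩
        rw [← map_mul]
        exact Ideal.mem_map_of_mem _ (hJ a ha)
      · simp
      · intro a b _ _ ha hb
        rw [add_mul]; exact add_mem ha hb
      · intro r a _ ha
        rw [smul_eq_mul, mul_assoc]; exact Ideal.mul_mem_left _ _ ha
  | succ n ih =>
    rintro I ⟨x, hx, hn, hr⟩
    refine ⟨bi K R x, Ideal.mem_map_of_mem _ hx, hn.bc, ?_⟩
    have := ih _ hr
    rwa [Ideal.map_sup, Ideal.map_span, Set.image_singleton] at this

lemma BC_noeth [IsNoetherianRing R] : IsNoetherianRing (BC K R) :=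
  IsLocalization.isNoetherianRing (MK K R) _ inferInstance

/-- Descent of depth along a surjection from `K(T) ⊗ R` with principal kernel. -/
theorem Rel.descend [IsNoetherianRing R] [IsDomain R] {J : Ideal R} {n : ℕ}
    (h : Rel J (n + 1) (⊥ : Ideal R)) {R' : Type} [CommRing R'] (ψ : R[X] →+* R')
    (hM : ∀ m ∈ MK K R, IsUnit (ψ m)) (hs : ∀ b : R', ∃ P : R[X], ∃ m ∈ MK K R, b * ψ m = ψ P)
    (l : R[X]) (hl0 : l ≠ 0) (hlJ : ∀ j, l.coeff j ∈ J)
    (hk : ∀ P, ψ P = 0 ↔ l ∣ P) : Rel (J.map (ψ.comp Polynomial.C)) n (⊥ : Ideal R') := by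
  have := BC_noeth (K := K) (R := R)
  let Ψ : BC K R →+* R' := IsLocalization.lift (M := MK K R) (g := ψ) (fun m => hM m m.2)
  have hΨ : ∀ P, Ψ (algebraMap R[X] (BC K R) P) = ψ P := fun P => IsLocalization.lift_eq _ P
  have hsurj : Function.Surjective Ψ := by
    intro b
    obtain ⟨P, m, hm, e⟩ := hs b
    obtain ⟨v, hv⟩ := (IsLocalization.map_units (BC K R) ⟨m, hm⟩)
    refine ⟨algebraMap _ _ P * ((v⁻¹ : (BC K R)ˣ) : BC K R), ?_⟩
    have h1 : Ψ (v : BC K R) = ψ m := by rw [hv]; exact hΨ m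
    rw [map_mul, hΨ, ← e, ← h1, mul_assoc, ← map_mul, Units.mul_inv, map_one, mul_one]
  have r1 := Rel.bc (K := K) _ _ h
  rw [Ideal.map_bot] at r1
  have hinj : ∀ P, algebraMap R[X] (BC K R) P = 0 → P = 0 := by
    intro P hP
    have := (BC_mem (K := K) (⊥ : Ideal R) P).1 (by rw [hP]; exact zero_mem _)
    ext j; simpa using this j
  have hlm : algebraMap R[X] (BC K R) l ∈ J.map (bi K R) := (BC_mem J l).2 hlJ
  have r2 := exch n _ r1 (algebraMap R[X] (BC K R) l) hlm (by
    intro b hb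
    obtain ⟨P, u, hu, e⟩ := BC_rep b
    rw [Ideal.mem_bot] at hb ⊢
    have : algebraMap R[X] (BC K R) (l * P) = 0 := by
      rw [map_mul, ← e, ← mul_assoc, hb, zero_mul]
    have h2 := (mul_eq_zero.1 (hinj _ this)).resolve_left hl0
    rw [h2, map_zero] at e
    exact (hu.mul_left_eq_zero).1 e)
  have r3 := r2.map Ψ hsurj _ _ (by
    intro b hb
    rw [RingHom.mem_ker] at hb
    obtain ⟨P, u, hu, e⟩ := BC_rep b
    have : ψ P = 0 := by rw [← hΨ, ← e, map_mul, hb, zero_mul]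
    obtain ⟨Q, rfl⟩ := (hk P).1 this
    rw [bot_sup_eq]
    refine (Ideal.mul_unit_mem_iff_mem _ hu).1 ?_
    rw [e, map_mul]
    exact Ideal.mul_mem_right _ _ (Ideal.mem_span_singleton_self _))
  rw [bot_sup_eq, Ideal.map_span, Set.image_singleton, hΨ, (hk l).2 dvd_rfl,
    Ideal.map_map] at r3
  have e1 : Ψ.comp (bi K R) = ψ.comp Polynomial.C := by
    ext x; exact hΨ _
  rw [e1] at r3
  simpa using r3

end BaseCh
end QP

namespace QP
open scoped Polynomial IntermediateField Pointwise
section EStepDepth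
variable {K L : Type} [Field K] [Field L] [Algebra K L]

lemma coeff_swap (p : L[X][X]) (m n : ℕ) :
    ((Polynomial.Bivariate.swap p).coeff n).coeff m = (p.coeff m).coeff n := by
  induction p using Polynomial.induction_on' with
  | add p q hp hq => simp [hp, hq]
  | monomial i f =>
    induction f using Polynomial.induction_on' with
    | add p q hp hq => 
      rw [map_add (Polynomial.monomial i), map_add]
      simp only [Polynomial.coeff_add]
      rw [hp, hq]
    | monomial j a =>
      rw [Polynomial.Bivariate.swap_monomial_monomial]
      simp only [Polynomial.coeff_monomial]
      split_ifs <;> simp_all [Polynomial.coeff_monomial]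

lemma eval_swap (p : L[X][X]) (t : L) (n : ℕ) :
    (p.eval (Polynomial.C t)).coeff n = ((Polynomial.Bivariate.swap p).coeff n).eval t := by
  induction p using Polynomial.induction_on' with
  | add p q hp hq => simp [hp, hq]
  | monomial i f =>
    induction f using Polynomial.induction_on' with
    | add p q hp hq =>
      rw [map_add (Polynomial.monomial i), map_add]
      simp only [Polynomial.coeff_add, Polynomial.eval_add]
      rw [hp, hq]
    | monomial j a =>
      rw [Polynomial.Bivariate.swap_monomial_monomial]
      simp only [Polynomial.coeff_monomial, Polynomial.eval_monomial, ← Polynomial.C_pow,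
        Polynomial.coeff_mul_C]
      split_ifs <;> simp

/-- The divisibility lemma behind the kernel computation. -/
lemma key2 {t : L} {F : ℕ → Submodule K L} (hF : Fil t F) (hF0 : F 0 = ⊥) (P : L[X][X])
    (hP : ∀ j n, (P.coeff j).coeff n ∈ F (n + 1)) (h0 : P.eval (Polynomial.C t) = 0) :
    ∃ Q : L[X][X], (∀ j n, (Q.coeff j).coeff n ∈ F (n + 1)) ∧
      P = (Polynomial.X - Polynomial.C (Polynomial.C t)) * (Polynomial.C Polynomial.X * Q) := by
  let P' := Polynomial.Bivariate.swap P
  have hev : ∀ n, (P'.coeff n).eval t = 0 := by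
    intro n
    rw [← eval_swap, h0, Polynomial.coeff_zero]
  have hcf : ∀ n i, (P'.coeff n).coeff i ∈ F (n + 1) := by
    intro n i
    rw [coeff_swap]; exact hP i n
  choose Qn hQ1 hQ2 using fun n => hF.key (P'.coeff n) (hcf n) (hev n)
  have hdvd : Polynomial.C (Polynomial.X - Polynomial.C t) ∣ P' :=
    (Polynomial.C_dvd_iff_dvd_coeff _ _).2 fun n => ⟨_, hQ2 n⟩
  obtain ⟨G, hG⟩ := hdvd
  have hne : (Polynomial.X - Polynomial.C t : L[X]) ≠ 0 := Polynomial.X_sub_C_ne_zero t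
  have hGn : ∀ n, G.coeff n = Qn n := by
    intro n
    have h1 : P'.coeff n = (Polynomial.X - Polynomial.C t) * G.coeff n := by
      rw [hG, Polynomial.coeff_C_mul]
    rw [hQ2 n] at h1
    exact (mul_left_cancel₀ hne h1).symm
  have hG0 : G.coeff 0 = 0 := by
    ext i
    have := hQ1 0 i
    rw [hF0, Submodule.mem_bot] at this
    rw [hGn, this]; simp
  have hGX : G = Polynomial.X * G.divX := by
    conv_lhs => rw [← Polynomial.X_mul_divX_add G, hG0, map_zero, add_zero]
  refine ⟨Polynomial.Bivariate.swap G.divX, ?_, ?_⟩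
  · intro j n
    rw [coeff_swap, Polynomial.coeff_divX, hGn]
    exact hQ1 _ _
  · have : P = Polynomial.Bivariate.swap P' := (Polynomial.Bivariate.swap_swap_apply P).symm
    rw [this, hG]
    conv_lhs => rw [hGX]
    rw [map_mul, map_mul]
    rw [Polynomial.Bivariate.swap_C, Polynomial.Bivariate.swap_Y]
    simp

variable (t : L) (V : Submodule K L)

lemma t_mem_SE0 : t ∈ SE t V ^ 0 := by
  rw [pow_zero, Submodule.mem_one]
  exact ⟨⟨t, IntermediateField.mem_adjoin_simple_self K t⟩, rfl⟩

/-- The inclusion of Rees algebras. -/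
def incl : AA V →+* AA (SE t V) where
  toFun p := ⟨(p : L[X]), fun n => by rw [SE_pow]; exact le_SE (p.2 n)⟩
  map_one' := rfl
  map_mul' _ _ := rfl
  map_zero' := rfl
  map_add' _ _ := rfl

/-- The specialization map. -/
def psi : (AA V)[X] →+* AA (SE t V) :=
  Polynomial.eval₂RingHom (incl t V) (mo 0 t (t_mem_SE0 t V))

lemma psi_coe (P : (AA V)[X]) :
    (psi t V P : L[X]) = (P.map ((AA V).val : AA V →+* L[X])).eval (Polynomial.C t) := by
  rw [Polynomial.eval_map]
  have := Polynomial.hom_eval₂ P (incl t V) ((AA (SE t V)).val : AA (SE t V) →+* L[X])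
    (mo 0 t (t_mem_SE0 t V))
  exact this

lemma psi_scalar (p : K[X]) :
    (psi t V (p.map (algebraMap K (AA V))) : L[X]) = Polynomial.C (Polynomial.aeval t p) := by
  rw [psi_coe, Polynomial.map_map, Polynomial.eval_map]
  have := Polynomial.hom_eval₂ p (algebraMap K L) (Polynomial.C : L →+* L[X]) t
  rw [Polynomial.aeval_def, this]
  rfl

end EStepDepth
end QP

namespace QP
open scoped Polynomial IntermediateField Pointwise
section EStepDepth2
variable {K L : Type} [Field K] [Field L] [Algebra K L]

lemma psi_C (t : L) (V : Submodule K L) : (psi t V).comp Polynomial.C = incl t V := by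
  refine RingHom.ext fun x => ?_
  simp [psi]

lemma map_mm (t : L) (V : Submodule K L) : (mm V).map (incl t V) = mm (SE t V) := by
  apply le_antisymm
  · rw [Ideal.map_le_iff_le_comap]
    intro p hp
    exact hp
  · refine mm_le_of ?_
    intro v hv
    suffices H : ∃ y : AA (SE t V), y ∈ (mm V).map (incl t V) ∧ (y : L[X]) = Polynomial.monomial 1 v by
      obtain ⟨y, hy, e⟩ := H
      have : y = mo 1 v hv := Subtype.ext e
      rwa [← this]
    have hv' := hv
    rw [pow_one] at hv'
    induction hv' using Submodule.span_induction with
    | mem x hx =>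
      exact ⟨incl t V (mo 1 x (by simpa using hx)),
        Ideal.mem_map_of_mem _ (mo_mem_mm one_ne_zero _), rfl⟩
    | zero => exact ⟨0, zero_mem _, by simp⟩
    | add x y hx hy h1 h2 =>
      obtain ⟨p, hp, ep⟩ := h1 (by simpa using hx)
      obtain ⟨q, hq, eq⟩ := h2 (by simpa using hy)
      exact ⟨p + q, add_mem hp hq, by simp [ep, eq]⟩
    | smul a x hx h1 =>
      obtain ⟨p, hp, ep⟩ := h1 (by simpa using hx)
      refine ⟨algebraMap K⟮t⟯ (AA (SE t V)) a * p, Ideal.mul_mem_left _ _ hp, ?_⟩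
      rw [← Algebra.smul_def, ← Polynomial.smul_monomial, ← ep]; rfl

lemma MK_mem_iff {R : Type} [CommRing R] [Algebra K R] {m : R[X]} : m ∈ MK K R ↔
    ∃ p : K[X], p ≠ 0 ∧ p.map (algebraMap K R) = m := by
  constructor
  · rintro ⟨p, hp, rfl⟩
    exact ⟨p, nonZeroDivisors.ne_zero hp, rfl⟩
  · rintro ⟨p, hp, rfl⟩
    exact ⟨p, mem_nonZeroDivisors_of_ne_zero hp, rfl⟩

lemma E_frac (t : L) (a : K⟮t⟯) : ∃ p q : K[X], q ≠ 0 ∧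
    (a : L) * Polynomial.aeval t q = Polynomial.aeval t p := by
  obtain ⟨p, q, h⟩ := (IntermediateField.mem_adjoin_simple_iff K (a : L)).1 a.2
  by_cases hq : Polynomial.aeval t q = 0
  · refine ⟨0, 1, one_ne_zero, ?_⟩
    rw [h, hq]; simp
  · refine ⟨p, q, ?_, ?_⟩
    · rintro rfl; simp at hq
    · rw [h, div_mul_cancel₀ _ hq]

/-- the set of elements which become specializations after clearing denominators -/
lemma psi_surj (t : L) (V : Submodule K L) (b : AA (SE t V)) :
    ∃ P : (AA V)[X], ∃ m ∈ MK K (AA V), b * psi t V m = psi t V P := by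
  let T : AddSubmonoid (AA (SE t V)) :=
    { carrier := {b | ∃ P : (AA V)[X], ∃ m ∈ MK K (AA V), b * psi t V m = psi t V P}
      zero_mem' := ⟨0, 1, one_mem _, by simp⟩
      add_mem' := by
        rintro a b ⟨P, m, hm, e⟩ ⟨P', m', hm', e'⟩
        refine ⟨P * m' + P' * m, m * m', mul_mem hm hm', ?_⟩
        rw [map_mul, map_add, map_mul, map_mul, ← e, ← e']
        ring }
  suffices H : b ∈ T from H
  rw [AA_sum b]
  refine sum_mem fun i _ => ?_
  have gen : ∀ (w : L) (hi : w ∈ SE t V ^ i), mo i w hi ∈ T := ?_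
  · exact gen _ _
  intro w hi
  suffices H : ∃ y : AA (SE t V), y ∈ T ∧ (y : L[X]) = Polynomial.monomial i w by
    obtain ⟨y, hy, e⟩ := H
    have : y = mo i w hi := Subtype.ext e
    rwa [← this]
  rw [SE_pow] at hi
  induction hi using Submodule.span_induction with
  | mem x hx =>
    refine ⟨incl t V (mo i x hx), ⟨Polynomial.C (mo i x hx), 1, one_mem _, ?_⟩, rfl⟩
    rw [map_one, mul_one, ← psi_C]; rfl
  | zero => exact ⟨0, zero_mem _, by simp⟩
  | add x y hx hy h1 h2 =>
    obtain ⟨p, hp, ep⟩ := h1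
    obtain ⟨q, hq, eq⟩ := h2
    exact ⟨p + q, add_mem hp hq, by simp [ep, eq]⟩
  | smul a x hx h1 =>
    obtain ⟨y, ⟨P, m, hm, e⟩, ey⟩ := h1
    obtain ⟨p, q, hq, epq⟩ := E_frac t a
    refine ⟨algebraMap K⟮t⟯ (AA (SE t V)) a * y,
      ⟨p.map (algebraMap K (AA V)) * P, q.map (algebraMap K (AA V)) * m,
        mul_mem (MK_mem_iff.2 ⟨q, hq, rfl⟩) hm, ?_⟩, ?_⟩
    · rw [map_mul, map_mul, ← e]
      have : algebraMap K⟮t⟯ (AA (SE t V)) a * psi t V (q.map (algebraMap K (AA V))) =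
          psi t V (p.map (algebraMap K (AA V))) := by
        apply Subtype.ext
        rw [psi_scalar, ← epq, Polynomial.C_mul, ← psi_scalar]
        rfl
      rw [← this]; ring
    · rw [← Algebra.smul_def, ← Polynomial.smul_monomial, ← ey]; rfl

theorem depth_step {V : Submodule K L} {t : L} (hV : Fr V) (hg : Good V t)
    (hD : ∀ n, DD V n = V ^ n) {n : ℕ} (h : Rel (mm V) (n + 1) ⊥) :
    Rel (mm (SE t V)) n ⊥ := by
  have ht := hg.trans hV
  have hN : IsNoetherianRing (AA V) := AA_noeth hV.fin
  have htV : t ∈ V ^ 1 := by simpa using hg.mem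
  have h1V : (1 : L) ∈ V ^ 1 := by simpa using hV.one
  let a : AA V := mo 1 t htV
  let z : AA V := mo 1 1 h1V
  let l : (AA V)[X] := Polynomial.X * Polynomial.C z - Polynomial.C a
  let ι : AA V →+* L[X] := ((AA V).val : AA V →+* L[X])
  have hι : Function.Injective ι := Subtype.val_injective
  have hl : l.map ι = (Polynomial.X - Polynomial.C (Polynomial.C t)) * Polynomial.C Polynomial.X := by
    have e1 : ι z = Polynomial.X := rfl
    have e2 : ι a = Polynomial.C t * Polynomial.X := by
      rw [Polynomial.C_mul_X_eq_monomial]; rfl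
    simp only [l, Polynomial.map_sub, Polynomial.map_mul, Polynomial.map_X, Polynomial.map_C, e1, e2,
      Polynomial.C_mul]
    ring
  rw [← map_mm, ← psi_C]
  refine Rel.descend (K := K) h (psi t V) ?_ (psi_surj t V) l ?_ ?_ ?_
  · intro m hm
    obtain ⟨p, hp, rfl⟩ := MK_mem_iff.1 hm
    have hne : Polynomial.aeval t p ≠ 0 := fun h => hp ((transcendental_iff.1 ht) p h)
    have hmem : Polynomial.aeval t p ∈ K⟮t⟯ := by
      have := (IntermediateField.algebra_adjoin_le_adjoin K {t})
      exact this (Polynomial.aeval_mem_adjoin_singleton K t)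
    refine IsUnit.of_mul_eq_one (mo 0 (Polynomial.aeval t p)⁻¹ (by
      rw [pow_zero, Submodule.mem_one]
      exact ⟨⟨_, inv_mem hmem⟩, rfl⟩)) ?_
    apply Subtype.ext
    rw [MulMemClass.coe_mul, psi_scalar]
    change Polynomial.C _ * Polynomial.C _ = 1
    rw [← Polynomial.C_mul, mul_inv_cancel₀ hne, Polynomial.C_1]
  · intro h0
    rw [h0, Polynomial.map_zero] at hl
    have := mul_ne_zero (Polynomial.X_sub_C_ne_zero (Polynomial.C t))
      (Polynomial.C_ne_zero.2 (Polynomial.X_ne_zero (R := L)))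
    exact this hl.symm
  · intro j
    have hz : z ∈ mm V := mo_mem_mm one_ne_zero _
    have ha : a ∈ mm V := mo_mem_mm one_ne_zero _
    simp only [l, Polynomial.coeff_sub, Polynomial.coeff_mul_C, Polynomial.coeff_C]
    refine sub_mem (Ideal.mul_mem_left _ _ hz) ?_
    split_ifs
    · exact ha
    · exact zero_mem _
  · intro P
    constructor
    · intro h0
      have h0' : (P.map ι).eval (Polynomial.C t) = 0 := by
        rw [← psi_coe, h0]; rfl
      obtain ⟨Q, hQ, e⟩ := key2 (hg.fil hV) rfl (P.map ι) (by
        intro j n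
        rw [Polynomial.coeff_map]
        change _ ∈ DD V n
        rw [hD]
        exact (P.coeff j).2 n) h0'
      have hQl : Q ∈ Polynomial.lifts ι := by
        rw [Polynomial.lifts_iff_coeff_lifts]
        intro j
        refine ⟨⟨Q.coeff j, fun n => ?_⟩, rfl⟩
        rw [← hD]; exact hQ j n
      obtain ⟨Q', rfl⟩ := (Polynomial.mem_lifts _).1 hQl
      refine ⟨Q', Polynomial.map_injective ι hι ?_⟩
      rw [e, Polynomial.map_mul, hl, mul_assoc]
    · rintro ⟨Q, rfl⟩
      apply Subtype.ext
      rw [psi_coe]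
      change ((l * Q).map ι).eval _ = 0
      rw [Polynomial.map_mul, hl]
      simp

end EStepDepth2
end QP

namespace QP
open scoped Polynomial IntermediateField Pointwise
section TT
variable {K L : Type} [Field K] [Field L] [Algebra K L]

/-- The ideal quotient by one element. -/
def colI {R : Type} [CommRing R] (I : Ideal R) (y : R) : Ideal R where
  carrier := {a | a * y ∈ I}
  zero_mem' := by simp
  add_mem' := by
    intro a b ha hb
    simpa [add_mul] using I.add_mem ha hb
  smul_mem' := by
    intro c a ha
    simpa [mul_assoc] using I.mul_mem_left c ha

lemma z_nzd {V : Submodule K L} (h1 : (1 : L) ∈ V ^ 1) : Nzd (⊥ : Ideal (AA V)) (mo 1 1 h1) := by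
  intro y hy
  rw [Ideal.mem_bot] at hy ⊢
  refine (mul_eq_zero.1 hy).resolve_left fun h => ?_
  have := congrArg (fun p : AA V => (p : L[X]).coeff 1) h
  simp [mo] at this

lemma mem_z {V : Submodule K L} (h1 : (1 : L) ∈ V ^ 1) {y : AA V} :
    y ∈ (⊥ ⊔ Ideal.span {mo 1 1 h1} : Ideal (AA V)) ↔
      ((y : L[X]).coeff 0 = 0 ∧ ∀ n, (y : L[X]).coeff (n + 1) ∈ V ^ n) := by
  rw [bot_sup_eq, Ideal.mem_span_singleton]
  have ez : ∀ a : AA V, ((mo 1 1 h1 * a : AA V) : L[X]) = Polynomial.X * (a : L[X]) := fun a => rfl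
  constructor
  · rintro ⟨a, rfl⟩
    rw [ez]
    refine ⟨by simp, fun n => ?_⟩
    rw [Polynomial.coeff_X_mul]
    exact a.2 n
  · rintro ⟨h0, h⟩
    refine ⟨⟨(y : L[X]).divX, fun n => ?_⟩, ?_⟩
    · rw [Polynomial.coeff_divX]; exact h n
    · apply Subtype.ext
      rw [ez]
      have := Polynomial.X_mul_divX_add (y : L[X])
      rw [h0, map_zero, add_zero] at this
      exact this.symm

lemma coeff_mo_mul {V : Submodule K L} {v : L} (hv : v ∈ V ^ 1) (y : AA V) (n : ℕ) :
    ((mo 1 v hv * y : AA V) : L[X]).coeff (n + 1) = v * (y : L[X]).coeff n := by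
  have : ((mo 1 v hv * y : AA V) : L[X]) = Polynomial.monomial 1 v * (y : L[X]) := rfl
  rw [this, ← Polynomial.C_mul_X_eq_monomial, mul_assoc, Polynomial.coeff_C_mul, Polynomial.coeff_X_mul]

lemma depth_ne_zero {V : Submodule K L} (hV : Fr V) : ¬ Rel (mm V) 0 ⊥ := by
  have h1V : (1 : L) ∈ V ^ 1 := by simpa using hV.one
  exact (z_nzd h1V).no0 (mo_mem_mm one_ne_zero _)

lemma depth_one {V : Submodule K L} {t : L} (hV : Fr V) (ht : t ∈ V) (hn : t ∉ (1 : Submodule K L))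
    (h : Rel (mm V) 1 ⊥) : ¬ ∀ n, DD V n = V ^ n := by
  intro hD
  have hN : IsNoetherianRing (AA V) := AA_noeth hV.fin
  have h1V : (1 : L) ∈ V ^ 1 := by simpa using hV.one
  obtain ⟨y, hy, hJ⟩ := exch 0 _ h (mo 1 1 h1V) (mo_mem_mm one_ne_zero _) (z_nzd h1V)
  apply hy
  have hv : ∀ v ∈ V, ∀ n, v * (y : L[X]).coeff n ∈ V ^ n := by
    intro v hv n
    have hv' : v ∈ V ^ 1 := by simpa using hv
    have := ((mem_z h1V).1 (hJ (mo 1 v hv') (mo_mem_mm one_ne_zero _))).2 n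
    rwa [coeff_mo_mul] at this
  rw [mem_z]
  constructor
  · by_contra h0
    apply hn
    have h1 := y.2 0
    have h2 := hv t ht 0
    rw [pow_zero, Submodule.mem_one] at h1 h2
    obtain ⟨a, ha⟩ := h1
    obtain ⟨b, hb⟩ := h2
    rw [Submodule.mem_one]
    refine ⟨b / a, ?_⟩
    rw [map_div₀, ha, hb, mul_div_assoc, div_self h0, mul_one]
  · intro n
    rw [← hD]
    refine ⟨1, fun x hx => ?_⟩
    exact hv x (by simpa using hx) (n + 1)

lemma depth_two {V : Submodule K L} (hV : Fr V) {m : ℕ} (h : Rel (mm V) (m + 2) ⊥) (n : ℕ) :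
    DD V n = V ^ n := by
  have hN : IsNoetherianRing (AA V) := AA_noeth hV.fin
  have h1V : (1 : L) ∈ V ^ 1 := by simpa using hV.one
  obtain ⟨x, hx, hxn, -⟩ := exch _ _ h (mo 1 1 h1V) (mo_mem_mm one_ne_zero _) (z_nzd h1V)
  have step : ∀ n b, (∀ v ∈ V, v * b ∈ V ^ (n + 1)) → b ∈ V ^ n := by
    intro n b hb
    have hb1 : b ∈ V ^ (n + 1) := by simpa using hb 1 hV.one
    have := hxn (mo (n + 1) b hb1) (by
      have hle : mm V ≤ colI (⊥ ⊔ Ideal.span {mo 1 1 h1V}) (mo (n + 1) b hb1) := by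
        refine mm_le_of fun v hv => ?_
        change mo 1 v hv * mo (n + 1) b hb1 ∈ (⊥ ⊔ Ideal.span {mo 1 1 h1V} : Ideal (AA V))
        rw [mem_z]
        constructor
        · exact mem_mm.1 ((mm V).mul_mem_right _ (mo_mem_mm one_ne_zero _))
        · intro i
          rw [coeff_mo_mul]
          simp only [mo, Polynomial.coeff_monomial]
          split_ifs with hi
          · subst hi; exact hb v (by simpa using hv)
          · simp
      exact hle hx)
    have h2 := ((mem_z h1V).1 this).2 n
    simpa [mo] using h2
  refine le_antisymm ?_ (pow_le_DD n)
  rintro b ⟨k, hk⟩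
  have main : ∀ k, (∀ x ∈ V ^ k, x * b ∈ V ^ (n + k)) → ∀ x ∈ V ^ 0, x * b ∈ V ^ n := by
    intro k
    induction k with
    | zero => intro h; exact h
    | succ k ih =>
      intro h
      refine ih fun c hc => step _ _ fun v hv => ?_
      rw [← mul_assoc]
      exact h _ (by rw [pow_succ']; exact Submodule.mul_mem_mul hv hc)
  simpa using main k hk 1 (by simp)


theorem TThm (d : ℕ) : ∀ {K L : Type} [Field K] [Field L] [Algebra K L] (V : Submodule K L)
    (c n q : ℕ), Cond V (d + 1) c (c + 2) → Rel (mm V) n ⊥ → n + q = d + 2 →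
    al V 2 = (d + 3).choose 2 + c * (d + 2) + q + 1 := by
  induction d with
  | zero =>
    intro K L _ _ _ V c n q hC hR hn
    obtain ⟨t, ht, hg⟩ := exists_good hC (Sub0.refl hC.fr)
    rcases n with _ | _ | n
    · exact absurd hR (depth_ne_zero hC.fr)
    · rcases SThm 0 V c hC with ⟨h, -⟩ | ⟨-, -, h⟩
      · exact absurd h (depth_one hC.fr ht hg.nk hR)
      · rw [h]
        have hq : q = 1 := by omega
        subst hq
        simp [Nat.choose]
        ring
    · have hq : q = 0 := by omega
      have hn0 : n = 0 := by omega
      subst hq hn0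
      have hD := depth_two hC.fr hR
      rcases SThm 0 V c hC with ⟨-, h⟩ | ⟨h, -, -⟩
      · rw [h rfl]; simp [Nat.choose]; ring
      · exfalso
        rw [de, hD, pow_one] at h
        omega
  | succ d ih =>
    intro K L _ _ _ V c n q hC hR hn
    obtain ⟨t, ht, hg, hC'⟩ := estep hC (Sub0.refl hC.fr)
    rcases n with _ | _ | n
    · exact absurd hR (depth_ne_zero hC.fr)
    · rcases SThm (d + 1) V c hC with ⟨h, -⟩ | ⟨-, -, h⟩
      · exact absurd h (depth_one hC.fr ht hg.nk hR)
      · rw [h]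
        have hq : q = d + 2 := by omega
        subst hq
        have : (d + 1 + 3).choose (d + 1 + 1) = (d + 1 + 3).choose 2 :=
          (Nat.choose_symm_of_eq_add (by ring))
        rw [this]
        ring
    · have hD := depth_two hC.fr hR
      have h1 := ih (SE t V) c (n + 1) q hC' (depth_step hC.fr hg hD hR) (by omega)
      have h2 := hg.dimP hC.fr (hD 1)
      rw [al_one, hC.rk] at h2
      have h3 : (d + 1 + 3).choose 2 = (d + 3).choose 2 + (d + 3) := by
        rw [show d + 1 + 3 = (d + 3) + 1 by ring, Nat.choose_succ_succ' (d + 3) 1]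
        simp; ring
      rw [h3]
      have h4 : c * (d + 1 + 2) = c * (d + 2) + c := by ring
      rw [h4]
      have h5 : al (SE t V) (1 + 1) = al (SE t V) 2 := rfl
      have h6 : al V (1 + 1) = al V 2 := rfl
      omega

end TT
end QP

namespace QP
open scoped Polynomial IntermediateField Pointwise
section DimTr

lemma kdim_int {R A : Type} [CommRing R] [CommRing A] [Algebra R A] [Algebra.IsIntegral R A]
    [FaithfulSMul R A] : ringKrullDim R = ringKrullDim A := by
  apply le_antisymm
  · refine iSup_le fun l => ?_
    obtain ⟨⟨P, hP, hP2⟩⟩ := Ideal.nonempty_primesOver (S := A) (RelSeries.head l).asIdeal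
    obtain ⟨L, hL, -, -⟩ := Ideal.exists_ltSeries_of_hasGoingUp (S := A) l P
    rw [← hL]
    exact le_iSup (fun p : LTSeries (PrimeSpectrum A) => ((p.length : ℕ∞) : WithBot ℕ∞)) L
  · refine Order.krullDim_le_of_strictMono (PrimeSpectrum.comap (algebraMap R A)) ?_
    intro p q hpq
    exact Ideal.IsIntegral.comap_lt_comap (I := p.asIdeal) (J := q.asIdeal) hpq

lemma dim_trdeg {K A : Type} [Field K] [CommRing A] [IsDomain A] [Algebra K A]
    [Algebra.FiniteType K A] {m : ℕ} (h : ringKrullDim A = ((m : ℕ∞) : WithBot ℕ∞)) :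
    Algebra.trdeg K A = (m : Cardinal) := by
  obtain ⟨s, g, hi, hg⟩ := exists_integral_inj_algHom_of_fg K A
  algebraize [g.toRingHom]
  have hIntg : Algebra.IsIntegral (MvPolynomial (Fin s) K) A := ⟨hg⟩
  have hf : FaithfulSMul (MvPolynomial (Fin s) K) A :=
    (faithfulSMul_iff_algebraMap_injective _ _).2 hi
  have hst : IsScalarTower K (MvPolynomial (Fin s) K) A :=
    IsScalarTower.of_algebraMap_eq fun x => (g.commutes x).symm
  have h1 := kdim_int (R := MvPolynomial (Fin s) K) (A := A)
  rw [h, MvPolynomial.ringKrullDim_of_isNoetherianRing] at h1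
  have h2 : ringKrullDim K = 0 := ringKrullDim_eq_zero_of_field K
  rw [h2] at h1
  have hs : s = m := by
    simp at h1
    exact_mod_cast h1
  have h3 := _root_.trdeg_add_eq K (MvPolynomial (Fin s) K) (A := A)
  have : Algebra.IsAlgebraic (MvPolynomial (Fin s) K) A := inferInstance
  rw [MvPolynomial.trdeg_of_isDomain, trdeg_eq_zero (R := MvPolynomial (Fin s) K)] at h3
  rw [← h3, ← hs]
  simp

lemma omega_bound {K L : Type} [Field K] [Field L] [Algebra K L] [PerfectField K]
    [Algebra.EssFiniteType K L] {d : ℕ} (h : Algebra.trdeg K L = (d : Cardinal)) :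
    Module.Finite L (Ω[L⁄K]) ∧ Module.finrank L (Ω[L⁄K]) ≤ d := by
  classical
  obtain ⟨s, hs, hsep⟩ := exists_isTranscendenceBasis_and_isSeparable_of_perfectField K L
  have hc : s.card = d := by
    have := hs.cardinalMk_eq_trdeg
    rw [h] at this
    simpa using this
  have hspan : Submodule.span L ((s.image (KaehlerDifferential.D K L) : Finset (Ω[L⁄K])) : Set (Ω[L⁄K])) = ⊤ := by
    have hG : ∀ x ∈ IntermediateField.adjoin K (s : Set L), KaehlerDifferential.D K L x ∈
        Submodule.span L ((s.image (KaehlerDifferential.D K L) : Finset (Ω[L⁄K])) : Set (Ω[L⁄K])) := by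
      intro x hx
      induction hx using IntermediateField.adjoin_induction with
      | mem x hx =>
        exact Submodule.subset_span (by
          rw [Finset.coe_image]
          exact ⟨x, hx, rfl⟩)
      | algebraMap x => simp
      | add x y _ _ hx hy => rw [map_add]; exact add_mem hx hy
      | inv x _ hx =>
        rw [Derivation.leibniz_inv]
        exact Submodule.smul_mem _ _ hx
      | mul x y _ _ hx hy =>
        rw [Derivation.leibniz]
        exact add_mem (Submodule.smul_mem _ _ hy) (Submodule.smul_mem _ _ hx)
    rw [eq_top_iff]
    have hun : Algebra.FormallyUnramified (IntermediateField.adjoin K (s : Set L)) L :=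
      Algebra.FormallyUnramified.of_isSeparable _ L
    have hsub : Subsingleton (Ω[L⁄(IntermediateField.adjoin K (s : Set L))]) := inferInstance
    have hk : (⊤ : Submodule L (Ω[L⁄K])) ≤
        LinearMap.range (KaehlerDifferential.mapBaseChange K (IntermediateField.adjoin K (s : Set L)) L) := by
      rw [KaehlerDifferential.range_mapBaseChange]
      intro x _
      exact Subsingleton.elim _ _
    refine hk.trans ?_
    rintro _ ⟨x, rfl⟩
    induction x with
    | zero => simp
    | add a b ha hb => rw [map_add]; exact add_mem ha hb
    | tmul a b =>
      rw [KaehlerDifferential.mapBaseChange_tmul]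
      refine Submodule.smul_mem _ _ ?_
      have hb : b ∈ Submodule.span (IntermediateField.adjoin K (s : Set L))
          (Set.range (KaehlerDifferential.D K (IntermediateField.adjoin K (s : Set L)))) := by
        rw [KaehlerDifferential.span_range_derivation]; trivial
      induction hb using Submodule.span_induction with
      | mem b hb =>
        obtain ⟨x, rfl⟩ := hb
        rw [KaehlerDifferential.map_D]
        exact hG _ x.2
      | zero => simp
      | add x y _ _ hx hy => rw [map_add]; exact add_mem hx hy
      | smul c x _ hx =>
        rw [map_smul, ← algebraMap_smul L c]
        exact Submodule.smul_mem _ _ hx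
  refine ⟨⟨⟨_, hspan⟩⟩, ?_⟩
  rw [← finrank_top, ← hspan]
  exact (finrank_span_finset_le_card _).trans (Finset.card_image_le.trans hc.le)
end DimTr
end QP

namespace QP
open scoped Polynomial IntermediateField Pointwise
section Tr2
variable {K L : Type} [Field K] [Field L] [Algebra K L]

lemma C_alg {V : Submodule K L} (hV : Fr V) (l : L) : IsAlgebraic (AA V) (Polynomial.C l : L[X]) := by
  have hx : l ∈ IntermediateField.adjoin K (V : Set L) := by rw [hV.gen]; trivial
  induction hx using IntermediateField.adjoin_induction with
  | mem x hx =>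
    have h1 : (1 : L) ∈ V ^ 1 := by rw [pow_one]; exact hV.one
    have h2 : x ∈ V ^ 1 := by rw [pow_one]; exact hx
    refine ⟨Polynomial.C (mo 1 1 h1) * Polynomial.X - Polynomial.C (mo 1 x h2), ?_, ?_⟩
    · intro h
      have := congrArg (fun p => ((Polynomial.coeff p 1 : AA V) : L[X]).coeff 1) h
      simp [mo, Polynomial.coeff_C] at this
    · rw [map_sub, map_mul, Polynomial.aeval_C, Polynomial.aeval_X, Polynomial.aeval_C]
      change (Polynomial.monomial 1 (1 : L)) * Polynomial.C x - Polynomial.monomial 1 x = 0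
      rw [Polynomial.monomial_mul_C, one_mul, sub_self]
  | algebraMap x =>
    have := isAlgebraic_algebraMap (R := AA V) (A := L[X]) (algebraMap K (AA V) x)
    exact this
  | add x y _ _ hx hy => rw [Polynomial.C_add]; exact hx.add hy
  | inv x _ hx =>
    by_cases h0 : x = 0
    · subst h0; simpa using hx
    · letI : Invertible (Polynomial.C x : L[X]) :=
        ⟨Polynomial.C x⁻¹, by rw [← Polynomial.C_mul, inv_mul_cancel₀ h0, Polynomial.C_1],
          by rw [← Polynomial.C_mul, mul_inv_cancel₀ h0, Polynomial.C_1]⟩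
      exact hx.invOf
  | mul x y _ _ hx hy => rw [Polynomial.C_mul]; exact hx.mul hy

lemma trdeg_AA {V : Submodule K L} (hV : Fr V) :
    Algebra.trdeg K (AA V) = Algebra.trdeg K L + 1 := by
  have h1 : (1 : L) ∈ V ^ 1 := by rw [pow_one]; exact hV.one
  have halg : Algebra.IsAlgebraic (AA V) L[X] := by
    refine ⟨fun p => ?_⟩
    induction p using Polynomial.induction_on' with
    | add p q hp hq => exact hp.add hq
    | monomial n a =>
      rw [← Polynomial.C_mul_X_pow_eq_monomial]
      refine (C_alg hV a).mul (IsAlgebraic.pow ?_ n)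
      have := isAlgebraic_algebraMap (R := AA V) (A := L[X]) (mo 1 1 h1)
      change IsAlgebraic (AA V) (Polynomial.monomial 1 (1 : L)) at this
      rwa [Polynomial.monomial_one_one_eq_X] at this
  have e1 := _root_.trdeg_add_eq K L (A := L[X])
  have e2 := _root_.trdeg_add_eq K (AA V) (A := L[X])
  rw [Polynomial.trdeg_of_isDomain] at e1
  rw [trdeg_eq_zero (R := AA V), add_zero] at e2
  rw [e2, e1]

lemma trdeg_L {V : Submodule K L} (hV : Fr V) {A : Type} [CommRing A] [IsDomain A] [Algebra K A]
    [Algebra.FiniteType K A] {m : ℕ} (h : ringKrullDim A = ((m : ℕ∞) + 1 : ℕ∞))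
    (e : A ≃ₐ[K] AA V) : Algebra.trdeg K L = (m : Cardinal) := by
  have h1 := dim_trdeg (K := K) (A := A) (m := m + 1) (by rw [h]; norm_cast)
  rw [e.trdeg_eq, trdeg_AA hV] at h1
  push_cast at h1
  exact Cardinal.eq_of_add_eq_add_right h1 Cardinal.one_lt_aleph0

lemma coeff_df (d : ℕ) : ∀ (f : ℕ → ℤ) (n : ℕ),
    PowerSeries.coeff (n + d) (PowerSeries.mk f * (1 - PowerSeries.X) ^ d) = (df^[d] f) n := by
  induction d with
  | zero => intro f n; simp
  | succ d ih =>
    intro f n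
    have h : PowerSeries.mk f * (1 - PowerSeries.X) =
        PowerSeries.mk (fun n => f n - if n = 0 then 0 else f (n - 1)) := by
      ext m
      rw [mul_sub, mul_one, map_sub]
      cases m with
      | zero => simp
      | succ m => simp [PowerSeries.coeff_succ_mul_X]
    rw [pow_succ', ← mul_assoc, h, show n + (d + 1) = n + 1 + d by ring, ih, ← df_shift]
    rfl

lemma degE_of {f : ℕ → ℤ} {d e : ℕ} {h : ℤ[X]}
    (h1 : PowerSeries.mk f * (1 - PowerSeries.X) ^ (d + 1) = PowerSeries.mk (fun n => h.coeff n))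
    (h2 : h.eval 1 = (e : ℤ)) : DegE f d e := by
  have key : ∀ n, PowerSeries.coeff n (PowerSeries.mk f * (1 - PowerSeries.X) ^ d) =
      ∑ i ∈ Finset.range (n + 1), h.coeff i := by
    have h3 : ∀ n, PowerSeries.coeff n ((PowerSeries.mk f * (1 - PowerSeries.X) ^ d) *
        (1 - PowerSeries.X)) = h.coeff n := by
      intro n
      rw [mul_assoc, ← pow_succ, h1, PowerSeries.coeff_mk]
    intro n
    induction n with
    | zero =>
      have := h3 0
      rw [mul_sub, mul_one, map_sub, PowerSeries.coeff_zero_mul_X, sub_zero] at this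
      simp only [zero_add, Finset.sum_range_one, this]
    | succ n ih =>
      have := h3 (n + 1)
      rw [mul_sub, mul_one, map_sub, PowerSeries.coeff_succ_mul_X, ih] at this
      rw [Finset.sum_range_succ, ← this]
      ring
  refine ⟨h.natDegree, fun n hn => ?_⟩
  rw [← coeff_df, key, ← h2, Polynomial.eval_eq_sum_range' (n := n + d + 1) (by omega)]
  simp

lemma al_of_trdeg_zero {V : Submodule K L} (hV : Fr V) (h : Algebra.trdeg K L = 0) (n : ℕ) :
    al V n = 1 := by
  have : Algebra.IsAlgebraic K L := by
    rw [← trdeg_eq_zero_iff]; exact h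
  have htop : (1 : Submodule K L) = ⊤ := by
    rw [eq_top_iff]
    intro x _
    obtain ⟨a, ha⟩ := hV.closed x (Algebra.IsIntegral.isIntegral x)
    exact Submodule.mem_one.2 ⟨a, ha⟩
  have h2 : V ^ n = 1 := by
    apply le_antisymm
    · rw [htop]; exact le_top
    · exact Submodule.one_le.2 (one_mem_pow hV.one n)
  have h0 := al_zero (V := V)
  rw [al, h2]
  rw [al, pow_zero] at h0
  exact h0

lemma deg_d0 {V : Submodule K L} (hV : Fr V) (h : Algebra.trdeg K L = 0) {e : ℕ}
    (hd : DegE (fun n => (al V n : ℤ)) 0 e) : e = 1 := by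
  obtain ⟨n, hn⟩ := hd
  have := hn n le_rfl
  simp only [Function.iterate_zero, id, al_of_trdeg_zero hV h] at this
  exact_mod_cast this.symm
end Tr2
end QP

namespace QP
open scoped Polynomial IntermediateField Pointwise
section HH
variable {K L : Type} [Field K] [Field L] [Algebra K L]

lemma finrank_hom (s n : ℕ) :
    Module.finrank K (homogeneousSubmodule (Fin s) K n) = Nat.multichoose s n := by
  classical
  let T : Finset (Fin s →₀ ℕ) := Finset.finsuppAntidiag Finset.univ n
  have hT : ∀ m, m ∈ T ↔ m.degree = n := by
    intro m
    simp only [T, Finset.mem_finsuppAntidiag, Finset.subset_univ, and_true]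
    rw [Finsupp.degree_eq_sum]
  have hspan : homogeneousSubmodule (Fin s) K n =
      Submodule.span K (Set.range (fun m : T => (monomial (m : Fin s →₀ ℕ) (1 : K)))) := by
    apply le_antisymm
    · intro p hp
      rw [p.as_sum]
      refine sum_mem fun m hm => ?_
      have hd : m.degree = n := by
        have := hp (mem_support_iff.1 hm)
        rw [Finsupp.degree_eq_weight_one]; exact this
      have : monomial m (coeff m p) = (coeff m p) • monomial m (1 : K) := by
        rw [smul_monomial, smul_eq_mul, mul_one]
      rw [this]
      exact Submodule.smul_mem _ _ (Submodule.subset_span ⟨⟨m, (hT m).2 hd⟩, rfl⟩)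
    · rw [Submodule.span_le]
      rintro _ ⟨m, rfl⟩
      exact isHomogeneous_monomial _ ((hT m).1 m.2)
  have hli : LinearIndependent K (fun m : T => (monomial (m : Fin s →₀ ℕ) (1 : K))) := by
    have := (basisMonomials (Fin s) K).linearIndependent.comp (fun m : T => (m : Fin s →₀ ℕ))
      Subtype.val_injective
    have h2 : (⇑(basisMonomials (Fin s) K) ∘ fun m : T => (m : Fin s →₀ ℕ)) =
        fun m : T => (monomial (m : Fin s →₀ ℕ) (1 : K)) := by
      ext1 m; simp [coe_basisMonomials]
    rw [h2] at this
    exact this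
  rw [hspan, finrank_span_eq_card hli, Fintype.card_coe]
  rw [Finset.card_finsuppAntidiag_nat_eq_multichoose, Finset.card_univ, Fintype.card_fin]

variable {r : ℕ} (I : Ideal (PS K r)) (w : Fin (r + 1) → L)

/-- The space spanned by the coordinates. -/
def VV : Submodule K L := Submodule.span K (Set.range w)

lemma VV_pow (n : ℕ) : VV (K := K) w ^ n =
    (homogeneousSubmodule (Fin (r + 1)) K n).map (aeval w : PS K r →ₐ[K] L).toLinearMap := by
  rw [← homogeneousSubmodule_one_pow, Submodule.map_pow, homogeneousSubmodule_one_eq_span_X,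
    Submodule.map_span, ← Set.range_comp, VV]
  congr 3
  ext i
  simp

/-- The kernel condition on homogeneous polynomials. -/
def KerC : Prop := ∀ n (p : PS K r), p.IsHomogeneous n → (aeval w p = 0 ↔ p ∈ I)

/-- The graded map. -/
def Phi : PS K r →ₐ[K] L[X] := aeval fun i => Polynomial.monomial 1 (w i)

lemma Phi_hom {n : ℕ} {p : PS K r} (hp : p.IsHomogeneous n) :
    Phi w p = Polynomial.monomial n (aeval w p) := by
  rw [p.as_sum, map_sum, map_sum, map_sum]
  refine Finset.sum_congr rfl fun m hm => ?_
  have hd : m.degree = n := by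
    have := hp (mem_support_iff.1 hm)
    rw [Finsupp.degree_eq_weight_one]; exact this
  rw [Phi, aeval_monomial, aeval_monomial, Finsupp.prod_fintype _ _ (by simp),
    Finsupp.prod_fintype _ _ (by simp)]
  simp only [Polynomial.monomial_pow, one_mul]
  have : ∀ s : Finset (Fin (r + 1)), ∏ i ∈ s, (Polynomial.monomial (m i) (w i ^ m i)) =
      Polynomial.monomial (∑ i ∈ s, m i) (∏ i ∈ s, w i ^ m i) := by
    classical
    intro s
    induction s using Finset.induction_on with
    | empty => simp
    | insert a s ha ih => rw [Finset.prod_insert ha, ih, Finset.prod_insert ha,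
        Finset.sum_insert ha, Polynomial.monomial_mul_monomial]
  rw [this, ← hd, Finsupp.degree_eq_sum]
  rw [IsScalarTower.algebraMap_apply K L L[X], Polynomial.algebraMap_eq, Polynomial.C_mul_monomial]

lemma Phi_coeff (n : ℕ) (p : PS K r) :
    (Phi w p).coeff n = aeval w (homogeneousComponent n p) := by
  conv_lhs => rw [← sum_homogeneousComponent p]
  rw [map_sum, Polynomial.finsetSum_coeff]
  simp only [Phi_hom w (homogeneousComponent_isHomogeneous _ p), Polynomial.coeff_monomial]
  rw [Finset.sum_ite_eq']
  split_ifs with h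
  · rfl
  · rw [homogeneousComponent_eq_zero, map_zero]
    simpa using h

variable {I w}
lemma Phi_ker (hI : AMD.IsHomIdeal K r I) (hk : KerC I w) (p : PS K r) : Phi w p = 0 ↔ p ∈ I := by
  constructor
  · intro h
    rw [← sum_homogeneousComponent p]
    refine sum_mem fun i _ => ?_
    rw [← hk i _ (homogeneousComponent_isHomogeneous _ p), ← Phi_coeff, h, Polynomial.coeff_zero]
  · intro h
    ext n
    rw [Phi_coeff, Polynomial.coeff_zero, hk n _ (homogeneousComponent_isHomogeneous _ p)]
    exact hI p h n

variable (w) in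
lemma Phi_mem (p : PS K r) : Phi w p ∈ AA (VV (K := K) w) := by
  intro n
  rw [Phi_coeff, VV_pow]
  exact ⟨_, homogeneousComponent_isHomogeneous n p, rfl⟩

variable (I) in
/-- The isomorphism with the coordinate ring. -/
def PhiE (hI : AMD.IsHomIdeal K r I) (hk : KerC I w) : (PS K r ⧸ I) ≃ₐ[K] AA (VV (K := K) w) :=
  AlgEquiv.ofBijective
    (Ideal.Quotient.liftₐ I ((Phi w).codRestrict (AA (VV (K := K) w)) (Phi_mem w))
      (fun a ha => Subtype.ext ((Phi_ker hI hk a).2 ha)))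
    (by
      constructor
      · rw [injective_iff_map_eq_zero]
        intro a
        obtain ⟨a, rfl⟩ := Ideal.Quotient.mk_surjective a
        intro h
        rw [Ideal.Quotient.eq_zero_iff_mem]
        exact (Phi_ker hI hk a).1 (congrArg Subtype.val h)
      · intro p
        have : ∀ n, ∃ q : PS K r, q.IsHomogeneous n ∧ aeval w q = (p : L[X]).coeff n := by
          intro n
          have := p.2 n
          rw [VV_pow] at this
          exact this
        choose q hq hq2 using this
        refine ⟨Ideal.Quotient.mk I (∑ i ∈ Finset.range ((p : L[X]).natDegree + 1), q i), ?_⟩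
        apply Subtype.ext
        change Phi w _ = (p : L[X])
        rw [map_sum]
        conv_rhs => rw [Polynomial.as_sum_range (p : L[X])]
        refine Finset.sum_congr rfl fun i _ => ?_
        rw [Phi_hom w (hq i), hq2])

lemma PhiE_mk (hI : AMD.IsHomIdeal K r I) (hk : KerC I w) (p : PS K r) :
    ((PhiE I hI hk (Ideal.Quotient.mk I p) : AA (VV (K := K) w)) : L[X]) = Phi w p := rfl

lemma PhiE_map (hI : AMD.IsHomIdeal K r I) (hk : KerC I w) :
    (AMD.maxIdl K r I).map (PhiE I hI hk : (PS K r ⧸ I) →+* AA (VV (K := K) w)) =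
      mm (VV (K := K) w) := by
  apply le_antisymm
  · rw [AMD.maxIdl, Ideal.map_map, Ideal.map_span, Ideal.span_le]
    rintro _ ⟨_, ⟨i, rfl⟩, rfl⟩
    rw [SetLike.mem_coe, mem_mm]
    change (Phi w (X i)).coeff 0 = 0
    rw [Phi, aeval_X]
    simp [Polynomial.coeff_monomial]
  · apply mm_le_of
    intro v hv
    have hv' := hv
    rw [VV_pow, homogeneousSubmodule_one_eq_span_X] at hv'
    obtain ⟨p, hp, hp2⟩ := hv'
    have h1 : p.IsHomogeneous 1 := by
      rw [← mem_homogeneousSubmodule, homogeneousSubmodule_one_eq_span_X]; exact hp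
    have h3 : mo 1 v hv = (PhiE I hI hk : (PS K r ⧸ I) →+* AA (VV (K := K) w))
        (Ideal.Quotient.mk I p) := by
      apply Subtype.ext
      change Polynomial.monomial 1 v = Phi w p
      rw [Phi_hom w h1]
      congr 1
      exact hp2.symm
    rw [h3]
    apply Ideal.mem_map_of_mem
    apply Ideal.mem_map_of_mem
    exact Submodule.span_le_restrictScalars K (PS K r) _ hp

lemma rel_of (hI : AMD.IsHomIdeal K r I) (hk : KerC I w) {t : ℕ} (h : AMD.DepthEq K r I t) :
    Rel (mm (VV (K := K) w)) t ⊥ := by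
  have h1 := Rel_of_max h.1 h.2
  have h2 := Rel.map (PhiE I hI hk : (PS K r ⧸ I) →+* AA (VV (K := K) w))
    (PhiE I hI hk).surjective t ⊥ (by
      intro x hx
      rw [RingHom.mem_ker] at hx
      exact (map_eq_zero_iff _ (PhiE I hI hk).injective).1 hx) h1
  rw [PhiE_map, Ideal.map_bot] at h2
  exact h2

lemma al_add (hk : KerC I w) (n : ℕ) :
    Module.finrank K ↥((homogeneousSubmodule (Fin (r + 1)) K n) ⊓ Submodule.restrictScalars K I) +
      al (VV (K := K) w) n = Nat.multichoose (r + 1) n := by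
  have : Module.Finite K (homogeneousSubmodule (Fin (r + 1)) K n) :=
    Module.Finite.iff_fg.2 (homogeneousSubmodule_fg (Fin (r + 1)) K n)
  let f := (aeval w : PS K r →ₐ[K] L).toLinearMap.domRestrict (homogeneousSubmodule (Fin (r + 1)) K n)
  have h := LinearMap.finrank_range_add_finrank_ker f
  have h1 : LinearMap.range f = VV (K := K) w ^ n := by
    rw [VV_pow]; exact LinearMap.range_domRestrict _ _
  have h2 : LinearMap.ker f = (Submodule.restrictScalars K I).comap
      (homogeneousSubmodule (Fin (r + 1)) K n).subtype := by
    ext ⟨p, hp⟩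
    exact hk n p hp
  rw [h1, h2, finrank_hom] at h
  rw [← h, add_comm, al]
  congr 1
  rw [inf_comm]
  have := LinearEquiv.finrank_eq (Submodule.equivMapOfInjective
    (homogeneousSubmodule (Fin (r + 1)) K n).subtype (Submodule.subtype_injective _)
    ((Submodule.restrictScalars K I).comap (homogeneousSubmodule (Fin (r + 1)) K n).subtype))
  rw [this, Submodule.map_comap_subtype, inf_comm]

lemma al_quot (hk : KerC I w) (n : ℕ) :
    Module.finrank K (AMD.quotComponent K r I n) = al (VV (K := K) w) n := by
  have : Module.Finite K (homogeneousSubmodule (Fin (r + 1)) K n) :=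
    Module.Finite.iff_fg.2 (homogeneousSubmodule_fg (Fin (r + 1)) K n)
  let f := (aeval w : PS K r →ₐ[K] L).toLinearMap.domRestrict (homogeneousSubmodule (Fin (r + 1)) K n)
  let g := (Ideal.Quotient.mkₐ K I).toLinearMap.domRestrict (homogeneousSubmodule (Fin (r + 1)) K n)
  have hf := LinearMap.finrank_range_add_finrank_ker f
  have hg := LinearMap.finrank_range_add_finrank_ker g
  have h1 : LinearMap.range f = VV (K := K) w ^ n := by
    rw [VV_pow]; exact LinearMap.range_domRestrict _ _
  have h2 : LinearMap.range g = AMD.quotComponent K r I n :=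
    LinearMap.range_domRestrict _ _
  have h3 : LinearMap.ker f = LinearMap.ker g := by
    ext ⟨p, hp⟩
    refine (hk n p hp).trans ?_
    exact Ideal.Quotient.eq_zero_iff_mem.symm
  rw [h1, h3] at hf
  rw [h2] at hg
  rw [al]
  exact (Nat.add_right_cancel (hf.trans hg.symm)).symm
end HH
end QP

namespace QP
open scoped Polynomial IntermediateField Pointwise
section Fin0
variable {K : Type} [Field K] {r : ℕ} (I : Ideal (PS K r))

lemma x0_not_mem (hnd : AMD.Nondeg K r I) : (X 0 : PS K r) ∉ I := fun h =>
  X_ne_zero (R := K) (0 : Fin (r + 1)) (hnd _ h (isHomogeneous_X K 0))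

/-- affine coordinates in the fraction field -/
def wF [I.IsPrime] (i : Fin (r + 1)) : FractionRing (PS K r ⧸ I) :=
  algebraMap (PS K r ⧸ I) (FractionRing (PS K r ⧸ I)) (Ideal.Quotient.mk I (X i)) /
    algebraMap (PS K r ⧸ I) (FractionRing (PS K r ⧸ I)) (Ideal.Quotient.mk I (X 0))

/-- the function field -/
def LF [I.IsPrime] : IntermediateField K (FractionRing (PS K r ⧸ I)) :=
  IntermediateField.adjoin K (Set.range (wF I))

/-- affine coordinates in the function field -/
def wL [I.IsPrime] (i : Fin (r + 1)) : LF I :=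
  ⟨wF I i, IntermediateField.subset_adjoin K _ ⟨i, rfl⟩⟩

lemma wF_hom [I.IsPrime] (h0 : (X 0 : PS K r) ∉ I) {n : ℕ} {p : PS K r} (hp : p.IsHomogeneous n) :
    aeval (wF I) p * (algebraMap (PS K r ⧸ I) (FractionRing (PS K r ⧸ I))
      (Ideal.Quotient.mk I (X 0))) ^ n =
    algebraMap (PS K r ⧸ I) (FractionRing (PS K r ⧸ I)) (Ideal.Quotient.mk I p) := by
  have hx : algebraMap (PS K r ⧸ I) (FractionRing (PS K r ⧸ I))
      (Ideal.Quotient.mk I (X 0)) ≠ 0 := by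
    rw [Ne, map_eq_zero_iff _ (IsFractionRing.injective _ _), Ideal.Quotient.eq_zero_iff_mem]
    exact h0
  rw [← mem_homogeneousSubmodule, ← homogeneousSubmodule_one_pow] at hp
  induction hp using Submodule.pow_induction_on_left' with
  | algebraMap c =>
    rw [pow_zero, mul_one, AlgHom.commutes]
    rfl
  | add x y i hx hy hx2 hy2 => rw [map_add, add_mul, hx2, hy2, map_add, map_add]
  | mem_mul m hm i x hx2 hx3 =>
    rw [map_mul, pow_succ', mul_mul_mul_comm, hx3, map_mul, map_mul]
    congr 1
    rw [homogeneousSubmodule_one_eq_span_X] at hm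
    induction hm using Submodule.span_induction with
    | mem y hy =>
      obtain ⟨i, rfl⟩ := hy
      rw [aeval_X, wF, div_mul_cancel₀ _ hx]
    | zero => simp
    | add a b _ _ ha hb => rw [map_add, add_mul, ha, hb, map_add, map_add]
    | smul c a _ ha =>
      rw [map_smul, smul_mul_assoc, ha]
      rw [Algebra.smul_def, Algebra.smul_def, map_mul, map_mul]
      rfl

lemma wL_coe [I.IsPrime] (p : PS K r) : ((aeval (wL I) p : LF I) : FractionRing (PS K r ⧸ I)) =
    aeval (wF I) p := by
  have : (LF I).val.comp (aeval (wL I)) = aeval (wF I) := by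
    apply MvPolynomial.algHom_ext
    intro i
    simp [wL]
  exact AlgHom.congr_fun this p

lemma kerC [I.IsPrime] (h0 : (X 0 : PS K r) ∉ I) : KerC I (wL I) := by
  intro n p hp
  have hx : algebraMap (PS K r ⧸ I) (FractionRing (PS K r ⧸ I))
      (Ideal.Quotient.mk I (X 0)) ≠ 0 := by
    rw [Ne, map_eq_zero_iff _ (IsFractionRing.injective _ _), Ideal.Quotient.eq_zero_iff_mem]
    exact h0
  have h1 := wF_hom I h0 hp
  rw [← Ideal.Quotient.eq_zero_iff_mem,
    ← map_eq_zero_iff _ (IsFractionRing.injective (PS K r ⧸ I) (FractionRing (PS K r ⧸ I))), ← h1,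
    mul_eq_zero, or_iff_left (pow_ne_zero n hx), ← wL_coe]
  exact (ZeroMemClass.coe_eq_zero).symm

lemma fr [IsAlgClosed K] [I.IsPrime] (h0 : (X 0 : PS K r) ∉ I) :
    Fr (VV (K := K) (wL I)) where
  inf := IsAlgClosed.instInfinite
  closed := fun b hb => by
    exact minpoly.mem_range_of_degree_eq_one K b
      (IsAlgClosed.degree_eq_one_of_irreducible K (minpoly.irreducible hb))
  one := by
    have hx : algebraMap (PS K r ⧸ I) (FractionRing (PS K r ⧸ I))
        (Ideal.Quotient.mk I (X 0)) ≠ 0 := by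
      rw [Ne, map_eq_zero_iff _ (IsFractionRing.injective _ _), Ideal.Quotient.eq_zero_iff_mem]
      exact h0
    refine Submodule.subset_span ⟨0, ?_⟩
    apply Subtype.ext
    exact div_self hx
  fin := Submodule.fg_span (Set.finite_range _)
  gen := by
    rw [eq_top_iff]
    rintro ⟨x, hx⟩ -
    have hle : IntermediateField.adjoin K (Set.range (wF I)) ≤
        (IntermediateField.adjoin K (VV (K := K) (wL I) : Set (LF I))).map (LF I).val := by
      rw [IntermediateField.adjoin_le_iff]
      rintro _ ⟨i, rfl⟩
      exact ⟨wL I i, IntermediateField.subset_adjoin K _ (Submodule.subset_span ⟨i, rfl⟩), rfl⟩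
    obtain ⟨y, hy, hyx⟩ := hle hx
    have : y = ⟨x, hx⟩ := Subtype.ext hyx
    rw [← this]
    exact hy

lemma choose_arith (d c : ℕ) :
    (d + c + 2).choose 2 = (d + 2).choose 2 + c * (d + 1) + (c + 1).choose 2 := by
  induction c with
  | zero => simp
  | succ c ih =>
    have e1 : (d + (c + 1) + 2).choose 2 = (d + c + 2) + (d + c + 2).choose 2 := by
      rw [show d + (c + 1) + 2 = (d + c + 2) + 1 by ring, Nat.choose_succ_succ' _ 1, Nat.choose_one_right]
    have e2 : (c + 1 + 1).choose 2 = (c + 1) + (c + 1).choose 2 := by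
      rw [Nat.choose_succ_succ' _ 1, Nat.choose_one_right]
    rw [e1, e2, ih]
    ring

theorem final
    (K : Type) [Field K] [IsAlgClosed K] (r : ℕ)
    (I : Ideal (PS K r)) (hprime : I.IsPrime)
    (hhom : AMD.IsHomIdeal K r I) (hnd : AMD.Nondeg K r I)
    (d c q t : ℕ) (hdim : AMD.DimEq K r I d) (hcodim : d + c = r)
    (hdeg : AMD.DegreeEq K r I d (c + 2))
    (hdepth : AMD.DepthEq K r I t) (hq : t + q = d + 1) :
    Module.finrank K
        ↥((homogeneousSubmodule (Fin (r + 1)) K 2) ⊓ Submodule.restrictScalars K I)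
      + q + 1 = Nat.choose (c + 1) 2 := by
  have h0 := x0_not_mem I hnd
  have hk := kerC I h0
  have hF := fr I h0
  have htr : Algebra.trdeg K (LF I) = (d : Cardinal) := trdeg_L hF hdim (PhiE I hhom hk)
  have hD : DegE (fun n => (al (VV (K := K) (wL I)) n : ℤ)) d (c + 2) := by
    obtain ⟨h, h1, h2⟩ := hdeg
    have : (fun n => (al (VV (K := K) (wL I)) n : ℤ)) =
        fun n => (Module.finrank K (AMD.quotComponent K r I n) : ℤ) := by
      ext n; rw [al_quot hk]
    rw [this]
    exact degE_of h1 h2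
  have hrel := rel_of hhom hk hdepth
  have hess := essFin hF
  obtain ⟨ho1, ho2⟩ := omega_bound htr
  have hrk : Module.finrank K (VV (K := K) (wL I)) = d + 1 + c := by
    have h1 := al_add hk 1
    have h2 : (homogeneousSubmodule (Fin (r + 1)) K 1) ⊓ Submodule.restrictScalars K I = ⊥ := by
      rw [eq_bot_iff]
      rintro p ⟨hp1, hp2⟩
      exact hnd p hp2 hp1
    rw [h2, finrank_bot, al_one, Nat.multichoose_one_right] at h1
    omega
  have hC : Cond (VV (K := K) (wL I)) d c (c + 2) := ⟨hF, htr.ge, ho1, ho2, hrk, hD⟩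
  cases d with
  | zero =>
    have := deg_d0 hF (by simpa using htr) hD
    omega
  | succ d =>
    have h2 := TThm d _ c t q hC hrel (by omega)
    have h3 := al_add hk 2
    rw [Nat.multichoose_eq] at h3
    have h4 := choose_arith (d + 1) c
    rw [show r + 1 + 2 - 1 = d + 1 + c + 2 by omega, h4, h2] at h3
    have e : d + 1 + 2 = d + 3 := by ring
    have e' : d + 1 + 1 = d + 2 := by ring
    rw [e, e'] at h3
    omega
end Fin0
end QP


/-- **Lemma 3.4 (second part).**  For a variety `X ⊆ ℙ^r_K` of almost minimal degree
with `c = codim X` and `q = codepth A_X`, the space of quadrics in the defining ideal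
has dimension `dim_K (I_X)₂ = C(c+1, 2) - q - 1`. -/
theorem quadrics_in_ideal_of_almost_minimal_degree
    (K : Type) [Field K] [IsAlgClosed K] (r : ℕ)
    (I : Ideal (PS K r)) (hprime : I.IsPrime)
    (hhom : AMD.IsHomIdeal K r I) (hnd : AMD.Nondeg K r I)
    (d c q t : ℕ) (hdim : AMD.DimEq K r I d) (hcodim : d + c = r)
    (hdeg : AMD.DegreeEq K r I d (c + 2))
    (hdepth : AMD.DepthEq K r I t) (hq : t + q = d + 1) :
    Module.finrank K
        ↥((homogeneousSubmodule (Fin (r + 1)) K 2) ⊓ Submodule.restrictScalars K I)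
      + q + 1 = Nat.choose (c + 1) 2 := by
  exact QP.final K r I hprime hhom hnd d c q t hdim hcodim hdeg hdepth hq
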